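/- Let α ∈ (2,3), λ > 0, n ≥ 2, and let γ ∈ C^{0,1}(ℝ/ℤ,ℝⁿ) be an injective curve parametrized by arc-length with E^α(γ) < ∞. If γ is a stationary point of E^α + λL, i.e. δE^α(γ;h) + λ∫_{ℝ/ℤ} ⟨γ'(u),h'(u)⟩ du = 0 for all h ∈ H^{(1+α)/2,2}(ℝ/ℤ,ℝⁿ), then γ ∈ C^∞(ℝ/ℤ,ℝⁿ). -/

import Mathlib

open MeasureTheory Filter Set
open scoped RealInnerProductSpace ENNReal Topology

noncomputable section

/-- `ℝⁿ` -/
abbrev Rn (n : ℕ) := EuclideanSpace ℝ (Fin n)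

variable {n : ℕ}

/-- A 1-periodic curve is injective as a map on `ℝ/ℤ`. -/
def PerInjective (γ : ℝ → Rn n) : Prop :=
  ∀ u v : ℝ, γ u = γ v → ∃ k : ℤ, v = u + k

/-- `γ` is a regular curve: `γ'(u) ≠ 0` for all `u`. -/
def RegularCurve (γ : ℝ → Rn n) : Prop := ∀ u : ℝ, deriv γ u ≠ 0

/-- `γ` is parametrized by arc-length: `|γ'(u)| = 1` for all `u`. -/
def ArcLengthParam (γ : ℝ → Rn n) : Prop := ∀ u : ℝ, ‖deriv γ u‖ = 1

/-- The length `L(γ) = ∫₀¹ |γ'(θ)| dθ` of the closed curve `γ`. -/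
def curveLen (γ : ℝ → Rn n) : ℝ := ∫ θ in (0:ℝ)..1, ‖deriv γ θ‖

/-- The arc length `L(γ|_{[u,u+w]}) = |∫_u^{u+w} |γ'(θ)| dθ|`. -/
def arcLen (γ : ℝ → Rn n) (u w : ℝ) : ℝ := |∫ θ in u..(u + w), ‖deriv γ θ‖|

/-- The intrinsic distance `d_γ(u+w,u)`. -/
def idist (γ : ℝ → Rn n) (u w : ℝ) : ℝ :=
  min (arcLen γ u w) (curveLen γ - arcLen γ u w)

/-- The integrand of the O'Hara energy `E^α`. -/
def ohIntegrand (α : ℝ) (γ : ℝ → Rn n) (u w : ℝ) : ℝ :=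
  (1 / ‖γ (u + w) - γ u‖ ^ α - 1 / idist γ u w ^ α) * ‖deriv γ (u + w)‖ * ‖deriv γ u‖

/-- The O'Hara energy `E^α`, with values in `[0,∞]`. -/
def oharaE (α : ℝ) (γ : ℝ → Rn n) : ℝ≥0∞ :=
  ∫⁻ u in Ioc (0:ℝ) 1, ∫⁻ w in Ioo (-(1:ℝ)/2) (1/2), ENNReal.ofReal (ohIntegrand α γ u w)

/-- The O'Hara energy `E^α` as a real number. -/
def oharaER (α : ℝ) (γ : ℝ → Rn n) : ℝ := (oharaE α γ).toReal

/-- `[−1/2,−ε] ∪ [ε,1/2]`, the `w`-section of `U_ε`. -/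
def Wset (ε : ℝ) : Set ℝ := Icc (-(1:ℝ)/2) (-ε) ∪ Icc ε (1/2)

/-- The truncated O'Hara energy `E^α_ε`, an integral over `U_ε`. -/
def oharaEeps (α ε : ℝ) (γ : ℝ → Rn n) : ℝ :=
  ∫ u in Ioc (0:ℝ) 1, ∫ w in Wset ε, ohIntegrand α γ u w

/-- `F` has directional (Gâteaux) derivative `d` at `γ` in direction `h`. -/
def HasDirDeriv (F : (ℝ → Rn n) → ℝ) (γ h : ℝ → Rn n) (d : ℝ) : Prop :=
  Tendsto (fun τ : ℝ => (F (γ + τ • h) - F γ) / τ) (𝓝[≠] (0:ℝ)) (𝓝 d)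

/-- Squared Gagliardo seminorm `[f]²_{H^{s,2}}` of a 1-periodic map. -/
def gagliardoSq (s : ℝ) {E : Type*} [NormedAddCommGroup E] (f : ℝ → E) : ℝ≥0∞ :=
  ∫⁻ u in Ioc (0:ℝ) 1, ∫⁻ w in Ioo (-(1:ℝ)/2) (1/2),
    ENNReal.ofReal (‖f (u + w) - f u‖ ^ 2 / |w| ^ (1 + 2 * s))

/-- Membership in the fractional Sobolev space `H^{1+σ,2}(ℝ/ℤ,ℝⁿ)`, `σ ∈ (0,1)`:
a 1-periodic `C¹` function whose derivative has finite Gagliardo seminorm of order `σ`. -/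
def MemH1 (σ : ℝ) (γ : ℝ → Rn n) : Prop :=
  Function.Periodic γ 1 ∧ ContDiff ℝ 1 γ ∧ gagliardoSq σ (deriv γ) < ⊤

/-- The norm of `H^{1+σ,2}(ℝ/ℤ,ℝⁿ)`. -/
def H1Norm (σ : ℝ) (γ : ℝ → Rn n) : ℝ :=
  Real.sqrt (∫ u in Ioc (0:ℝ) 1, (‖γ u‖ ^ 2 + ‖deriv γ u‖ ^ 2)) +
    Real.sqrt ((gagliardoSq σ (deriv γ)).toReal)

/-- Membership of a 1-periodic map in `L²(ℝ/ℤ)`. -/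
def MemL2per {E : Type*} [NormedAddCommGroup E] (f : ℝ → E) : Prop :=
  Function.Periodic f 1 ∧ AEStronglyMeasurable f (volume : Measure ℝ) ∧
    IntegrableOn (fun u => ‖f u‖ ^ 2) (Ioc (0:ℝ) 1) volume

/-- Membership in the fractional Sobolev space `H^{s,2}(ℝ/ℤ)`, `s ∈ (0,1)`. -/
def MemHs0 (s : ℝ) {E : Type*} [NormedAddCommGroup E] (f : ℝ → E) : Prop :=
  MemL2per f ∧ gagliardoSq s f < ⊤

/-- The norm of `H^{s,2}(ℝ/ℤ)` for `s ∈ (0,1)`: `‖f‖_{L²} + [f]_{H^{s,2}}`. -/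
def Hs0Norm (s : ℝ) {E : Type*} [NormedAddCommGroup E] (f : ℝ → E) : ℝ :=
  Real.sqrt (∫ u in Ioc (0:ℝ) 1, ‖f u‖ ^ 2) + Real.sqrt ((gagliardoSq s f).toReal)

/-- The `k`-th Fourier coefficient (`j`-th component) of a 1-periodic curve. -/
def fCoef (γ : ℝ → Rn n) (k : ℤ) (j : Fin n) : ℂ :=
  ∫ u in (0:ℝ)..1, (γ u j : ℂ) * Complex.exp ((-2) * (Real.pi : ℂ) * Complex.I * (k : ℂ) * (u : ℂ))

/-- Membership in `H^{s,2}(ℝ/ℤ,ℝⁿ)` via the Fourier characterization: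
`((1+|k|²)^{s/2} γ̂(k))_k ∈ ℓ²`. -/
def MemHF (s : ℝ) (γ : ℝ → Rn n) : Prop :=
  Function.Periodic γ 1 ∧ Continuous γ ∧
    Summable (fun k : ℤ => (1 + (k : ℝ) ^ 2) ^ s * ∑ j, ‖fCoef γ k j‖ ^ 2)

/-- The squared Fourier norm of `H^{s,2}(ℝ/ℤ,ℝⁿ)`. -/
def fNormSq (s : ℝ) (γ : ℝ → Rn n) : ℝ :=
  ∑' k : ℤ, (1 + (k : ℝ) ^ 2) ^ s * ∑ j, ‖fCoef γ k j‖ ^ 2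

/-- C¹-norm of a 1-periodic map. -/
def c1Norm (f : ℝ → Rn n) : ℝ := ⨆ u : Icc (0:ℝ) 1, (‖f u.1‖ + ‖deriv f u.1‖)

/-- The integrand of `Q(γ,h)`. -/
def Qintegrand (α : ℝ) (γ h : ℝ → Rn n) (u w : ℝ) : ℝ :=
  ⟪deriv γ u, deriv h u⟫ / |w| ^ α
    - ⟪γ (u + w) - γ u, h (u + w) - h u⟫ / |w| ^ (α + 2)

/-- The integrand of `R(γ,h)`. -/
def Rintegrand (α : ℝ) (γ h : ℝ → Rn n) (u w : ℝ) : ℝ :=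
  2 * ⟪deriv γ u, deriv h u⟫ * (1 / ‖γ (u + w) - γ u‖ ^ α - 1 / |w| ^ α)
    - α * ⟪γ (u + w) - γ u, h (u + w) - h u⟫ *
        (1 / ‖γ (u + w) - γ u‖ ^ (α + 2) - 1 / |w| ^ (α + 2))

/-- `R(γ,h)`, an absolutely convergent double integral over `(ℝ/ℤ) × [−1/2,1/2]`. -/
def Rval (α : ℝ) (γ h : ℝ → Rn n) : ℝ :=
  ∫ p in (Ioc (0:ℝ) 1) ×ˢ (Icc (-(1:ℝ)/2) (1/2)), Rintegrand α γ h p.1 p.2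

/-! ### Fourier coefficients of 1-periodic functions -/

/-- The character `u ↦ exp (2 π i k u)`. -/
def ee (k : ℤ) (u : ℝ) : ℂ := Complex.exp (2 * Real.pi * Complex.I * k * u)

/-- The `k`-th Fourier coefficient of a 1-periodic function. -/
def fc (F : ℝ → ℂ) (k : ℤ) : ℂ := ∫ u in (0:ℝ)..1, F u * ee (-k) u

lemma ee_add (j k : ℤ) (u : ℝ) : ee (j + k) u = ee j u * ee k u := by
  simp only [ee, ← Complex.exp_add]
  congr 1
  push_cast
  ring

lemma ee_add_right (k : ℤ) (u v : ℝ) : ee k (u + v) = ee k u * ee k v := by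
  simp only [ee, ← Complex.exp_add]
  congr 1
  push_cast
  ring

@[simp] lemma ee_zero (u : ℝ) : ee 0 u = 1 := by simp [ee]

@[simp] lemma ee_zero_right (k : ℤ) : ee k 0 = 1 := by simp [ee]

lemma ee_eq_exp_ofReal_mul_I (k : ℤ) (u : ℝ) :
    ee k u = Complex.exp (((2 * Real.pi * k * u : ℝ) : ℂ) * Complex.I) := by
  simp only [ee]
  congr 1
  push_cast
  ring

@[simp] lemma norm_ee (k : ℤ) (u : ℝ) : ‖ee k u‖ = 1 := by
  rw [ee_eq_exp_ofReal_mul_I, Complex.norm_exp_ofReal_mul_I]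

@[simp] lemma ee_one_right (k : ℤ) : ee k 1 = 1 := by
  rw [ee, Complex.exp_eq_one_iff]
  exact ⟨k, by push_cast; ring⟩

lemma ee_periodic (k : ℤ) : Function.Periodic (ee k) 1 := fun u => by
  rw [ee_add_right]; simp

@[fun_prop] lemma continuous_ee (k : ℤ) : Continuous (ee k) := by
  unfold ee; fun_prop

lemma hasDerivAt_ee (k : ℤ) (u : ℝ) :
    HasDerivAt (ee k) (2 * Real.pi * Complex.I * k * ee k u) u := by
  have h : HasDerivAt (fun u : ℝ => (2 * Real.pi * Complex.I * k : ℂ) * u)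
      (2 * Real.pi * Complex.I * k) u := by
    have := (Complex.ofRealCLM.hasDerivAt (x := u)).const_mul (2 * Real.pi * Complex.I * k : ℂ)
    simp only [Complex.ofRealCLM_apply, Complex.ofReal_one, mul_one] at this
    exact this
  exact h.cexp.congr_deriv (mul_comm _ _)

lemma fourier_coe_eq_ee (k : ℤ) (u : ℝ) : fourier k (u : AddCircle (1:ℝ)) = ee k u := by
  rw [fourier_coe_apply, ee]; simp

lemma fc_eq_fourierCoeffOn (F : ℝ → ℂ) (k : ℤ) :
    fourierCoeffOn (zero_lt_one (α := ℝ)) F k = fc F k := by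
  rw [fourierCoeffOn_eq_integral, fc]
  simp only [sub_zero, div_one, one_smul]
  refine intervalIntegral.integral_congr fun u _ => ?_
  have : fourier (-k) (u : AddCircle ((1:ℝ) - 0)) = ee (-k) u := by
    rw [fourier_coe_apply, ee]; simp
  simp only [this, smul_eq_mul, mul_comm]

lemma fc_congr {F G : ℝ → ℂ} (h : ∀ u, F u = G u) (k : ℤ) : fc F k = fc G k := by
  rw [funext h]

lemma integral_ee (k : ℤ) : ∫ u in (0:ℝ)..1, ee k u = if k = 0 then 1 else 0 := by
  split_ifs with h
  · simp [h]
  · have hc : (2 * Real.pi * Complex.I * k : ℂ) ≠ 0 := by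
      simp [h, Real.pi_ne_zero]
    have := intervalIntegral.integral_eq_sub_of_hasDerivAt (a := 0) (b := 1)
      (fun u _ => hasDerivAt_ee k u) (by
        apply Continuous.intervalIntegrable; fun_prop)
    rw [intervalIntegral.integral_const_mul] at this
    simpa [h, Real.pi_ne_zero] using this

lemma norm_fc_le {F : ℝ → ℂ} {C : ℝ} (hF : ∀ u, ‖F u‖ ≤ C) (k : ℤ) : ‖fc F k‖ ≤ C := by
  have := intervalIntegral.norm_integral_le_of_norm_le_const (a := 0) (b := 1)
    (f := fun u => F u * ee (-k) u) (C := C) (fun u _ => by simpa using hF u)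
  simpa [fc] using this

lemma norm_fc_le_integral (F : ℝ → ℂ) (k : ℤ) : ‖fc F k‖ ≤ ∫ u in (0:ℝ)..1, ‖F u‖ := by
  have := intervalIntegral.norm_integral_le_integral_norm (a := (0:ℝ)) (b := 1) zero_le_one
    (f := fun u => F u * ee (-k) u) (μ := volume)
  simpa [fc] using this

lemma fc_sum {ι : Type*} (S : Finset ι) (F : ι → ℝ → ℂ) (hF : ∀ i ∈ S, Continuous (F i)) (k : ℤ) :
    fc (fun u => ∑ i ∈ S, F i u) k = ∑ i ∈ S, fc (F i) k := by
  simp only [fc, Finset.sum_mul]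
  refine intervalIntegral.integral_finsetSum fun i hi => ?_
  exact ((hF i hi).mul (continuous_ee _)).intervalIntegrable _ _

lemma fc_add {F G : ℝ → ℂ} (hF : Continuous F) (hG : Continuous G) (k : ℤ) :
    fc (fun u => F u + G u) k = fc F k + fc G k := by
  simp only [fc, add_mul]
  exact intervalIntegral.integral_add ((hF.mul (continuous_ee _)).intervalIntegrable _ _)
    ((hG.mul (continuous_ee _)).intervalIntegrable _ _)

lemma fc_sub {F G : ℝ → ℂ} (hF : Continuous F) (hG : Continuous G) (k : ℤ) :
    fc (fun u => F u - G u) k = fc F k - fc G k := by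
  simp only [fc, sub_mul]
  exact intervalIntegral.integral_sub ((hF.mul (continuous_ee _)).intervalIntegrable _ _)
    ((hG.mul (continuous_ee _)).intervalIntegrable _ _)

lemma fc_const_mul (c : ℂ) (F : ℝ → ℂ) (k : ℤ) :
    fc (fun u => c * F u) k = c * fc F k := by
  simp only [fc, mul_assoc, intervalIntegral.integral_const_mul]

lemma fc_ee (j k : ℤ) : fc (ee j) k = if j = k then 1 else 0 := by
  have : ∀ u, ee j u * ee (-k) u = ee (j - k) u := fun u => by rw [← ee_add]; rfl
  simp only [fc, this, integral_ee, sub_eq_zero]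

lemma fc_mul_ee (F : ℝ → ℂ) (j k : ℤ) : fc (fun u => ee j u * F u) k = fc F (k - j) := by
  simp only [fc]
  refine intervalIntegral.integral_congr fun u _ => ?_
  have : -(k - j) = j + -k := by ring
  simp only [this, ee_add]
  ring

lemma fc_shift {F : ℝ → ℂ} (hF : Function.Periodic F 1) (a : ℝ) (k : ℤ) :
    fc (fun u => F (u + a)) k = ee k a * fc F k := by
  have h1 : ∀ u, F (u + a) * ee (-k) u = ee k a * (F (u + a) * ee (-k) (u + a)) := fun u => by
    rw [ee_add_right]
    have : ee k a * ee (-k) a = 1 := by rw [← ee_add]; simp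
    linear_combination (-(F (u + a) * ee (-k) u)) * this
  simp only [fc, h1, intervalIntegral.integral_const_mul]
  congr 1
  rw [intervalIntegral.integral_comp_add_right (fun u => F u * ee (-k) u)]
  have hp : Function.Periodic (fun u => F u * ee (-k) u) 1 := hF.mul (ee_periodic _)
  have := hp.intervalIntegral_add_eq (0 + a) 0
  rw [zero_add] at this
  rw [zero_add, add_comm 1 a, this, zero_add]

/-- Fourier inversion for absolutely summable Fourier series. -/
lemma hasSum_fc {F : ℝ → ℂ} (hF : Continuous F) (hp : Function.Periodic F 1)
    (hs : Summable (fun k => ‖fc F k‖)) (u : ℝ) : HasSum (fun k => fc F k * ee k u) (F u) := by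
  have : Fact ((0:ℝ) < 1) := ⟨zero_lt_one⟩
  let f : C(AddCircle (1:ℝ), ℂ) := ⟨hp.lift, by
    exact (continuous_coinduced_dom.mpr hF)⟩
  have hf : ∀ k, fourierCoeff f k = fc F k := fun k => by
    rw [fourierCoeff_eq_intervalIntegral f k 0, fc]
    simp only [div_one, one_smul, zero_add]
    refine intervalIntegral.integral_congr fun u _ => ?_
    change fourier (-k) (u : AddCircle (1:ℝ)) • hp.lift u = _
    rw [fourier_coe_eq_ee, Function.Periodic.lift_coe, smul_eq_mul, mul_comm]
  have hs' : Summable (fourierCoeff f) := by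
    rw [funext hf]; exact hs.of_norm
  have := has_pointwise_sum_fourier_series_of_summable hs' (u : AddCircle (1:ℝ))
  simp only [hf, fourier_coe_eq_ee, smul_eq_mul] at this
  exact this

/-- Parseval's identity. -/
lemma hasSum_sq_fc {F : ℝ → ℂ} (hF : AEStronglyMeasurable F volume) {C : ℝ} (hC : ∀ u, ‖F u‖ ≤ C) :
    HasSum (fun k => ‖fc F k‖ ^ 2) (∫ u in (0:ℝ)..1, ‖F u‖ ^ 2) := by
  have h2 : MemLp F 2 (volume.restrict (Ioc (0:ℝ) 1)) :=
    MemLp.of_bound hF.restrict C (Eventually.of_forall hC)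
  have := hasSum_sq_fourierCoeffOn (zero_lt_one (α := ℝ)) h2
  simpa [fc_eq_fourierCoeffOn] using this

/-- Fourier coefficients of a product. -/
lemma hasSum_fc_mul {F G : ℝ → ℂ} (hF : Continuous F) (hp : Function.Periodic F 1)
    (hs : Summable (fun k => ‖fc F k‖)) (hG : Continuous G) (k : ℤ) :
    HasSum (fun j => fc F j * fc G (k - j)) (fc (fun u => F u * G u) k) := by
  obtain ⟨C, hC⟩ := (isCompact_Icc (a := (0:ℝ)) (b := 1)).exists_bound_of_continuousOn hG.continuousOn
  have h1 : HasSum (fun j => ∫ u in (0:ℝ)..1, fc F j * ee j u * (G u * ee (-k) u))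
      (∫ u in (0:ℝ)..1, F u * (G u * ee (-k) u)) := by
    refine intervalIntegral.hasSum_integral_of_dominated_convergence
      (fun j _ => ‖fc F j‖ * C) ?_ ?_ ?_ ?_ ?_
    · intro j; exact Continuous.aestronglyMeasurable (by fun_prop)
    · intro j
      refine Eventually.of_forall fun u hu => ?_
      rw [uIoc_of_le zero_le_one] at hu
      simp only [norm_mul, norm_ee, mul_one]
      gcongr
      exact hC u ⟨hu.1.le, hu.2⟩
    · exact Eventually.of_forall fun u _ => hs.mul_right C
    · simp
    · exact Eventually.of_forall fun u _ => (hasSum_fc hF hp hs u).mul_right _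
  convert h1 using 1
  · funext j
    have : fc (fun u => ee j u * G u) k = ∫ u in (0:ℝ)..1, ee j u * G u * ee (-k) u := rfl
    rw [← fc_mul_ee, this, ← intervalIntegral.integral_const_mul]
    congr 1; funext u; ring
  · simp only [fc, mul_assoc]

/-! ### Polynomial decay and convolutions -/

/-- The weight `(1 + |k|)^(-s)`. -/
def W (s : ℝ) (k : ℤ) : ℝ := (1 + |(k:ℝ)|) ^ (-s)

lemma W_pos (s : ℝ) (k : ℤ) : 0 < W s k := by unfold W; positivity

lemma W_nonneg (s : ℝ) (k : ℤ) : 0 ≤ W s k := (W_pos s k).le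

@[simp] lemma W_zero_right (s : ℝ) : W s 0 = 1 := by simp [W]

lemma W_mul (s t : ℝ) (k : ℤ) : W s k * W t k = W (s + t) k := by
  unfold W
  rw [← Real.rpow_add (by positivity)]
  congr 1; ring

lemma W_anti {s t : ℝ} (h : s ≤ t) (k : ℤ) : W t k ≤ W s k := by
  unfold W
  exact Real.rpow_le_rpow_of_exponent_le (by linarith [abs_nonneg (k:ℝ)]) (by linarith)

lemma W_le_of_abs_le {s : ℝ} (hs : 0 ≤ s) {j k : ℤ} (h : |(j:ℝ)| ≤ |(k:ℝ)|) : W s k ≤ W s j := by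
  unfold W
  exact Real.rpow_le_rpow_of_nonpos (by positivity) (by linarith) (by linarith)

lemma W_le_two_rpow_mul {s : ℝ} (hs : 0 ≤ s) {j k : ℤ} (h : |(j:ℝ)| ≤ |(k:ℝ)|) :
    W s k ≤ 2 ^ s * W s (j + k) := by
  unfold W
  have h1 : 1 + |((j + k : ℤ):ℝ)| ≤ 2 * (1 + |(k:ℝ)|) := by
    push_cast
    have := abs_add_le (j:ℝ) k
    linarith
  have h2 := Real.rpow_le_rpow_of_nonpos (z := -s) (by positivity) h1 (by linarith)
  rw [Real.mul_rpow (by norm_num) (by positivity)] at h2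
  have h3 : (2:ℝ) ^ s * 2 ^ (-s) = 1 := by
    rw [← Real.rpow_add (by norm_num)]; simp
  calc (1 + |(k:ℝ)|) ^ (-s) = 2 ^ s * (2 ^ (-s) * (1 + |(k:ℝ)|) ^ (-s)) := by
        rw [← mul_assoc, h3, one_mul]
    _ ≤ _ := by gcongr

lemma summable_W {s : ℝ} (hs : 1 < s) : Summable (W s) := by
  have h := Real.summable_one_div_int_add_rpow 0 s |>.mpr hs
  simp only [add_zero] at h
  rw [← Set.Finite.summable_compl_iff (Set.finite_singleton (0:ℤ))] at h ⊢
  refine h.of_nonneg_of_le (fun k => W_nonneg _ _) fun k => ?_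
  have hk : (k:ℤ) ≠ 0 := k.2
  have : 0 < |((k:ℤ):ℝ)| := by positivity
  simp only [Function.comp_apply]
  rw [one_div, ← Real.rpow_neg (abs_nonneg _)]
  exact Real.rpow_le_rpow_of_nonpos this (by linarith) (by linarith)

/-- The sum of the weights `W s`. -/
def SW (s : ℝ) : ℝ := ∑' k, W s k

lemma SW_nonneg (s : ℝ) : 0 ≤ SW s := tsum_nonneg fun _ => W_nonneg _ _

lemma W_conv_aux {r s : ℝ} (hr : 0 ≤ r) (hrs : r ≤ s) (j l : ℤ) :
    W r j * W s l ≤ 2 ^ r * W r (j + l) * (W s j + W s l) := by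
  have hs := W_nonneg s
  have h2 : (0:ℝ) < 2 ^ r := by positivity
  have hW := W_pos r (j + l)
  rcases le_total |(j:ℝ)| |(l:ℝ)| with h | h
  · have h1 := W_le_two_rpow_mul hr h
    have h3 := W_le_of_abs_le (sub_nonneg.mpr hrs) h
    calc W r j * W s l = W r j * (W r l * W (s - r) l) := by rw [W_mul]; ring_nf
      _ ≤ W r j * (2 ^ r * W r (j + l) * W (s - r) j) := by
          have := W_nonneg r j
          have := W_nonneg (s - r) l
          gcongr
      _ = 2 ^ r * W r (j + l) * W s j := by
          rw [show W s j = W r j * W (s - r) j by rw [W_mul]; ring_nf]; ring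
      _ ≤ _ := by
          gcongr
          linarith [hs l]
  · have h1 := W_le_two_rpow_mul hr h
    rw [add_comm] at h1
    calc W r j * W s l ≤ 2 ^ r * W r (j + l) * W s l := by
          have := hs l
          gcongr
      _ ≤ _ := by gcongr; linarith [hs j]

lemma norm_fc_mul_le {F G : ℝ → ℂ} (hF : Continuous F) (hp : Function.Periodic F 1)
    (hs : Summable (fun k => ‖fc F k‖)) (hG : Continuous G) {τ A : ℝ} (hτ : 1 < τ) (k : ℤ)
    (h : ∀ j, ‖fc F j‖ * ‖fc G (k - j)‖ ≤ A * (W τ j + W τ (k - j))) :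
    ‖fc (fun u => F u * G u) k‖ ≤ A * (2 * SW τ) := by
  rw [← (hasSum_fc_mul hF hp hs hG k).tsum_eq]
  have h1 : HasSum (W τ) (SW τ) := (summable_W hτ).hasSum
  have h2 : HasSum (fun j => W τ (k - j)) (SW τ) := (Equiv.subLeft k).hasSum_iff.mpr h1
  refine tsum_of_norm_bounded (g := fun j => A * (W τ j + W τ (k - j))) ?_ fun j => ?_
  · rw [two_mul]; exact (h1.add h2).mul_left A
  · rw [norm_mul]; exact h j

lemma summable_fc_of_le {F : ℝ → ℂ} {s C : ℝ} (hs : 1 < s) (h : ∀ k, ‖fc F k‖ ≤ C * W s k) :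
    Summable (fun k => ‖fc F k‖) :=
  ((summable_W hs).mul_left C).of_nonneg_of_le (fun _ => norm_nonneg _) h

lemma norm_fc_mul_le_W {F G : ℝ → ℂ} (hF : Continuous F)
    (hG : Continuous G) (hpG : Function.Periodic G 1) {r s C D : ℝ}
    (hs : 1 < s) (hr : 0 ≤ r) (hrs : r ≤ s) (hFC : ∀ k, ‖fc F k‖ ≤ C * W r k)
    (hGD : ∀ k, ‖fc G k‖ ≤ D * W s k) (k : ℤ) :
    ‖fc (fun u => F u * G u) k‖ ≤ 2 ^ r * (2 * SW s) * C * D * W r k := by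
  have hC : 0 ≤ C := nonneg_of_mul_nonneg_left ((norm_nonneg _).trans (hFC 0)) (W_pos _ _)
  have := norm_fc_mul_le hG hpG (summable_fc_of_le hs hGD) hF (A := 2 ^ r * C * D * W r k) hs k
    fun j => by
      have h1 := W_conv_aux hr hrs (k - j) j
      rw [sub_add_cancel] at h1
      have hD : 0 ≤ D := nonneg_of_mul_nonneg_left ((norm_nonneg _).trans (hGD 0)) (W_pos _ _)
      calc ‖fc G j‖ * ‖fc F (k - j)‖ ≤ (D * W s j) * (C * W r (k - j)) := by
            gcongr
            · exact mul_nonneg hD (W_nonneg _ _)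
            · exact hGD j
            · exact hFC _
        _ = C * D * (W r (k - j) * W s j) := by ring
        _ ≤ C * D * (2 ^ r * W r k * (W s (k - j) + W s j)) := by gcongr
        _ = _ := by ring
  calc ‖fc (fun u => F u * G u) k‖ = ‖fc (fun u => G u * F u) k‖ := by
        simp only [mul_comm]
    _ ≤ _ := this
    _ = _ := by ring

/-! ### Powers and analytic functions of functions with decaying Fourier coefficients -/

lemma fc_one (k : ℤ) : fc (fun _ => 1) k = if k = 0 then 1 else 0 := by
  have := fc_ee 0 k
  simp only [eq_comm (a := (0:ℤ))] at this
  rw [← this]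
  exact fc_congr (fun u => (ee_zero u).symm) k

lemma norm_fc_one_le (s : ℝ) (k : ℤ) : ‖fc (fun _ => 1) k‖ ≤ W s k := by
  rw [fc_one]
  split_ifs with h
  · simp [h]
  · simpa using W_nonneg s k

lemma norm_fc_pow_le {F : ℝ → ℂ} (hF : Continuous F) (hp : Function.Periodic F 1) {s C : ℝ}
    (hs : 1 < s) (hFC : ∀ k, ‖fc F k‖ ≤ C * W s k) (l : ℕ) (k : ℤ) :
    ‖fc (fun u => F u ^ l) k‖ ≤ (2 ^ s * (2 * SW s) * C) ^ l * W s k := by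
  induction l generalizing k with
  | zero => simpa using norm_fc_one_le s k
  | succ l ih =>
    have := norm_fc_mul_le_W (hF.pow l) hF hp hs (by linarith) le_rfl ih
      hFC k
    simp only [pow_succ] at this ⊢
    exact this.trans_eq (by ring)

lemma fc_trig_mul (S : Finset ℤ) (a : ℤ → ℂ) {G : ℝ → ℂ} (hG : Continuous G) (k : ℤ) :
    fc (fun u => (∑ m ∈ S, a m * ee m u) * G u) k = ∑ m ∈ S, a m * fc G (k - m) := by
  simp only [Finset.sum_mul]
  rw [fc_sum S _ (fun m _ => by fun_prop)]
  refine Finset.sum_congr rfl fun m _ => ?_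
  simp only [mul_assoc]
  rw [fc_const_mul, fc_mul_ee]

lemma fc_trig (S : Finset ℤ) (a : ℤ → ℂ) (k : ℤ) :
    fc (fun u => ∑ m ∈ S, a m * ee m u) k = if k ∈ S then a k else 0 := by
  rw [fc_sum S _ (fun m _ => by fun_prop)]
  simp only [fc_const_mul, fc_ee]
  simp

lemma fc_trig_pow_eq_zero (N : ℕ) (a : ℤ → ℂ) (l : ℕ) (k : ℤ) (hk : (N * l : ℤ) < |k|) :
    fc (fun u => (∑ m ∈ Finset.Icc (-N : ℤ) N, a m * ee m u) ^ l) k = 0 := by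
  induction l generalizing k with
  | zero =>
    simp only [pow_zero, fc_one]
    rw [if_neg]
    rintro rfl
    simp at hk
  | succ l ih =>
    simp only [pow_succ']
    rw [fc_trig_mul _ _ (by fun_prop)]
    refine Finset.sum_eq_zero fun m hm => ?_
    rw [ih, mul_zero]
    rw [Finset.mem_Icc, ← abs_le] at hm
    have : |k| ≤ |k - m| + |m| := by
      have := abs_add_le (k - m) m
      simpa using this
    push_cast at hk
    nlinarith

lemma norm_fc_trig_pow_le (N : ℕ) (a : ℤ → ℂ) {r : ℝ} (s : ℝ) (hs : 0 ≤ s)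
    (hr : ∀ u, ‖∑ m ∈ Finset.Icc (-N : ℤ) N, a m * ee m u‖ ≤ r) (l : ℕ) (k : ℤ) :
    ‖fc (fun u => (∑ m ∈ Finset.Icc (-N : ℤ) N, a m * ee m u) ^ l) k‖ ≤
      (1 + N * l) ^ s * r ^ l * W s k := by
  have hr0 : 0 ≤ r := (norm_nonneg _).trans (hr 0)
  rcases lt_or_ge (N * l : ℤ) |k| with h | h
  · rw [fc_trig_pow_eq_zero N a l k h, norm_zero]
    have := W_nonneg s k
    positivity
  · have h1 : ‖fc (fun u => (∑ m ∈ Finset.Icc (-N : ℤ) N, a m * ee m u) ^ l) k‖ ≤ r ^ l :=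
      norm_fc_le (fun u => by rw [norm_pow]; exact pow_le_pow_left₀ (norm_nonneg _) (hr u) l) k
    have h2 : (1:ℝ) ≤ (1 + N * l) ^ s * W s k := by
      have hk : |(k:ℝ)| ≤ N * l := by exact_mod_cast h
      unfold W
      rw [Real.rpow_neg (by positivity), ← div_eq_mul_inv, one_le_div (by positivity)]
      exact Real.rpow_le_rpow (by positivity) (by linarith) hs
    calc _ ≤ r ^ l * 1 := by rw [mul_one]; exact h1
      _ ≤ r ^ l * ((1 + N * l) ^ s * W s k) := by gcongr
      _ = _ := by ring

lemma exists_poly_mul_pow_le {r₀ r s : ℝ} (h0 : 0 < r₀) (h : r₀ < r) (N : ℕ) :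
    ∃ C, 0 ≤ C ∧ ∀ i : ℕ, (1 + (N:ℝ) * i) ^ s * r₀ ^ i ≤ C * r ^ i := by
  have hr : 0 < r := h0.trans h
  obtain ⟨m, hm⟩ := exists_nat_ge s
  have hq : |r₀ / r| < 1 := by
    rw [abs_of_pos (by positivity), div_lt_one hr]; exact h
  have ht := tendsto_pow_const_mul_const_pow_of_abs_lt_one m hq
  obtain ⟨B, hB⟩ := ht.bddAbove_range
  have hB' : ∀ i : ℕ, (i:ℝ) ^ m * (r₀ / r) ^ i ≤ B := fun i => hB ⟨i, rfl⟩
  refine ⟨(1 + (N:ℝ)) ^ m * (B / (r₀ / r)), ?_, fun i => ?_⟩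
  · have := hB' 0
    have : 0 ≤ B := le_trans (by positivity) this
    positivity
  · have hNi : 0 ≤ (N:ℝ) * i := by positivity
    have h1 : (1 + (N:ℝ) * i) ^ s ≤ (1 + (N:ℝ)) ^ m * ((i + 1 : ℕ) : ℝ) ^ m := by
      calc (1 + (N:ℝ) * i) ^ s ≤ (1 + (N:ℝ) * i) ^ (m:ℝ) :=
            Real.rpow_le_rpow_of_exponent_le (by linarith) hm
        _ = (1 + (N:ℝ) * i) ^ m := Real.rpow_natCast _ _
        _ ≤ ((1 + (N:ℝ)) * ((i + 1 : ℕ) : ℝ)) ^ m := by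
            gcongr
            push_cast
            linarith [Nat.cast_nonneg (α := ℝ) N, Nat.cast_nonneg (α := ℝ) i]
        _ = _ := by rw [mul_pow]
    have h2 := hB' (i + 1)
    have h3 : ((i + 1 : ℕ) : ℝ) ^ m * (r₀ / r) ^ i ≤ B / (r₀ / r) := by
      rw [le_div_iff₀ (by positivity), mul_assoc, ← pow_succ]; exact h2
    calc (1 + (N:ℝ) * i) ^ s * r₀ ^ i
        ≤ (1 + (N:ℝ)) ^ m * ((i + 1 : ℕ) : ℝ) ^ m * r₀ ^ i := by gcongr
      _ = (1 + (N:ℝ)) ^ m * (((i + 1 : ℕ) : ℝ) ^ m * (r₀ / r) ^ i) * r ^ i := by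
          rw [div_pow]; field_simp
      _ ≤ _ := by gcongr

/-- Powers of functions bounded by `ρ < 1` with polynomially decaying Fourier coefficients:
the decay of the Fourier coefficients is preserved (up to an arbitrarily small loss in the
exponent) with geometrically decaying constants. -/
lemma exists_norm_fc_pow_le {β s ρ : ℝ} (hs : 1 < s) (hβ : s < β) (hρ0 : 0 ≤ ρ) (hρ : ρ < 1)
    {C₀ : ℝ} (hC₀ : 0 ≤ C₀) :
    ∃ C r : ℝ, 0 ≤ C ∧ 0 < r ∧ r < 1 ∧ ∀ g : ℝ → ℂ, Continuous g → Function.Periodic g 1 →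
      (∀ u, ‖g u‖ ≤ ρ) → (∀ k, ‖fc g k‖ ≤ C₀ * W β k) →
      ∀ (i : ℕ) (k : ℤ), ‖fc (fun u => g u ^ i) k‖ ≤ C * r ^ i * W s k := by
  set K : ℝ := 2 ^ s * (2 * SW s) with hK
  have hSW := SW_nonneg s
  have hK0 : 0 ≤ K := by positivity
  obtain ⟨N, hN⟩ : ∃ N : ℕ, C₀ * W (β - s) N * (SW s + K) < (1 - ρ) / 2 := by
    have h1 : Tendsto (fun N : ℕ => W (β - s) N) atTop (𝓝 0) := by
      have h2 := (tendsto_rpow_neg_atTop (sub_pos.mpr hβ)).comp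
        (tendsto_atTop_add_const_left atTop (1:ℝ) tendsto_natCast_atTop_atTop)
      refine h2.congr fun N => ?_
      simp [W]
    have h3 := (h1.const_mul C₀).mul_const (SW s + K)
    rw [mul_zero, zero_mul] at h3
    exact (h3.eventually_lt_const (by linarith)).exists
  set ε : ℝ := C₀ * W (β - s) N with hε
  have hε0 : 0 ≤ ε := mul_nonneg hC₀ (W_nonneg _ _)
  set r₁ : ℝ := ρ + ε * SW s with hr₁
  have hr₁0 : 0 ≤ r₁ := by positivity
  set r₀ : ℝ := (1 + ρ) / 2 with hr₀
  have hr₀1 : r₀ < 1 := by rw [hr₀]; linarith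
  have hr₀0 : 0 < r₀ := by positivity
  have hle : r₁ + K * ε ≤ r₀ := by rw [hr₁, hr₀]; nlinarith
  obtain ⟨C, hC0, hC⟩ := exists_poly_mul_pow_le (s := s) hr₀0
    (show r₀ < (r₀ + 1) / 2 by linarith) N
  refine ⟨K * C, (r₀ + 1) / 2, by positivity, by positivity, by linarith,
    fun g hg hgp hgρ hgβ i k => ?_⟩
  have hgs : ∀ k, ‖fc g k‖ ≤ C₀ * W s k := fun k =>
    (hgβ k).trans (mul_le_mul_of_nonneg_left (W_anti hβ.le k) hC₀)
  have hsum := summable_fc_of_le hs hgs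
  set P : ℝ → ℂ := fun u => ∑ m ∈ Finset.Icc (-N : ℤ) N, fc g m * ee m u with hP
  have hPc : Continuous P := by rw [hP]; fun_prop
  have hPp : Function.Periodic P 1 := fun u => by
    simp only [hP, ee_periodic _ u]
  set t : ℝ → ℂ := fun u => g u - P u with ht
  have htc : Continuous t := hg.sub hPc
  have htp : Function.Periodic t 1 := hgp.sub hPp
  have htk : ∀ k, ‖fc t k‖ ≤ ε * W s k := fun k => by
    rw [ht, fc_sub hg hPc, hP, fc_trig]
    split_ifs with h
    · simpa using mul_nonneg hε0 (W_nonneg s k)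
    · rw [sub_zero]
      refine (hgβ k).trans ?_
      rw [hε, mul_assoc]
      gcongr
      have : W β k = W (β - s) k * W s k := by rw [W_mul]; ring_nf
      rw [this]
      gcongr
      · exact W_nonneg _ _
      · apply W_le_of_abs_le (by linarith)
        rw [Finset.mem_Icc, ← abs_le, not_le] at h
        have : ((N:ℤ):ℝ) ≤ ((|k| : ℤ):ℝ) := by exact_mod_cast h.le
        push_cast at this
        simpa using this
  have htb : ∀ u, ‖t u‖ ≤ ε * SW s := fun u => by
    rw [← (hasSum_fc htc htp (summable_fc_of_le hs htk) u).tsum_eq]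
    exact tsum_of_norm_bounded ((summable_W hs).hasSum.mul_left ε) fun k => by
      simpa using htk k
  have hPb : ∀ u, ‖P u‖ ≤ r₁ := fun u => by
    have : P u = g u - t u := by simp [ht]
    rw [this]
    exact (norm_sub_le _ _).trans (add_le_add (hgρ u) (htb u))
  have hterm : ∀ j ∈ Finset.range (i + 1),
      ‖fc (fun u => P u ^ j * t u ^ (i - j) * (i.choose j : ℂ)) k‖ ≤
        K * (1 + (N:ℝ) * i) ^ s * W s k * (r₁ ^ j * (K * ε) ^ (i - j) * i.choose j) := by
    intro j hj
    have hji : (j:ℝ) ≤ i := by exact_mod_cast Nat.lt_succ_iff.mp (Finset.mem_range.mp hj)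
    have h1 := norm_fc_mul_le_W (hPc.pow j) (htc.pow (i - j)) (fun u => congrArg (· ^ (i - j)) (htp u)) (r := s) (s := s)
      (C := (1 + (N:ℝ) * i) ^ s * r₁ ^ j) (D := (K * ε) ^ (i - j)) hs (by linarith) le_rfl
      (fun m => (norm_fc_trig_pow_le N (fc g) s (by linarith) hPb j m).trans (by
        have := W_nonneg s m
        gcongr))
      (fun m => norm_fc_pow_le htc htp hs htk (i - j) m) k
    have h2 : fc (fun u => P u ^ j * t u ^ (i - j) * (i.choose j : ℂ)) k =
        (i.choose j : ℂ) * fc (fun u => P u ^ j * t u ^ (i - j)) k := by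
      rw [← fc_const_mul]; exact fc_congr (fun u => by ring) k
    rw [h2, norm_mul, Complex.norm_natCast]
    calc (i.choose j : ℝ) * ‖fc (fun u => P u ^ j * t u ^ (i - j)) k‖
        ≤ (i.choose j : ℝ) * (2 ^ s * (2 * SW s) * ((1 + (N:ℝ) * i) ^ s * r₁ ^ j) *
          (K * ε) ^ (i - j) * W s k) := by
          gcongr
          exact h1
      _ = _ := by rw [← hK]; ring
  have hexp : fc (fun u => g u ^ i) k =
      ∑ j ∈ Finset.range (i + 1), fc (fun u => P u ^ j * t u ^ (i - j) * (i.choose j : ℂ)) k := by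
    rw [← fc_sum _ _ (fun j _ => by fun_prop)]
    refine fc_congr (fun u => ?_) k
    rw [← add_pow]
    simp [ht]
  rw [hexp]
  refine (norm_sum_le_of_le _ hterm).trans ?_
  rw [← Finset.mul_sum, ← add_pow]
  calc K * (1 + (N:ℝ) * i) ^ s * W s k * (r₁ + K * ε) ^ i
      ≤ K * (1 + (N:ℝ) * i) ^ s * W s k * r₀ ^ i := by
        have := W_nonneg s k
        gcongr
    _ = K * ((1 + (N:ℝ) * i) ^ s * r₀ ^ i) * W s k := by ring
    _ ≤ K * (C * ((r₀ + 1) / 2) ^ i) * W s k := by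
        have := W_nonneg s k
        have := hC i
        gcongr
    _ = _ := by ring

lemma exists_hasSum_one_sub_rpow (q : ℝ) : ∃ b : ℕ → ℝ, ∀ x : ℝ, |x| < 1 →
    (Summable fun i => |b i| * |x| ^ i) ∧
      HasSum (fun i => b (i + 1) * x ^ (i + 1)) ((1 - x) ^ (-q) - 1) := by
  have h := Real.one_div_one_sub_rpow_hasFPowerSeriesOnBall_zero q
  set b : ℕ → ℝ := fun n => Ring.choose (q + n - 1) n with hb
  refine ⟨b, fun x hx => ?_⟩
  have hx' : x ∈ Metric.eball (0:ℝ) 1 := by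
    simpa [enorm_eq_nnnorm, ← NNReal.coe_lt_coe] using hx
  have hs : HasSum (fun i => b i * x ^ i) ((1 - x) ^ (-q)) := by
    have h1 := h.hasSum hx'
    rw [zero_add, one_div, ← Real.rpow_neg (by linarith [(abs_lt.mp hx).2])] at h1
    have h2 : ∀ i, (FormalMultilinearSeries.ofScalars ℝ b i fun _ => x) = b i * x ^ i :=
      fun i => by simp [mul_comm]
    simpa only [h2] using h1
  refine ⟨by simpa [abs_mul] using hs.summable.abs, ?_⟩
  have h0 : b 0 = 1 := by simp [hb]
  rw [hasSum_nat_add_iff (f := fun i => b i * x ^ i) 1]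
  simpa [h0] using hs

/-- Fourier decay of `((1 - X)^(-q) - 1) G`. -/
lemma exists_norm_fc_comp_mul_le (q : ℝ) {β s r' ρ : ℝ} (hs : 1 < s) (hβ : s < β) (hr' : 0 ≤ r')
    (hr's : r' ≤ s) (hρ0 : 0 ≤ ρ) (hρ : ρ < 1) {C₀ : ℝ} (hC₀ : 0 ≤ C₀) :
    ∃ C : ℝ, 0 ≤ C ∧ ∀ (X : ℝ → ℝ) (G : ℝ → ℂ) (D : ℝ), Continuous X → Function.Periodic X 1 →
      Continuous G → Function.Periodic G 1 → (∀ u, |X u| ≤ ρ) →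
      (∀ k, ‖fc (fun u => X u) k‖ ≤ C₀ * W β k) → (∀ k, ‖fc G k‖ ≤ C₀ * W β k) →
      (∀ k, ‖fc (fun u => X u) k‖ ≤ D * W r' k) →
      ∀ k, ‖fc (fun u => (((1 - X u) ^ (-q) - 1 : ℝ) : ℂ) * G u) k‖ ≤ C * D * W r' k := by
  obtain ⟨C, r, hC0, hr0, hr1, hC⟩ := exists_norm_fc_pow_le hs hβ hρ0 hρ hC₀
  obtain ⟨b, hb⟩ := exists_hasSum_one_sub_rpow q
  have hSW := SW_nonneg s
  have hbr : Summable fun i => |b (i + 1)| * r ^ i := by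
    have h1 := (hb r (by rwa [abs_of_pos hr0])).1
    rw [abs_of_pos hr0] at h1
    have h2 := ((summable_nat_add_iff 1).mpr h1).mul_right r⁻¹
    refine h2.congr fun i => ?_
    rw [pow_succ]; field_simp
  have hbρ : Summable fun i => |b (i + 1)| * ρ ^ (i + 1) := by
    have h1 := (hb ρ (by rwa [abs_of_nonneg hρ0])).1
    rw [abs_of_nonneg hρ0] at h1
    exact (summable_nat_add_iff 1).mpr h1
  set K₁ : ℝ := 2 ^ s * (2 * SW s) * C * C₀ with hK₁
  set K₂ : ℝ := 2 ^ r' * (2 * SW s) * K₁ with hK₂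
  have hK₂0 : 0 ≤ K₂ := by positivity
  refine ⟨K₂ * ∑' i, |b (i + 1)| * r ^ i, by positivity, fun X G D hX hXp hG hGp hXρ hXβ hGβ hXr k
    => ?_⟩
  have hXc : Continuous (fun u => (X u : ℂ)) := by fun_prop
  have hXcp : Function.Periodic (fun u => (X u : ℂ)) 1 := fun u => by simp [hXp u]
  obtain ⟨B, hB⟩ := (isCompact_Icc (a := (0:ℝ)) (b := 1)).exists_bound_of_continuousOn hG.continuousOn
  have hsumF : HasSum (fun i => (b (i + 1) : ℂ) * fc (fun u => (X u : ℂ) * ((X u : ℂ) ^ i * G u)) k)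
      (fc (fun u => (((1 - X u) ^ (-q) - 1 : ℝ) : ℂ) * G u) k) := by
    have h1 : HasSum (fun i => ∫ u in (0:ℝ)..1,
        ((b (i + 1) * X u ^ (i + 1) : ℝ) : ℂ) * (G u * ee (-k) u))
        (∫ u in (0:ℝ)..1, (((1 - X u) ^ (-q) - 1 : ℝ) : ℂ) * (G u * ee (-k) u)) := by
      refine intervalIntegral.hasSum_integral_of_dominated_convergence
        (fun i _ => |b (i + 1)| * ρ ^ (i + 1) * B) ?_ ?_ ?_ ?_ ?_
      · intro j; exact Continuous.aestronglyMeasurable (by fun_prop)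
      · intro i
        refine Eventually.of_forall fun u hu => ?_
        rw [uIoc_of_le zero_le_one] at hu
        simp only [norm_mul, norm_ee, mul_one, Complex.norm_real, Real.norm_eq_abs, abs_pow]
        have h2 := hB u ⟨hu.1.le, hu.2⟩
        have h3 := hXρ u
        gcongr
      · exact Eventually.of_forall fun u _ => hbρ.mul_right B
      · simp
      · refine Eventually.of_forall fun u _ => ?_
        have h2 := (hb (X u) ((hXρ u).trans_lt hρ)).2
        exact (Complex.hasSum_ofReal.mpr h2).mul_right _
    convert h1 using 1
    · funext i
      rw [← fc_const_mul]
      simp only [fc]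
      congr 1; funext u; push_cast; ring
    · simp only [fc, mul_assoc]
  rw [← hsumF.tsum_eq]
  have hbd : HasSum (fun i => K₂ * (|b (i + 1)| * r ^ i) * D * W r' k)
      (K₂ * (∑' i, |b (i + 1)| * r ^ i) * D * W r' k) :=
    ((hbr.hasSum.mul_left K₂).mul_right D).mul_right _
  refine tsum_of_norm_bounded hbd fun i => ?_
  have h1 : ∀ k, ‖fc (fun u => (X u : ℂ) ^ i * G u) k‖ ≤ (K₁ * r ^ i) * W s k := fun k => by
    have := norm_fc_mul_le_W (hXc.pow i) hG hGp hs (by linarith) le_rfl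
      (hC _ hXc hXcp (fun u => by simpa using hXρ u) hXβ i) (D := C₀)
      (fun k => (hGβ k).trans (by gcongr; exact W_anti hβ.le k)) k
    refine this.trans_eq ?_
    rw [hK₁]; ring
  have h2 := norm_fc_mul_le_W hXc ((hXc.pow i).mul hG) (fun u => congrArg₂ (fun a b : ℂ => a ^ i * b)
    (hXcp u) (hGp u)) hs hr' hr's hXr h1 k
  rw [norm_mul, Complex.norm_real, Real.norm_eq_abs]
  calc |b (i + 1)| * _ ≤ |b (i + 1)| * _ := mul_le_mul_of_nonneg_left h2 (abs_nonneg _)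
    _ = _ := by rw [hK₂]; ring

/-! ### Averages of the characters -/

/-- The average of the character `ee k` over the segment from `0` to `w`. -/
def phi (k : ℤ) (w : ℝ) : ℂ := ∫ s in (0:ℝ)..1, ee k (s * w)

lemma mul_phi (k : ℤ) (w : ℝ) : 2 * Real.pi * Complex.I * k * w * phi k w = ee k w - 1 := by
  have h := intervalIntegral.integral_eq_sub_of_hasDerivAt (a := 0) (b := 1)
    (f := fun s : ℝ => ee k (s * w)) (f' := fun s => (w:ℝ) • (2 * Real.pi * Complex.I * k * ee k (s * w)))
    (fun s _ => by
      have h1 : HasDerivAt (fun s : ℝ => s * w) w s := by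
        simpa using (hasDerivAt_id s).mul_const w
      exact (hasDerivAt_ee k (s * w)).scomp s h1)
    (by apply Continuous.intervalIntegrable; fun_prop)
  simp only [one_mul, zero_mul, ee_zero_right] at h
  rw [← h, phi, intervalIntegral.integral_smul, intervalIntegral.integral_const_mul,
    Complex.real_smul]
  ring

lemma norm_phi_le_one (k : ℤ) (w : ℝ) : ‖phi k w‖ ≤ 1 := by
  have := intervalIntegral.norm_integral_le_of_norm_le_const (a := 0) (b := 1)
    (f := fun s => ee k (s * w)) (C := 1) (fun s _ => by simp)
  simpa [phi] using this

@[fun_prop] lemma continuous_phi (k : ℤ) : Continuous (phi k) := by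
  unfold phi
  apply intervalIntegral.continuous_parametric_intervalIntegral_of_continuous'
  fun_prop

lemma norm_phi_le {k : ℤ} {w : ℝ} (h : 2 / 5 ≤ |(k:ℝ)| * |w|) : ‖phi k w‖ ≤ 4 / 5 := by
  have h1 : ‖ee k w - 1‖ ≤ 2 := (norm_sub_le _ _).trans (by simp; norm_num)
  rw [← mul_phi] at h1
  simp only [norm_mul, Complex.norm_ofNat, Complex.norm_real, Real.norm_eq_abs,
    Complex.norm_I, Complex.norm_intCast, abs_of_pos Real.pi_pos, mul_one] at h1
  have h2 := Real.pi_gt_d2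
  have h3 : 2 * 3.14 * (2 / 5) * ‖phi k w‖ ≤ 2 * Real.pi * |(k:ℝ)| * |w| * ‖phi k w‖ := by
    rw [mul_assoc (2 * Real.pi)]
    gcongr
  norm_num at h3
  linarith [norm_nonneg (phi k w)]

/-- Lower bound for the symbol of the linearised operator. -/
lemma le_lintegral_symbol {α : ℝ} (hα : 0 ≤ α) {k : ℤ} (hk : k ≠ 0) :
    ENNReal.ofReal (9 / 250 * |(k:ℝ)| ^ (α - 1)) ≤
      ∫⁻ w in Ioo (-(1:ℝ)/2) (1/2), ENNReal.ofReal (|w| ^ (-α) * (1 - ‖phi k w‖ ^ 2)) := by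
  have hk1 : (1:ℝ) ≤ |(k:ℝ)| := by exact_mod_cast Int.one_le_abs hk
  set K : ℝ := |(k:ℝ)| with hK
  have hK0 : 0 < K := by linarith
  have hsub : Ioo (2 / (5 * K)) (1 / (2 * K)) ⊆ Ioo (-(1:ℝ)/2) (1/2) := by
    intro w hw
    have h1 : 0 < 2 / (5 * K) := by positivity
    have h2 : 1 / (2 * K) ≤ 1 / 2 := by
      apply one_div_le_one_div_of_le <;> linarith
    exact ⟨by linarith [hw.1], by linarith [hw.2]⟩
  refine le_trans ?_ (lintegral_mono_set hsub)
  have hle : ∫⁻ _ in Ioo (2 / (5 * K)) (1 / (2 * K)), ENNReal.ofReal ((K ^ α) * (9 / 25)) ≤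
      ∫⁻ w in Ioo (2 / (5 * K)) (1 / (2 * K)), ENNReal.ofReal (|w| ^ (-α) * (1 - ‖phi k w‖ ^ 2)) := by
    refine setLIntegral_mono' measurableSet_Ioo fun w hw => ENNReal.ofReal_le_ofReal ?_
    have hw0 : 0 < w := lt_trans (by positivity) hw.1
    have h1 : 2 / 5 ≤ K * |w| := by
      rw [abs_of_pos hw0]
      have := hw.1
      rw [div_lt_iff₀ (by positivity)] at this
      linarith
    have h2 := norm_phi_le h1
    have h3 : ‖phi k w‖ ^ 2 ≤ (4 / 5) ^ 2 := by gcongr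
    gcongr
    · rw [Real.rpow_neg (abs_nonneg _), ← Real.inv_rpow (abs_nonneg _)]
      have h4 : K ≤ |w|⁻¹ := by
        rw [abs_of_pos hw0, le_inv_comm₀ hK0 hw0]
        refine hw.2.le.trans ?_
        rw [inv_eq_one_div]
        apply one_div_le_one_div_of_le hK0; linarith
      gcongr
    · norm_num at h3 ⊢; linarith
  refine le_trans ?_ hle
  rw [setLIntegral_const, Real.volume_Ioo, ← ENNReal.ofReal_mul (by positivity)]
  apply le_of_eq
  congr 1
  rw [Real.rpow_sub_one hK0.ne']
  field_simp
  norm_num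

/-- Termwise differentiation of Fourier series. -/
lemma contDiff_of_summable_fc {F : ℝ → ℂ} (hF : Continuous F) (hp : Function.Periodic F 1) (N : ℕ)
    (hs : Summable (fun k : ℤ => (1 + |(k:ℝ)|) ^ N * ‖fc F k‖)) : ContDiff ℝ N F := by
  have hs0 : Summable (fun k : ℤ => ‖fc F k‖) := by
    refine hs.of_nonneg_of_le (fun _ => norm_nonneg _) fun k => ?_
    have : (1:ℝ) ≤ (1 + |(k:ℝ)|) ^ N := one_le_pow₀ (by linarith [abs_nonneg (k:ℝ)])
    nlinarith [norm_nonneg (fc F k)]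
  have hFe : F = fun u => ∑' k, fc F k * ee k u := by
    funext u; exact (hasSum_fc hF hp hs0 u).tsum_eq.symm
  have hit : ∀ (k : ℤ) (m : ℕ), iteratedDeriv m (ee k) =
      fun u => (2 * Real.pi * Complex.I * k) ^ m * ee k u := fun k m => by
    induction m with
    | zero => simp
    | succ m ih =>
      rw [iteratedDeriv_succ, ih]
      funext u
      rw [((hasDerivAt_ee k u).const_mul _).deriv]
      ring
  have hcd : ∀ k, ContDiff ℝ N (ee k) := fun k => by
    have h1 : ContDiff ℝ N (fun u : ℝ => (u:ℂ)) := Complex.ofRealCLM.contDiff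
    exact (contDiff_const.mul h1).cexp
  rw [hFe]
  refine contDiff_tsum (f := fun (k : ℤ) u => fc F k * ee k u) (v := fun m (k : ℤ) => (2 * Real.pi) ^ m * ((1 + |(k:ℝ)|) ^ N * ‖fc F k‖))
    (fun k => contDiff_const.mul (hcd k)) (fun m _ => hs.mul_left _) fun m k u hm => ?_
  rw [norm_iteratedFDeriv_eq_norm_iteratedDeriv, iteratedDeriv_const_mul_field, hit]
  simp only [norm_mul, norm_pow, Complex.norm_ofNat, Complex.norm_real, Real.norm_eq_abs,
    Complex.norm_I, Complex.norm_intCast, abs_of_pos Real.pi_pos, mul_one, norm_ee]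
  have hm' : m ≤ N := by exact_mod_cast hm
  have : |(k:ℝ)| ^ m ≤ (1 + |(k:ℝ)|) ^ N :=
    (pow_le_pow_left₀ (abs_nonneg _) (by linarith) m).trans
      (pow_le_pow_right₀ (by linarith [abs_nonneg (k:ℝ)]) hm')
  rw [mul_pow]
  calc ‖fc F k‖ * ((2 * Real.pi) ^ m * |(k:ℝ)| ^ m)
      ≤ ‖fc F k‖ * ((2 * Real.pi) ^ m * (1 + |(k:ℝ)|) ^ N) := by gcongr
    _ = _ := by ring

/-! ### Arc-length parametrised curves of finite energy -/

/-- The `j`-th component, as a complex valued function. -/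
def cp (g : ℝ → Rn n) (j : Fin n) (u : ℝ) : ℂ := (g u j : ℝ)

/-- The average of `g` over the segment from `u` to `u + w`. -/
def av {E : Type*} [NormedAddCommGroup E] [NormedSpace ℝ E] (g : ℝ → E) (u w : ℝ) : E :=
  ∫ s in (0:ℝ)..1, g (u + s * w)

lemma sum_norm_cp_sq (g : ℝ → Rn n) (u : ℝ) : ∑ j, ‖cp g j u‖ ^ 2 = ‖g u‖ ^ 2 := by
  rw [EuclideanSpace.norm_sq_eq]
  simp [cp]

lemma norm_cp_le (g : ℝ → Rn n) (j : Fin n) (u : ℝ) : ‖cp g j u‖ ≤ ‖g u‖ := by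
  simpa [cp] using PiLp.norm_apply_le (g u) j

lemma deriv_periodic {γ : ℝ → Rn n} (hper : Function.Periodic γ 1) :
    Function.Periodic (deriv γ) 1 := fun u => by
  rw [← deriv_comp_add_const]
  congr 1
  exact funext hper

lemma fc_of_hasDerivAt {F F' : ℝ → ℂ} (hF : ∀ u, HasDerivAt F (F' u) u)
    (hp : Function.Periodic F 1) (hi : IntervalIntegrable F' volume 0 1) (k : ℤ) :
    fc F' k = 2 * Real.pi * Complex.I * k * fc F k := by
  have hc : Continuous F := continuous_iff_continuousAt.mpr fun u => (hF u).continuousAt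
  have h1 : IntervalIntegrable (fun u => F' u * ee (-k) u) volume 0 1 :=
    hi.mul_continuousOn (continuous_ee _).continuousOn
  have h2 : IntervalIntegrable
      (fun u => F u * (2 * Real.pi * Complex.I * (-k : ℤ) * ee (-k) u)) volume 0 1 := by
    apply Continuous.intervalIntegrable; fun_prop
  have h := intervalIntegral.integral_eq_sub_of_hasDerivAt (a := 0) (b := 1)
    (fun u _ => (hF u).mul (hasDerivAt_ee (-k) u)) (h1.add h2)
  rw [intervalIntegral.integral_add h1 h2] at h
  have h3 : F 1 = F 0 := by simpa using hp 0
  have h4 : ∫ u in (0:ℝ)..1, F u * (2 * Real.pi * Complex.I * (-k : ℤ) * ee (-k) u) =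
      -(2 * Real.pi * Complex.I * k) * fc F k := by
    rw [fc, ← intervalIntegral.integral_const_mul]
    congr 1; funext u; push_cast; ring
  simp only [h4, h3, Pi.mul_apply, ee_one_right, ee_zero_right, sub_self] at h
  rw [fc]
  linear_combination h

namespace ArcLengthParam

variable {γ : ℝ → Rn n}

lemma differentiable (h : ArcLengthParam γ) : Differentiable ℝ γ := fun u => by
  by_contra hu
  have := h u
  simp [deriv_zero_of_not_differentiableAt hu] at this

lemma norm_sub_le (h : ArcLengthParam γ) (u w : ℝ) : ‖γ (u + w) - γ u‖ ≤ |w| := by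
  have := Convex.norm_image_sub_le_of_norm_deriv_le (𝕜 := ℝ) (f := γ) (s := univ) (C := 1)
    (x := u) (y := u + w) (fun x _ => h.differentiable x) (fun x _ => (h x).le) convex_univ
    (mem_univ _) (mem_univ _)
  simpa using this

lemma idist_eq (h : ArcLengthParam γ) {u w : ℝ} (hw : |w| ≤ 1 / 2) : idist γ u w = |w| := by
  have h1 : ∀ θ, ‖deriv γ θ‖ = 1 := h
  simp only [idist, arcLen, curveLen, h1]
  simp
  linarith

lemma sub_ne_zero (hinj : PerInjective γ) {u w : ℝ} (hw : w ≠ 0) (hw2 : |w| < 1) :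
    γ (u + w) - γ u ≠ 0 := fun h0 => by
  obtain ⟨k, hk⟩ := hinj u (u + w) (sub_eq_zero.mp h0).symm
  have hwk : w = k := by linarith
  rw [hwk] at hw hw2
  have : |k| < 1 := by exact_mod_cast hw2
  exact hw (by simpa using Int.abs_lt_one_iff.mp this)

/-- The energy density dominates `|w|^(-α) (1 - |Δγ|²/w²)`. -/
lemma le_ohIntegrand (h : ArcLengthParam γ) (hinj : PerInjective γ) {α : ℝ} (hα : 2 ≤ α) {u w : ℝ}
    (hw : |w| ≤ 1 / 2) :
    |w| ^ (-α) * (1 - ‖γ (u + w) - γ u‖ ^ 2 / w ^ 2) ≤ ohIntegrand α γ u w := by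
  have h1 : ∀ θ, ‖deriv γ θ‖ = 1 := h
  rcases eq_or_ne w 0 with rfl | hw0
  · have h0 : ‖γ u - γ u‖ = 0 := by simp
    simp only [ohIntegrand, h.idist_eq hw, h1]
    simp [Real.zero_rpow (show -α ≠ 0 by linarith)]
  have hwp : 0 < |w| := abs_pos.mpr hw0
  have hd : 0 < ‖γ (u + w) - γ u‖ := norm_pos_iff.mpr (sub_ne_zero hinj hw0 (by linarith))
  simp only [ohIntegrand, h.idist_eq hw, h1, mul_one]
  set t : ℝ := ‖γ (u + w) - γ u‖ / |w| with ht
  have ht0 : 0 < t := by positivity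
  have ht1 : t ≤ 1 := (div_le_one hwp).mpr (h.norm_sub_le u w)
  have hd' : ‖γ (u + w) - γ u‖ = |w| * t := by rw [ht]; field_simp
  rw [hd', Real.mul_rpow hwp.le ht0.le, mul_pow, sq_abs, mul_div_cancel_left₀ _ (by positivity),
    one_div, one_div, mul_inv, ← Real.rpow_neg hwp.le, ← Real.rpow_neg ht0.le, ← mul_sub_one]
  refine mul_le_mul_of_nonneg_left ?_ (by positivity)
  have h2 : t ^ (-(2:ℝ)) ≤ t ^ (-α) := Real.rpow_le_rpow_of_exponent_ge ht0 ht1 (by linarith)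
  have h3 : t ^ (-(2:ℝ)) = (t ^ 2)⁻¹ := by
    rw [Real.rpow_neg ht0.le]; norm_cast
  rw [h3] at h2
  have h4 : 2 - t ^ 2 ≤ (t ^ 2)⁻¹ := by
    have h5 : (t ^ 2) * (t ^ 2)⁻¹ = 1 := mul_inv_cancel₀ (by positivity)
    have h6 : 0 < (t ^ 2)⁻¹ := by positivity
    nlinarith [sq_nonneg (t ^ 2 - 1), sq_nonneg ((t ^ 2)⁻¹ - 1)]
  linarith

lemma hasDerivAt_cp (h : ArcLengthParam γ) (j : Fin n) (u : ℝ) :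
    HasDerivAt (cp γ j) (cp (deriv γ) j u) u := by
  have h1 : HasDerivAt (fun u => γ u j) (deriv γ u j) u :=
    (EuclideanSpace.proj (𝕜 := ℝ) j).hasFDerivAt.comp_hasDerivAt u (h.differentiable u).hasDerivAt
  exact h1.ofReal_comp

lemma aestronglyMeasurable_cp_deriv (j : Fin n) (μ : Measure ℝ) :
    AEStronglyMeasurable (cp (deriv γ) j) μ := by
  have h1 : Measurable (deriv γ) := measurable_deriv γ
  have h2 : Measurable (fun u => (deriv γ u) j) := by fun_prop
  exact (Complex.measurable_ofReal.comp h2).aestronglyMeasurable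

lemma intervalIntegrable_cp_deriv (h : ArcLengthParam γ) (j : Fin n) :
    IntervalIntegrable (cp (deriv γ) j) volume 0 1 := by
  rw [intervalIntegrable_iff_integrableOn_Ioc_of_le zero_le_one]
  refine Measure.integrableOn_of_bounded (M := 1) (by simp) (aestronglyMeasurable_cp_deriv j _)
    (Eventually.of_forall fun u => ?_)
  exact (norm_cp_le _ _ _).trans (h u).le

lemma fc_cp_deriv (h : ArcLengthParam γ) (hper : Function.Periodic γ 1) (j : Fin n) (k : ℤ) :
    fc (cp (deriv γ) j) k = 2 * Real.pi * Complex.I * k * fc (cp γ j) k :=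
  fc_of_hasDerivAt (h.hasDerivAt_cp j) (fun u => by simp [cp, hper u])
    (h.intervalIntegrable_cp_deriv j) k

lemma hasSum_symbol (h : ArcLengthParam γ) (hper : Function.Periodic γ 1) {w : ℝ} (hw : w ≠ 0) :
    HasSum (fun k => (1 - ‖phi k w‖ ^ 2) * ∑ j, ‖fc (cp (deriv γ) j) k‖ ^ 2)
      (∫ u in (0:ℝ)..1, (1 - ‖γ (u + w) - γ u‖ ^ 2 / w ^ 2)) := by
  have hγc : Continuous γ := h.differentiable.continuous
  have hcc : ∀ j, Continuous (cp γ j) := fun j => by unfold cp; fun_prop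
  have h1 : ∀ j, HasSum (fun k => ‖fc (cp (deriv γ) j) k‖ ^ 2)
      (∫ u in (0:ℝ)..1, ‖cp (deriv γ) j u‖ ^ 2) := fun j =>
    hasSum_sq_fc (aestronglyMeasurable_cp_deriv j _) (C := 1)
      fun u => (norm_cp_le _ _ _).trans (h u).le
  have h2 : ∀ j, HasSum (fun k => ‖phi k w‖ ^ 2 * ‖fc (cp (deriv γ) j) k‖ ^ 2)
      (∫ u in (0:ℝ)..1, ‖cp γ j (u + w) - cp γ j u‖ ^ 2 / w ^ 2) := fun j => by
    have hb : ∀ u, ‖cp γ j (u + w) - cp γ j u‖ ≤ |w| := fun u => by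
      refine le_trans ?_ (h.norm_sub_le u w)
      have := norm_cp_le (fun u => γ (u + w) - γ u) j u
      simpa [cp] using this
    have h3 := hasSum_sq_fc (F := fun u => cp γ j (u + w) - cp γ j u)
      (by have := hcc j; exact Continuous.aestronglyMeasurable (by fun_prop)) hb
    have h4 : ∀ k, fc (fun u => cp γ j (u + w) - cp γ j u) k =
        w * phi k w * fc (cp (deriv γ) j) k := fun k => by
      have := hcc j
      rw [fc_sub (F := fun u => cp γ j (u + w)) (by fun_prop) this,
        fc_shift (fun u => by simp [cp, hper u]), h.fc_cp_deriv hper, ← sub_one_mul, ← mul_phi]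
      ring
    simp only [h4, norm_mul, mul_pow, Complex.norm_real, Real.norm_eq_abs, sq_abs] at h3
    have h5 := h3.div_const (w ^ 2)
    rw [intervalIntegral.integral_div]
    have h6 : ∀ k, w ^ 2 * ‖phi k w‖ ^ 2 * ‖fc (cp (deriv γ) j) k‖ ^ 2 / w ^ 2 =
        ‖phi k w‖ ^ 2 * ‖fc (cp (deriv γ) j) k‖ ^ 2 := fun k => by field_simp
    simpa only [h6] using h5
  have h3 := hasSum_sum (s := Finset.univ) fun j _ => (h1 j).sub (h2 j)
  have hi1 : ∀ j, IntervalIntegrable (fun u => ‖cp (deriv γ) j u‖ ^ 2) volume 0 1 := fun j => by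
    rw [intervalIntegrable_iff_integrableOn_Ioc_of_le zero_le_one]
    refine Measure.integrableOn_of_bounded (M := 1) (by simp)
      ((aestronglyMeasurable_cp_deriv j _).norm.pow 2) (Eventually.of_forall fun u => ?_)
    have := (norm_cp_le (deriv γ) j u).trans (h u).le
    simpa using this
  have hi2 : ∀ j, IntervalIntegrable (fun u => ‖cp γ j (u + w) - cp γ j u‖ ^ 2 / w ^ 2) volume 0 1 :=
    fun j => by have := hcc j; apply Continuous.intervalIntegrable; fun_prop
  have h4 : ∑ j, ((∫ u in (0:ℝ)..1, ‖cp (deriv γ) j u‖ ^ 2) -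
      ∫ u in (0:ℝ)..1, ‖cp γ j (u + w) - cp γ j u‖ ^ 2 / w ^ 2) =
      ∫ u in (0:ℝ)..1, (1 - ‖γ (u + w) - γ u‖ ^ 2 / w ^ 2) := by
    simp only [← intervalIntegral.integral_sub (hi1 _) (hi2 _)]
    rw [← intervalIntegral.integral_finsetSum fun j _ => (hi1 j).sub (hi2 j)]
    congr 1
    funext u
    have h5 := sum_norm_cp_sq (fun u => γ (u + w) - γ u) u
    have h6 : ∀ j, cp (fun u => γ (u + w) - γ u) j u = cp γ j (u + w) - cp γ j u := fun j => by
      simp [cp]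
    simp only [h6] at h5
    rw [Finset.sum_sub_distrib, sum_norm_cp_sq, ← Finset.sum_div, h5, h u, one_pow]
  rw [h4] at h3
  have h5 : ∀ k, ∑ j, (‖fc (cp (deriv γ) j) k‖ ^ 2 - ‖phi k w‖ ^ 2 * ‖fc (cp (deriv γ) j) k‖ ^ 2) =
      (1 - ‖phi k w‖ ^ 2) * ∑ j, ‖fc (cp (deriv γ) j) k‖ ^ 2 := fun k => by
    rw [Finset.mul_sum]
    exact Finset.sum_congr rfl fun j _ => by ring
  simpa only [h5] using h3

/-- Finite energy controls a fractional Sobolev norm of the tangent. -/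
lemma summable_of_energy (h : ArcLengthParam γ) (hper : Function.Periodic γ 1)
    (hinj : PerInjective γ) {α : ℝ} (hα : 2 ≤ α) (hfin : oharaE α γ < ⊤) :
    Summable (fun k : ℤ => |(k:ℝ)| ^ (α - 1) * ∑ j, ‖fc (cp (deriv γ) j) k‖ ^ 2) := by
  have hγc : Continuous γ := h.differentiable.continuous
  set A : ℤ → ℝ := fun k => ∑ j, ‖fc (cp (deriv γ) j) k‖ ^ 2 with hA
  have hA0 : ∀ k, 0 ≤ A k := fun k => Finset.sum_nonneg fun j _ => by positivity
  have hphi : ∀ k w, 0 ≤ 1 - ‖phi k w‖ ^ 2 := fun k w => by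
    have := pow_le_one₀ (n := 2) (norm_nonneg _) (norm_phi_le_one k w)
    linarith
  have key : ∀ w : ℝ, ∑' k, ENNReal.ofReal (A k) * ENNReal.ofReal (|w| ^ (-α) * (1 - ‖phi k w‖ ^ 2))
      ≤ ∫⁻ u in Ioc (0:ℝ) 1,
        ENNReal.ofReal (|w| ^ (-α) * (1 - ‖γ (u + w) - γ u‖ ^ 2 / w ^ 2)) := fun w => by
    rcases eq_or_ne w 0 with rfl | hw
    · simp [Real.zero_rpow (show -α ≠ 0 by linarith)]
    have h1 := (h.hasSum_symbol hper hw).mul_left (|w| ^ (-α))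
    have h2 : ∀ k, ENNReal.ofReal (A k) * ENNReal.ofReal (|w| ^ (-α) * (1 - ‖phi k w‖ ^ 2)) =
        ENNReal.ofReal (|w| ^ (-α) * ((1 - ‖phi k w‖ ^ 2) * A k)) := fun k => by
      rw [← ENNReal.ofReal_mul (hA0 k)]; congr 1; ring
    have h3 : ∀ u, 0 ≤ 1 - ‖γ (u + w) - γ u‖ ^ 2 / w ^ 2 := fun u => by
      rw [sub_nonneg, div_le_one (by positivity), ← sq_abs w]
      exact pow_le_pow_left₀ (norm_nonneg _) (h.norm_sub_le u w) 2
    simp only [h2]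
    rw [← ENNReal.ofReal_tsum_of_nonneg _ h1.summable, h1.tsum_eq,
      ← intervalIntegral.integral_const_mul, intervalIntegral.integral_of_le zero_le_one,
      ofReal_integral_eq_lintegral_ofReal]
    · exact (Continuous.integrableOn_Icc (by fun_prop)).mono_set Ioc_subset_Icc_self
    · exact Eventually.of_forall fun u => mul_nonneg (by positivity) (h3 u)
    · exact fun k => mul_nonneg (by positivity) (mul_nonneg (hphi k w) (hA0 k))
  have hlt : ∑' k : ℤ, ENNReal.ofReal (A k * (9 / 250 * |(k:ℝ)| ^ (α - 1))) < ⊤ := by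
    refine lt_of_le_of_lt ?_ hfin
    calc ∑' k : ℤ, ENNReal.ofReal (A k * (9 / 250 * |(k:ℝ)| ^ (α - 1)))
        ≤ ∑' k, ∫⁻ w in Ioo (-(1:ℝ)/2) (1/2),
            ENNReal.ofReal (A k) * ENNReal.ofReal (|w| ^ (-α) * (1 - ‖phi k w‖ ^ 2)) := by
          refine ENNReal.tsum_le_tsum fun k => ?_
          rw [lintegral_const_mul' _ _ ENNReal.ofReal_ne_top, ENNReal.ofReal_mul (hA0 k)]
          rcases eq_or_ne k 0 with rfl | hk
          · simp [Real.zero_rpow (show α - 1 ≠ 0 by linarith)]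
          · gcongr
            exact le_lintegral_symbol (by linarith) hk
      _ = ∫⁻ w in Ioo (-(1:ℝ)/2) (1/2), ∑' k,
            ENNReal.ofReal (A k) * ENNReal.ofReal (|w| ^ (-α) * (1 - ‖phi k w‖ ^ 2)) := by
          rw [lintegral_tsum]
          intro k
          exact Measurable.aemeasurable (by fun_prop)
      _ ≤ ∫⁻ w in Ioo (-(1:ℝ)/2) (1/2), ∫⁻ u in Ioc (0:ℝ) 1,
            ENNReal.ofReal (|w| ^ (-α) * (1 - ‖γ (u + w) - γ u‖ ^ 2 / w ^ 2)) :=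
          lintegral_mono key
      _ = ∫⁻ u in Ioc (0:ℝ) 1, ∫⁻ w in Ioo (-(1:ℝ)/2) (1/2),
            ENNReal.ofReal (|w| ^ (-α) * (1 - ‖γ (u + w) - γ u‖ ^ 2 / w ^ 2)) := by
          rw [lintegral_lintegral_swap]
          exact Measurable.aemeasurable (by unfold Function.uncurry; fun_prop)
      _ ≤ oharaE α γ := by
          unfold oharaE
          refine lintegral_mono fun u => setLIntegral_mono' measurableSet_Ioo fun w hw => ?_
          refine ENNReal.ofReal_le_ofReal (h.le_ohIntegrand hinj hα ?_)
          rw [abs_le]; constructor <;> linarith [hw.1, hw.2]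
  have hs := ENNReal.summable_toReal hlt.ne
  have h1 : ∀ k : ℤ, (ENNReal.ofReal (A k * (9 / 250 * |(k:ℝ)| ^ (α - 1)))).toReal =
      (9 / 250) * (|(k:ℝ)| ^ (α - 1) * A k) := fun k => by
    rw [ENNReal.toReal_ofReal (mul_nonneg (hA0 k) (by positivity))]; ring
  simp only [h1] at hs
  exact (summable_mul_left_iff (by norm_num)).mp hs

end ArcLengthParam

lemma contDiff_of_cp {γ : ℝ → Rn n} {N : WithTop ℕ∞} (h : ∀ j, ContDiff ℝ N (cp γ j)) :
    ContDiff ℝ N γ :=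
  contDiff_euclidean.mpr fun j => Complex.reCLM.contDiff.comp (h j)

section Average

variable {E : Type*} [NormedAddCommGroup E] [NormedSpace ℝ E]

@[fun_prop] lemma Continuous.av {ι : Type*} [TopologicalSpace ι] {g : ℝ → E} {a b : ι → ℝ}
    (hg : Continuous g) (ha : Continuous a) (hb : Continuous b) :
    Continuous (fun x => av g (a x) (b x)) := by
  unfold _root_.av
  apply intervalIntegral.continuous_parametric_intervalIntegral_of_continuous'
  fun_prop

lemma av_periodic {g : ℝ → E} (hg : Function.Periodic g 1) (w : ℝ) :
    Function.Periodic (fun u => av g u w) 1 := fun u => by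
  simp only [av, add_right_comm u 1, hg _]

@[simp] lemma av_zero [CompleteSpace E] (g : ℝ → E) (u : ℝ) : av g u 0 = g u := by simp [av]

lemma norm_av_le {g : ℝ → E} {C : ℝ} (hg : ∀ u, ‖g u‖ ≤ C) (u w : ℝ) : ‖av g u w‖ ≤ C := by
  have := intervalIntegral.norm_integral_le_of_norm_le_const (a := 0) (b := 1)
    (f := fun s => g (u + s * w)) (C := C) (fun s _ => hg _)
  simpa [av] using this

lemma smul_av [CompleteSpace E] {γ g : ℝ → E} (hγ : ∀ u, HasDerivAt γ (g u) u) (hg : Continuous g)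
    (u w : ℝ) : w • av g u w = γ (u + w) - γ u := by
  have h := intervalIntegral.integral_eq_sub_of_hasDerivAt (a := 0) (b := 1)
    (f := fun s : ℝ => γ (u + s * w)) (f' := fun s => w • g (u + s * w))
    (fun s _ => by
      have h1 : HasDerivAt (fun s : ℝ => u + s * w) w s := by
        simpa using ((hasDerivAt_id s).mul_const w).const_add u
      exact (hγ (u + s * w)).scomp s h1)
    (by apply Continuous.intervalIntegrable; fun_prop)
  simp only [one_mul, zero_mul, add_zero] at h
  rw [← h, av, intervalIntegral.integral_smul]

end Average

/-- Unit vector fields along the circle whose averages over arcs do not degenerate. -/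
structure IsTangent (g : ℝ → Rn n) (m : ℝ) : Prop where
  cont : Continuous g
  per : Function.Periodic g 1
  norm_eq : ∀ u, ‖g u‖ = 1
  pos : 0 < m
  le : ∀ u w : ℝ, |w| ≤ 1 / 2 → m ≤ ‖av g u w‖ ^ 2

namespace ArcLengthParam

variable {γ : ℝ → Rn n}

lemma contDiff_one (h : ArcLengthParam γ) (hper : Function.Periodic γ 1)
    (hinj : PerInjective γ) {α : ℝ} (hα : 2 < α) (hfin : oharaE α γ < ⊤) : ContDiff ℝ 1 γ := by
  refine contDiff_of_cp fun j => ?_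
  have hγc : Continuous γ := h.differentiable.continuous
  refine contDiff_of_summable_fc (N := 1) (by unfold cp; fun_prop) (fun u => by simp [cp, hper u]) ?_
  have h1 := h.summable_of_energy hper hinj hα.le hfin
  have h2 : Summable (fun k : ℤ => 1 / |(k:ℝ)| ^ (α - 1)) := by
    simpa using (Real.summable_one_div_int_add_rpow 0 (α - 1)).mpr (by linarith)
  rw [← Set.Finite.summable_compl_iff (Set.finite_singleton (0:ℤ))] at h1 h2 ⊢
  refine (h1.add h2).of_nonneg_of_le (fun k => by simp only [Function.comp]; positivity)
    fun k => ?_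
  have hk : (k:ℤ) ≠ 0 := k.2
  have hk1 : (1:ℝ) ≤ |((k:ℤ):ℝ)| := by exact_mod_cast Int.one_le_abs hk
  have h3 : ‖fc (cp (deriv γ) j) k‖ ^ 2 ≤ ∑ j, ‖fc (cp (deriv γ) j) k‖ ^ 2 :=
    Finset.single_le_sum (f := fun j => ‖fc (cp (deriv γ) j) k‖ ^ 2)
      (fun _ _ => by positivity) (Finset.mem_univ j)
  have h4 : ‖fc (cp (deriv γ) j) k‖ = 2 * Real.pi * |((k:ℤ):ℝ)| * ‖fc (cp γ j) k‖ := by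
    rw [h.fc_cp_deriv hper]
    simp [abs_of_pos Real.pi_pos]
  set K := |((k:ℤ):ℝ)| with hK
  set x := ‖fc (cp (deriv γ) j) k‖ with hx
  set P := K ^ (α - 1) with hP
  have hP0 : 0 < P := by positivity
  have h5 : (1 + K) * ‖fc (cp γ j) k‖ ≤ x := by
    rw [h4]
    have := Real.pi_gt_three
    gcongr
    nlinarith
  have h6 : x ≤ P * x ^ 2 + 1 / P := by
    have h7 : 0 < 1 / P := by positivity
    have h8 : P * (1 / P) = 1 := by field_simp
    nlinarith [mul_nonneg h7.le (sq_nonneg (P * x - 1)), norm_nonneg (fc (cp (deriv γ) j) k)]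
  calc (1 + K) ^ 1 * ‖fc (cp γ j) k‖ ≤ x := by rw [pow_one]; exact h5
    _ ≤ P * x ^ 2 + 1 / P := h6
    _ ≤ P * ∑ j, ‖fc (cp (deriv γ) j) k‖ ^ 2 + 1 / P := by gcongr

lemma exists_isTangent (h : ArcLengthParam γ) (hper : Function.Periodic γ 1)
    (hinj : PerInjective γ) (hγ : ContDiff ℝ 1 γ) : ∃ m, IsTangent (deriv γ) m := by
  have hc : Continuous (deriv γ) := hγ.continuous_deriv le_rfl
  have hpos : ∀ u w : ℝ, |w| ≤ 1 / 2 → 0 < ‖av (deriv γ) u w‖ ^ 2 := fun u w hw => by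
    rcases eq_or_ne w 0 with rfl | hw0
    · simp [h u]
    · have h1 := smul_av (fun u => (h.differentiable u).hasDerivAt) hc u w
      have h2 := sub_ne_zero hinj (u := u) hw0 (by linarith)
      rw [← h1] at h2
      have := right_ne_zero_of_smul h2
      positivity
  obtain ⟨x, hx, hmin⟩ := (isCompact_Icc.prod isCompact_Icc).exists_isMinOn
    (s := Icc (0:ℝ) 1 ×ˢ Icc (-(1/2):ℝ) (1/2)) ⟨(0, 0), by norm_num⟩
    (f := fun x : ℝ × ℝ => ‖av (deriv γ) x.1 x.2‖ ^ 2)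
    (Continuous.continuousOn (by fun_prop))
  refine ⟨‖av (deriv γ) x.1 x.2‖ ^ 2, hc, deriv_periodic hper, h,
    hpos _ _ (abs_le.mpr hx.2), fun u w hw => ?_⟩
  have h1 : av (deriv γ) u w = av (deriv γ) (Int.fract u) w := by
    have := (av_periodic (deriv_periodic hper) w).sub_int_mul_eq ⌊u⌋ (x := u)
    simp only [mul_one] at this
    exact this.symm
  rw [h1]
  exact hmin (a := (Int.fract u, w)) ⟨⟨Int.fract_nonneg _, (Int.fract_lt_one _).le⟩, abs_le.mp hw⟩

end ArcLengthParam

/-! ### The first variation -/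

lemma abs_rpow_neg_sub_le {p μ : ℝ} (hp : 0 ≤ p) (hμ : 0 < μ) {x y : ℝ} (hx : μ ≤ x) (hy : μ ≤ y) :
    |x ^ (-p) - y ^ (-p)| ≤ p * μ ^ (-p - 1) * |x - y| := by
  have := Convex.norm_image_sub_le_of_norm_hasDerivWithin_le (f := fun x : ℝ => x ^ (-p))
    (f' := fun x => -p * x ^ (-p - 1)) (s := Ici μ) (C := p * μ ^ (-p - 1)) (x := y) (y := x)
    (fun z hz => (Real.hasDerivAt_rpow_const
      (Or.inl (hμ.trans_le (mem_Ici.mp hz)).ne')).hasDerivWithinAt)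
    (fun z hz => by
      have hz' : μ ≤ z := hz
      have hz0 : 0 < z := hμ.trans_le hz'
      rw [norm_mul, norm_neg, Real.norm_of_nonneg hp, Real.norm_of_nonneg (by positivity)]
      refine mul_le_mul_of_nonneg_left ?_ hp
      exact Real.rpow_le_rpow_of_nonpos hμ hz' (by linarith))
    (convex_Ici μ) hy hx
  simpa [Real.norm_eq_abs] using this

/-- The difference of powers occurring in the perturbed energy density. -/
def vf (p f b c b' c' q₁ q₂ τ : ℝ) : ℝ :=
  ((f + 2 * τ * b + τ ^ 2 * c) ^ (-p) - (1 + 2 * τ * b' + τ ^ 2 * c') ^ (-p)) *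
    (1 + τ * q₁ + τ ^ 2 * q₂)

/-- The derivative of `vf`. -/
def vf' (p f b c b' c' q₁ q₂ τ : ℝ) : ℝ :=
  (-p * (f + 2 * τ * b + τ ^ 2 * c) ^ (-p - 1) * (2 * b + 2 * τ * c) -
      -p * (1 + 2 * τ * b' + τ ^ 2 * c') ^ (-p - 1) * (2 * b' + 2 * τ * c')) *
    (1 + τ * q₁ + τ ^ 2 * q₂) +
  ((f + 2 * τ * b + τ ^ 2 * c) ^ (-p) - (1 + 2 * τ * b' + τ ^ 2 * c') ^ (-p)) *
    (q₁ + 2 * τ * q₂)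

lemma hasDerivAt_vf {p f b c b' c' q₁ q₂ τ : ℝ} (h1 : 0 < f + 2 * τ * b + τ ^ 2 * c)
    (h2 : 0 < 1 + 2 * τ * b' + τ ^ 2 * c') :
    HasDerivAt (vf p f b c b' c' q₁ q₂) (vf' p f b c b' c' q₁ q₂ τ) τ := by
  have hq : ∀ a b c : ℝ, HasDerivAt (fun τ => a + τ * b + τ ^ 2 * c) (b + 2 * τ * c) τ := fun a b c => by
    have := (((hasDerivAt_id τ).mul_const b).const_add a).add (((hasDerivAt_id τ).pow 2).mul_const c)
    refine (this.congr_deriv (by simp)).congr_of_eventuallyEq ?_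
    exact Eventually.of_forall fun τ => by simp
  have hq' : ∀ a b c : ℝ, HasDerivAt (fun τ => a + 2 * τ * b + τ ^ 2 * c) (2 * b + 2 * τ * c) τ :=
    fun a b c => by
      have := hq a (2 * b) c
      have e : (fun τ => a + 2 * τ * b + τ ^ 2 * c) = fun τ => a + τ * (2 * b) + τ ^ 2 * c := by
        funext τ; ring
      rwa [e]
  have hf := (hq' f b c).rpow_const (p := -p) (Or.inl h1.ne')
  have hm := (hq' 1 b' c').rpow_const (p := -p) (Or.inl h2.ne')
  refine ((hf.sub hm).mul (hq 1 q₁ q₂)).congr_deriv ?_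
  simp only [vf', Pi.sub_apply]
  ring

lemma abs_mul_le_of_abs_le_one {τ x R : ℝ} (hτ : |τ| ≤ 1) (hx : |x| ≤ R) : |τ * x| ≤ R := by
  rw [abs_mul]
  exact (mul_le_of_le_one_left (abs_nonneg x) hτ).trans hx

lemma exists_vf_bound {p m B : ℝ} (hp : 0 ≤ p) (hm : 0 < m) (hm1 : m ≤ 1) (hB : 0 ≤ B) :
    ∃ ε C : ℝ, 0 < ε ∧ ε ≤ 1 ∧ ∀ f b c b' c' q₁ q₂ Z τ : ℝ, m ≤ f → f ≤ 1 → |b| ≤ B → |b'| ≤ B →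
      0 ≤ c → c ≤ B → c' ≤ B → |q₁| ≤ B → |q₂| ≤ B → 1 - f ≤ Z → |b' - b| ≤ Z →
      0 ≤ c' - c → c' - c ≤ Z → |τ| < ε →
      0 < f + 2 * τ * b + τ ^ 2 * c ∧ 0 < 1 + 2 * τ * b' + τ ^ 2 * c' ∧
      |vf' p f b c b' c' q₁ q₂ τ| ≤ C * Z := by
  set μ : ℝ := m / 2 with hμ
  have hμ0 : 0 < μ := by positivity
  set K₀ : ℝ := p * μ ^ (-p - 1) with hK₀
  set K₁ : ℝ := (p + 1) * μ ^ (-(p + 1) - 1) with hK₁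
  have hK₀0 : 0 ≤ K₀ := by positivity
  have hK₁0 : 0 ≤ K₁ := by positivity
  refine ⟨min 1 (m / (4 * (B + 1))), p * (K₁ * 4 * (4 * B) + μ ^ (-p - 1) * 4) * (1 + 2 * B) +
    K₀ * 4 * (3 * B), lt_min one_pos (by positivity), min_le_left _ _, ?_⟩
  intro f b c b' c' q₁ q₂ Z τ hmf hf1 hb hb' hc hcB hc'B hq₁ hq₂ hZf hZb hcc hZc hτ
  have hτ1 : |τ| ≤ 1 := hτ.le.trans (min_le_left _ _)
  have hτ2 : |τ| * (4 * (B + 1)) < m := by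
    rw [← lt_div_iff₀ (by positivity)]; exact hτ.trans_le (min_le_right _ _)
  have hZ : 0 ≤ Z := hcc.trans hZc
  have hsq : τ ^ 2 ≤ 1 := by rw [← sq_abs]; exact pow_le_one₀ (abs_nonneg _) hτ1
  have hτb : ∀ b, |b| ≤ B → |τ * b| ≤ m / 4 := fun b hb => by
    rw [abs_mul]
    have h1 := mul_le_mul_of_nonneg_left hb (abs_nonneg τ)
    linarith [abs_nonneg τ]
  have h1 := abs_le.mp (hτb b hb)
  have h2 := abs_le.mp (hτb b' hb')
  have hc' : 0 ≤ c' := by linarith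
  have hτc : 0 ≤ τ ^ 2 * c := by positivity
  have hτc' : 0 ≤ τ ^ 2 * c' := by positivity
  have hx : μ ≤ f + 2 * τ * b + τ ^ 2 * c := by rw [hμ]; linarith [h1.1]
  have hy : μ ≤ 1 + 2 * τ * b' + τ ^ 2 * c' := by rw [hμ]; linarith [h2.1]
  refine ⟨hμ0.trans_le hx, hμ0.trans_le hy, ?_⟩
  set x := f + 2 * τ * b + τ ^ 2 * c with hxdef
  set y := 1 + 2 * τ * b' + τ ^ 2 * c' with hydef
  have hxy : |x - y| ≤ 4 * Z := by
    have e : x - y = -(1 - f) - 2 * (τ * (b' - b)) - τ ^ 2 * (c' - c) := by rw [hxdef, hydef]; ring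
    have i1 : |τ * (b' - b)| ≤ Z := abs_mul_le_of_abs_le_one hτ1 hZb
    have i2 : τ ^ 2 * (c' - c) ≤ Z := (mul_le_of_le_one_left hcc hsq).trans hZc
    have i3 : 0 ≤ τ ^ 2 * (c' - c) := by positivity
    have i4 := abs_le.mp i1
    rw [e, abs_le]
    constructor <;> linarith [i4.1, i4.2]
  have hD := (abs_rpow_neg_sub_le hp hμ0 hx hy).trans (mul_le_mul_of_nonneg_left hxy hK₀0)
  have hD' : |x ^ (-p - 1) - y ^ (-p - 1)| ≤ K₁ * (4 * Z) := by
    rw [show -p - 1 = -(p + 1) by ring]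
    exact (abs_rpow_neg_sub_le (p := p + 1) (by linarith) hμ0 hx hy).trans
      (mul_le_mul_of_nonneg_left hxy hK₁0)
  have hlin : ∀ b c : ℝ, |b| ≤ B → |c| ≤ B → |2 * b + 2 * τ * c| ≤ 4 * B := fun b c hb hc => by
    have i1 : |τ * c| ≤ B := abs_mul_le_of_abs_le_one hτ1 hc
    have i2 := abs_le.mp i1
    have i3 := abs_le.mp hb
    rw [abs_le]; constructor <;> linarith [i2.1, i2.2, i3.1, i3.2]
  have hf' := hlin b c hb (by rwa [abs_of_nonneg hc])
  have hdiff : |(2 * b' + 2 * τ * c') - (2 * b + 2 * τ * c)| ≤ 4 * Z := by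
    have i1 : |τ * (c' - c)| ≤ Z := abs_mul_le_of_abs_le_one hτ1
      (by rwa [abs_of_nonneg hcc])
    have i2 := abs_le.mp i1
    have i3 := abs_le.mp hZb
    rw [abs_le]; constructor <;> linarith [i2.1, i2.2, i3.1, i3.2]
  have hy' : y ^ (-p - 1) ≤ μ ^ (-p - 1) := Real.rpow_le_rpow_of_nonpos hμ0 hy (by linarith)
  have hy0 : 0 ≤ y ^ (-p - 1) := Real.rpow_nonneg (hμ0.le.trans hy) _
  have hmain : |-p * x ^ (-p - 1) * (2 * b + 2 * τ * c) - -p * y ^ (-p - 1) * (2 * b' + 2 * τ * c')|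
      ≤ p * (K₁ * 4 * (4 * B) + μ ^ (-p - 1) * 4) * Z := by
    have e : -p * x ^ (-p - 1) * (2 * b + 2 * τ * c) - -p * y ^ (-p - 1) * (2 * b' + 2 * τ * c') =
      p * (y ^ (-p - 1) * ((2 * b' + 2 * τ * c') - (2 * b + 2 * τ * c)) -
        (x ^ (-p - 1) - y ^ (-p - 1)) * (2 * b + 2 * τ * c)) := by ring
    rw [e, abs_mul, abs_of_nonneg hp, mul_assoc p _ Z]
    refine mul_le_mul_of_nonneg_left ((norm_sub_le (E := ℝ) _ _).trans ?_) hp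
    rw [Real.norm_eq_abs, Real.norm_eq_abs, abs_mul, abs_mul, abs_of_nonneg hy0]
    calc y ^ (-p - 1) * |(2 * b' + 2 * τ * c') - (2 * b + 2 * τ * c)| +
          |x ^ (-p - 1) - y ^ (-p - 1)| * |2 * b + 2 * τ * c|
        ≤ μ ^ (-p - 1) * (4 * Z) + (K₁ * (4 * Z)) * (4 * B) := by gcongr
      _ = _ := by ring
  have hq : |1 + τ * q₁ + τ ^ 2 * q₂| ≤ 1 + 2 * B := by
    have i1 : |τ * q₁| ≤ B := abs_mul_le_of_abs_le_one hτ1 hq₁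
    have i2 : |τ ^ 2 * q₂| ≤ B := abs_mul_le_of_abs_le_one
      (by rwa [abs_of_nonneg (sq_nonneg τ)]) hq₂
    have i3 := abs_le.mp i1
    have i4 := abs_le.mp i2
    rw [abs_le]; constructor <;> linarith [i3.1, i3.2, i4.1, i4.2]
  have hq' : |q₁ + 2 * τ * q₂| ≤ 3 * B := by
    have i1 : |τ * q₂| ≤ B := abs_mul_le_of_abs_le_one hτ1 hq₂
    have i2 := abs_le.mp i1
    have i3 := abs_le.mp hq₁
    rw [abs_le]; constructor <;> linarith [i2.1, i2.2, i3.1, i3.2]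
  rw [vf', ← hxdef, ← hydef]
  refine (abs_add_le _ _).trans ?_
  rw [abs_mul, abs_mul]
  calc _ ≤ (p * (K₁ * 4 * (4 * B) + μ ^ (-p - 1) * 4) * Z) * (1 + 2 * B) +
        (K₀ * (4 * Z)) * (3 * B) := by gcongr
    _ = _ := by ring

section Variance

variable {E : Type*} [NormedAddCommGroup E] [InnerProductSpace ℝ E] {g v : ℝ → E}

lemma av_add_smul (hg : Continuous g) (hv : Continuous v) (τ u w : ℝ) :
    av (fun x => g x + τ • v x) u w = av g u w + τ • av v u w := by
  unfold av
  rw [intervalIntegral.integral_add, intervalIntegral.integral_smul]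
  · apply Continuous.intervalIntegrable; fun_prop
  · apply Continuous.intervalIntegrable; fun_prop

lemma inner_av [CompleteSpace E] (hg : Continuous g) (a : E) (u w : ℝ) :
    ⟪av g u w, a⟫ = av (fun x => ⟪g x, a⟫) u w := by
  have := (innerSL ℝ a).intervalIntegral_comp_comm (μ := volume) (a := 0) (b := 1)
    (f := fun s => g (u + s * w)) (by apply Continuous.intervalIntegrable; fun_prop)
  simp only [innerSL_apply_apply] at this
  simp only [av, real_inner_comm a]
  exact this.symm

lemma norm_add_smul_sq (a b : E) (τ : ℝ) :
    ‖a + τ • b‖ ^ 2 = ‖a‖ ^ 2 + 2 * τ * ⟪a, b⟫ + τ ^ 2 * ‖b‖ ^ 2 := by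
  rw [norm_add_sq_real, inner_smul_right, norm_smul, mul_pow, Real.norm_eq_abs, sq_abs]
  ring

lemma av_norm_add_smul_sq (hg : Continuous g) (hv : Continuous v) (τ u w : ℝ) :
    av (fun x => ‖g x + τ • v x‖ ^ 2) u w =
      av (fun x => ‖g x‖ ^ 2) u w + 2 * τ * av (fun x => ⟪g x, v x⟫) u w +
        τ ^ 2 * av (fun x => ‖v x‖ ^ 2) u w := by
  simp only [norm_add_smul_sq]
  unfold av
  rw [intervalIntegral.integral_add, intervalIntegral.integral_add,
    intervalIntegral.integral_const_mul, intervalIntegral.integral_const_mul]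
  all_goals apply Continuous.intervalIntegrable; fun_prop

lemma av_norm_sub_sq [CompleteSpace E] (hg : Continuous g) (a : E) (u w : ℝ) :
    av (fun x => ‖g x - a‖ ^ 2) u w = av (fun x => ‖g x‖ ^ 2) u w - 2 * ⟪av g u w, a⟫ + ‖a‖ ^ 2 := by
  have := av_norm_add_smul_sq hg (continuous_const (y := a)) (-1) u w
  simp only [← sub_eq_add_neg, neg_smul, one_smul] at this
  rw [this, inner_av hg]
  simp [av]
  ring

lemma av_nonneg {φ : ℝ → ℝ} (h : ∀ x, 0 ≤ φ x) (u w : ℝ) : 0 ≤ av φ u w :=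
  intervalIntegral.integral_nonneg zero_le_one fun _ _ => h _

lemma norm_av_sq_le [CompleteSpace E] (hg : Continuous g) (u w : ℝ) :
    ‖av g u w‖ ^ 2 ≤ av (fun x => ‖g x‖ ^ 2) u w := by
  have h1 := av_norm_sub_sq hg (av g u w) u w
  have h2 := av_nonneg (φ := fun x => ‖g x - av g u w‖ ^ 2) (fun x => by positivity) u w
  rw [real_inner_self_eq_norm_sq] at h1
  linarith

lemma av_norm_sq_sub_le [CompleteSpace E] (hv : Continuous v) {L : ℝ} (hL : ∀ x y, ‖v x - v y‖ ≤ L * |x - y|)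
    (u w : ℝ) : av (fun x => ‖v x‖ ^ 2) u w - ‖av v u w‖ ^ 2 ≤ L ^ 2 * w ^ 2 := by
  have h1 := av_norm_sub_sq hv (v u) u w
  have h2 : av (fun x => ‖v x - v u‖ ^ 2) u w ≤ L ^ 2 * w ^ 2 := by
    have := intervalIntegral.norm_integral_le_of_norm_le_const (a := 0) (b := 1)
      (f := fun s => ‖v (u + s * w) - v u‖ ^ 2) (C := L ^ 2 * w ^ 2) (fun s hs => by
        rw [uIoc_of_le zero_le_one] at hs
        have h3 := hL (u + s * w) u
        rw [add_sub_cancel_left] at h3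
        have h4 : ‖v (u + s * w) - v u‖ ^ 2 ≤ (L * |s * w|) ^ 2 := by gcongr
        rw [mul_pow, sq_abs, mul_pow] at h4
        rw [Real.norm_of_nonneg (by positivity)]
        refine h4.trans ?_
        gcongr
        exact mul_le_of_le_one_left (sq_nonneg w) (pow_le_one₀ hs.1.le hs.2))
    simp only [sub_zero, abs_one, mul_one] at this
    exact (le_abs_self _).trans this
  have h3 := norm_sub_sq_real (av v u w) (v u)
  have h4 := sq_nonneg ‖av v u w - v u‖
  linarith

lemma abs_av_inner_sub_le [CompleteSpace E] (hg : Continuous g) (hv : Continuous v) (u w : ℝ) :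
    |av (fun x => ⟪g x, v x⟫) u w - ⟪av g u w, av v u w⟫| ≤
      (av (fun x => ‖g x‖ ^ 2) u w - ‖av g u w‖ ^ 2) +
        (av (fun x => ‖v x‖ ^ 2) u w - ‖av v u w‖ ^ 2) := by
  have key : ∀ τ : ℝ, ‖av (fun x => g x + τ • v x) u w‖ ^ 2 ≤ av (fun x => ‖g x + τ • v x‖ ^ 2) u w :=
    fun τ => norm_av_sq_le (by fun_prop) u w
  simp only [av_norm_add_smul_sq hg hv, av_add_smul hg hv] at key
  simp only [norm_add_smul_sq (av g u w)] at key
  have h1 := key 1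
  have h2 := key (-1)
  have h3 := norm_av_sq_le hg u w
  have h4 := norm_av_sq_le hv u w
  rw [abs_le]
  constructor <;> linarith

end Variance

lemma integrableOn_abs_rpow {r : ℝ} (hr : -1 < r) :
    IntegrableOn (fun w : ℝ => |w| ^ r) (Ioo (-(1:ℝ)/2) (1/2)) := by
  have h1 : IntervalIntegrable (fun w : ℝ => |w| ^ r) volume 0 (1/2) :=
    (intervalIntegral.intervalIntegrable_rpow' hr).congr fun x hx => by
      rw [uIoc_of_le (by norm_num)] at hx
      simp only [abs_of_pos hx.1]
  have h2 : IntervalIntegrable (fun w : ℝ => |w| ^ r) volume (-(1/2)) 0 := by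
    have := (h1.comp_sub_left 0).symm
    simpa using this
  have h3 := (intervalIntegrable_iff_integrableOn_Ioc_of_le (by norm_num)).mp (h2.trans h1)
  rw [neg_div]
  exact h3.mono_set Ioo_subset_Ioc_self

lemma av_pow_sq_le {φ : ℝ → ℝ} (hφ : Continuous φ) (u w : ℝ) :
    av φ u w ^ 2 ≤ av (fun x => φ x ^ 2) u w := by
  have := norm_av_sq_le hφ u w
  simpa [Real.norm_eq_abs, sq_abs] using this

lemma abs_av_sub_one_le {φ : ℝ → ℝ} (hφ : Continuous φ) {κ : ℝ} (h : ∀ x, |φ x - 1| ≤ κ) (u w : ℝ) :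
    |av φ u w - 1| ≤ κ := by
  have h1 := norm_av_le (g := fun x => φ x - 1) h u w
  have h2 : av (fun x => φ x - 1) u w = av φ u w - 1 := by
    unfold av
    rw [intervalIntegral.integral_sub]
    · simp
    · apply Continuous.intervalIntegrable; fun_prop
    · apply Continuous.intervalIntegrable; fun_prop
  rwa [h2] at h1

lemma mul_av_eq_integral {φ : ℝ → ℝ} (hφ : Continuous φ) (u w : ℝ) :
    w * av φ u w = ∫ θ in u..(u + w), φ θ := by
  have h1 := smul_av (γ := fun x => ∫ θ in (0:ℝ)..x, φ θ) (g := φ)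
    (fun x => hφ.integral_hasStrictDerivAt 0 x |>.hasDerivAt) hφ u w
  rw [smul_eq_mul] at h1
  rw [h1, intervalIntegral.integral_interval_sub_left] <;> exact hφ.intervalIntegrable _ _

lemma one_div_mul_rpow_eq {a t α : ℝ} (ha : 0 ≤ a) (ht : 0 ≤ t) :
    1 / (a * t) ^ α = a ^ (-α) * (t ^ 2) ^ (-(α / 2)) := by
  rw [Real.mul_rpow ha ht, one_div, mul_inv, ← Real.rpow_neg ha, ← Real.rpow_neg ht,
    ← Real.rpow_natCast t 2, ← Real.rpow_mul ht]
  congr 2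
  push_cast
  ring

lemma ohIntegrand_le {γ G : ℝ → Rn n} (hγ : ∀ u, HasDerivAt γ (G u) u) (hG : Continuous G)
    (h1 : ∀ u, |‖G u‖ - 1| ≤ 1 / 10) {α : ℝ} (hα : 0 < α) {u w : ℝ} (hw : |w| < 1 / 2)
    (hpos : 0 < ‖av G u w‖ ^ 2) :
    ohIntegrand α γ u w ≤ |w| ^ (-α) *
      ((‖av G u w‖ ^ 2) ^ (-(α / 2)) - (av (fun x => ‖G x‖ ^ 2) u w) ^ (-(α / 2))) *
        ((‖G u‖ ^ 2 + ‖G (u + w)‖ ^ 2) / 2) := by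
  have hd : ∀ θ, deriv γ θ = G θ := fun θ => (hγ θ).deriv
  have hn : Continuous fun x => ‖G x‖ := hG.norm
  have harc : arcLen γ u w = |w| * av (fun x => ‖G x‖) u w := by
    simp only [arcLen, hd]
    rw [← mul_av_eq_integral hn, abs_mul, abs_of_nonneg (av_nonneg (fun x => norm_nonneg _) _ _)]
  have hlen : curveLen γ = av (fun x => ‖G x‖) 0 1 := by
    simp only [curveLen, hd]
    rw [← one_mul (av _ _ _), mul_av_eq_integral hn, zero_add]
  have hA := abs_le.mp (abs_av_sub_one_le hn h1 u w)
  have hL := abs_le.mp (abs_av_sub_one_le hn h1 0 1)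
  rcases eq_or_ne w 0 with rfl | hw0
  · have hi : idist γ u 0 = 0 := by
      rw [idist, harc, hlen]
      simp only [abs_zero, zero_mul, sub_zero]
      exact min_eq_left (by linarith [hL.1])
    simp [ohIntegrand, hi, Real.zero_rpow (show -α ≠ 0 by linarith)]
  have hwp : 0 < |w| := abs_pos.mpr hw0
  set a := av (fun x => ‖G x‖) u w with ha
  set Q := av (fun x => ‖G x‖ ^ 2) u w with hQ
  have haQ : a ^ 2 ≤ Q := av_pow_sq_le hn u w
  have ha0 : 0 < a := by linarith [hA.1]
  have hi0 : 0 < idist γ u w := by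
    rw [idist, harc, hlen]
    refine lt_min (by positivity) ?_
    nlinarith [hA.2, hL.1]
  have hile : idist γ u w ≤ |w| * a := by rw [idist, harc]; exact min_le_left _ _
  have e1 : 1 / ‖γ (u + w) - γ u‖ ^ α = |w| ^ (-α) * (‖av G u w‖ ^ 2) ^ (-(α / 2)) := by
    rw [← smul_av hγ hG, norm_smul, Real.norm_eq_abs, one_div_mul_rpow_eq hwp.le (norm_nonneg _)]
  have e2 : |w| ^ (-α) * Q ^ (-(α / 2)) ≤ 1 / idist γ u w ^ α := by
    calc |w| ^ (-α) * Q ^ (-(α / 2)) ≤ |w| ^ (-α) * (a ^ 2) ^ (-(α / 2)) :=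
          mul_le_mul_of_nonneg_left (Real.rpow_le_rpow_of_nonpos (by positivity) haQ (by linarith))
            (by positivity)
      _ = 1 / (|w| * a) ^ α := (one_div_mul_rpow_eq hwp.le ha0.le).symm
      _ ≤ 1 / idist γ u w ^ α := by gcongr
  have hD : 0 ≤ |w| ^ (-α) * ((‖av G u w‖ ^ 2) ^ (-(α / 2)) - Q ^ (-(α / 2))) := by
    refine mul_nonneg (by positivity) (sub_nonneg.mpr ?_)
    exact Real.rpow_le_rpow_of_nonpos hpos (norm_av_sq_le hG u w) (by linarith)
  simp only [ohIntegrand, hd, mul_assoc]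
  calc _ ≤ (|w| ^ (-α) * ((‖av G u w‖ ^ 2) ^ (-(α / 2)) - Q ^ (-(α / 2)))) *
        (‖G (u + w)‖ * ‖G u‖) := by
        refine mul_le_mul_of_nonneg_right ?_ (by positivity)
        rw [mul_sub, e1]
        linarith
    _ ≤ (|w| ^ (-α) * ((‖av G u w‖ ^ 2) ^ (-(α / 2)) - Q ^ (-(α / 2)))) *
        ((‖G u‖ ^ 2 + ‖G (u + w)‖ ^ 2) / 2) := by
        refine mul_le_mul_of_nonneg_left ?_ hD
        nlinarith [sq_nonneg (‖G u‖ - ‖G (u + w)‖)]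
    _ = _ := by rw [mul_assoc]

namespace ArcLengthParam

lemma ohIntegrand_eq {γ : ℝ → Rn n} (h : ArcLengthParam γ) (hc : Continuous (deriv γ)) {α : ℝ}
    (hα : 0 < α) {u w : ℝ} (hw : |w| ≤ 1 / 2) :
    ohIntegrand α γ u w = |w| ^ (-α) * ((‖av (deriv γ) u w‖ ^ 2) ^ (-(α / 2)) - 1) := by
  have h1 : ∀ θ, ‖deriv γ θ‖ = 1 := h
  rcases eq_or_ne w 0 with rfl | hw0
  · simp [ohIntegrand, h.idist_eq hw, Real.zero_rpow (show -α ≠ 0 by linarith),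
      Real.zero_rpow hα.ne']
  · have hwp : 0 < |w| := abs_pos.mpr hw0
    simp only [ohIntegrand, h.idist_eq hw, h1, mul_one]
    rw [← smul_av (fun u => (h.differentiable u).hasDerivAt) hc, norm_smul, Real.norm_eq_abs,
      one_div_mul_rpow_eq hwp.le (norm_nonneg _), one_div, ← Real.rpow_neg hwp.le]
    ring

end ArcLengthParam

/-- Lebesgue measure on `(0,1] × (-1/2,1/2)`. -/
def muP : Measure (ℝ × ℝ) :=
  (volume.restrict (Ioc (0:ℝ) 1)).prod (volume.restrict (Ioo (-(1:ℝ)/2) (1/2)))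

instance : IsFiniteMeasure muP := by unfold muP; infer_instance

lemma ae_muP : ∀ᵐ x ∂muP, |x.2| < 1 / 2 := by
  rw [muP, Measure.prod_restrict]
  refine (ae_restrict_mem (measurableSet_Ioc.prod measurableSet_Ioo)).mono fun x hx => ?_
  have := hx.2
  rw [abs_lt]
  constructor <;> linarith [this.1, this.2]

lemma oharaE_le_lintegral {α : ℝ} {γ : ℝ → Rn n} {φ : ℝ × ℝ → ℝ} (hφ : Measurable φ)
    (h : ∀ u w : ℝ, |w| < 1 / 2 → ohIntegrand α γ u w ≤ φ (u, w)) :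
    oharaE α γ ≤ ∫⁻ x, ENNReal.ofReal (φ x) ∂muP := by
  rw [muP, lintegral_prod _ (by fun_prop), oharaE]
  refine lintegral_mono fun u => setLIntegral_mono' measurableSet_Ioo fun w hw =>
    ENNReal.ofReal_le_ofReal (h u w ?_)
  rw [abs_lt]
  constructor <;> linarith [hw.1, hw.2]

lemma lintegral_le_oharaE {α : ℝ} {γ : ℝ → Rn n} {φ : ℝ × ℝ → ℝ} (hφ : Measurable φ)
    (h : ∀ u w : ℝ, |w| < 1 / 2 → φ (u, w) ≤ ohIntegrand α γ u w) :
    ∫⁻ x, ENNReal.ofReal (φ x) ∂muP ≤ oharaE α γ := by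
  rw [muP, lintegral_prod _ (by fun_prop), oharaE]
  refine lintegral_mono fun u => setLIntegral_mono' measurableSet_Ioo fun w hw =>
    ENNReal.ofReal_le_ofReal (h u w ?_)
  rw [abs_lt]
  constructor <;> linarith [hw.1, hw.2]

lemma integrable_abs_rpow_muP {r : ℝ} (hr : -1 < r) : Integrable (fun x : ℝ × ℝ => |x.2| ^ r) muP :=
  (integrableOn_abs_rpow hr).integrable.comp_snd _

/-- The second order remainder `1 - ‖av g u w‖²`. -/
lemma IsTangent.norm_av_sq_le_one {g : ℝ → Rn n} {m : ℝ} (hT : IsTangent g m) (u w : ℝ) :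
    ‖av g u w‖ ^ 2 ≤ 1 := by
  have := norm_av_le (fun u => (hT.norm_eq u).le) u w
  exact pow_le_one₀ (norm_nonneg _) this

lemma IsTangent.le_one {g : ℝ → Rn n} {m : ℝ} (hT : IsTangent g m) : m ≤ 1 :=
  (hT.le 0 0 (by norm_num)).trans (hT.norm_av_sq_le_one 0 0)

lemma ArcLengthParam.integrable_excess {γ : ℝ → Rn n} (h : ArcLengthParam γ)
    (hinj : PerInjective γ) {m : ℝ} (hT : IsTangent (deriv γ) m) {α : ℝ} (hα : 2 ≤ α)
    (hfin : oharaE α γ < ⊤) :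
    Integrable (fun x : ℝ × ℝ => |x.2| ^ (-α) * (1 - ‖av (deriv γ) x.1 x.2‖ ^ 2)) muP := by
  have hc := hT.cont
  have hm : Measurable (fun x : ℝ × ℝ => |x.2| ^ (-α) * (1 - ‖av (deriv γ) x.1 x.2‖ ^ 2)) := by
    have h2 : Continuous fun x : ℝ × ℝ => ‖av (deriv γ) x.1 x.2‖ ^ 2 := by fun_prop
    exact (by fun_prop : Measurable fun x : ℝ × ℝ => |x.2| ^ (-α)).mul
      (measurable_const.sub h2.measurable)
  refine ⟨hm.aestronglyMeasurable, ?_⟩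
  rw [hasFiniteIntegral_iff_ofReal (Eventually.of_forall fun x =>
    mul_nonneg (by positivity) (sub_nonneg.mpr (hT.norm_av_sq_le_one _ _)))]
  refine (lintegral_le_oharaE hm fun u w hw => ?_).trans_lt hfin
  refine le_trans (le_of_eq ?_) (h.le_ohIntegrand hinj hα hw.le)
  rcases eq_or_ne w 0 with rfl | hw0
  · simp [Real.zero_rpow (show -α ≠ 0 by linarith)]
  · rw [← smul_av (fun u => (h.differentiable u).hasDerivAt) hc, norm_smul, mul_pow,
      Real.norm_eq_abs, sq_abs, mul_div_cancel_left₀ _ (by positivity)]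

/-- A majorant of the energy density of a perturbed curve. -/
def pd (α : ℝ) (g v : ℝ → Rn n) (τ : ℝ) (x : ℝ × ℝ) : ℝ :=
  |x.2| ^ (-α) * vf (α / 2) (‖av g x.1 x.2‖ ^ 2) ⟪av g x.1 x.2, av v x.1 x.2⟫ (‖av v x.1 x.2‖ ^ 2)
    (av (fun y => ⟪g y, v y⟫) x.1 x.2) (av (fun y => ‖v y‖ ^ 2) x.1 x.2)
    (⟪g x.1, v x.1⟫ + ⟪g (x.1 + x.2), v (x.1 + x.2)⟫) ((‖v x.1‖ ^ 2 + ‖v (x.1 + x.2)‖ ^ 2) / 2) τ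

/-- The `τ`-derivative of `pd`. -/
def pd' (α : ℝ) (g v : ℝ → Rn n) (τ : ℝ) (x : ℝ × ℝ) : ℝ :=
  |x.2| ^ (-α) * vf' (α / 2) (‖av g x.1 x.2‖ ^ 2) ⟪av g x.1 x.2, av v x.1 x.2⟫ (‖av v x.1 x.2‖ ^ 2)
    (av (fun y => ⟪g y, v y⟫) x.1 x.2) (av (fun y => ‖v y‖ ^ 2) x.1 x.2)
    (⟪g x.1, v x.1⟫ + ⟪g (x.1 + x.2), v (x.1 + x.2)⟫) ((‖v x.1‖ ^ 2 + ‖v (x.1 + x.2)‖ ^ 2) / 2) τ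

lemma measurable_pd {g v : ℝ → Rn n} (hg : Continuous g) (hv : Continuous v) (α τ : ℝ) :
    Measurable (pd α g v τ) := by
  have h1 : Continuous fun x : ℝ × ℝ => ‖av g x.1 x.2‖ ^ 2 := by fun_prop
  have h2 : Continuous fun x : ℝ × ℝ => ⟪av g x.1 x.2, av v x.1 x.2⟫ := by fun_prop
  have h3 : Continuous fun x : ℝ × ℝ => ‖av v x.1 x.2‖ ^ 2 := by fun_prop
  have h4 : Continuous fun x : ℝ × ℝ => av (fun y => ⟪g y, v y⟫) x.1 x.2 := by fun_prop
  have h5 : Continuous fun x : ℝ × ℝ => av (fun y => ‖v y‖ ^ 2) x.1 x.2 := by fun_prop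
  have h6 : Continuous fun x : ℝ × ℝ => ⟪g x.1, v x.1⟫ + ⟪g (x.1 + x.2), v (x.1 + x.2)⟫ := by
    fun_prop
  have h7 : Continuous fun x : ℝ × ℝ => (‖v x.1‖ ^ 2 + ‖v (x.1 + x.2)‖ ^ 2) / 2 := by fun_prop
  replace h1 := h1.measurable
  replace h2 := h2.measurable
  replace h3 := h3.measurable
  replace h4 := h4.measurable
  replace h5 := h5.measurable
  replace h6 := h6.measurable
  replace h7 := h7.measurable
  unfold pd vf
  fun_prop

lemma measurable_pd' {g v : ℝ → Rn n} (hg : Continuous g) (hv : Continuous v) (α τ : ℝ) :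
    Measurable (pd' α g v τ) := by
  have h1 : Continuous fun x : ℝ × ℝ => ‖av g x.1 x.2‖ ^ 2 := by fun_prop
  have h2 : Continuous fun x : ℝ × ℝ => ⟪av g x.1 x.2, av v x.1 x.2⟫ := by fun_prop
  have h3 : Continuous fun x : ℝ × ℝ => ‖av v x.1 x.2‖ ^ 2 := by fun_prop
  have h4 : Continuous fun x : ℝ × ℝ => av (fun y => ⟪g y, v y⟫) x.1 x.2 := by fun_prop
  have h5 : Continuous fun x : ℝ × ℝ => av (fun y => ‖v y‖ ^ 2) x.1 x.2 := by fun_prop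
  have h6 : Continuous fun x : ℝ × ℝ => ⟪g x.1, v x.1⟫ + ⟪g (x.1 + x.2), v (x.1 + x.2)⟫ := by
    fun_prop
  have h7 : Continuous fun x : ℝ × ℝ => (‖v x.1‖ ^ 2 + ‖v (x.1 + x.2)‖ ^ 2) / 2 := by fun_prop
  replace h1 := h1.measurable
  replace h2 := h2.measurable
  replace h3 := h3.measurable
  replace h4 := h4.measurable
  replace h5 := h5.measurable
  replace h6 := h6.measurable
  replace h7 := h7.measurable
  unfold pd' vf'
  fun_prop

lemma av_norm_sq_eq_one {g : ℝ → Rn n} (h : ∀ u, ‖g u‖ = 1) (u w : ℝ) :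
    av (fun y => ‖g y‖ ^ 2) u w = 1 := by
  simp [av, h]

lemma pd_eq {g v : ℝ → Rn n} (hg : Continuous g) (hv : Continuous v) (h1 : ∀ u, ‖g u‖ = 1)
    (α τ u w : ℝ) :
    pd α g v τ (u, w) = |w| ^ (-α) * ((‖av (fun y => g y + τ • v y) u w‖ ^ 2) ^ (-(α / 2)) -
      (av (fun y => ‖g y + τ • v y‖ ^ 2) u w) ^ (-(α / 2))) *
        ((‖g u + τ • v u‖ ^ 2 + ‖g (u + w) + τ • v (u + w)‖ ^ 2) / 2) := by
  rw [av_norm_add_smul_sq hg hv, av_add_smul hg hv, norm_add_smul_sq, norm_add_smul_sq,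
    norm_add_smul_sq, av_norm_sq_eq_one h1, h1, h1, pd, vf]
  ring

lemma pd_nonneg {g v : ℝ → Rn n} (hg : Continuous g) (hv : Continuous v) (h1 : ∀ u, ‖g u‖ = 1)
    {α : ℝ} (hα : 0 ≤ α) {τ u w : ℝ} (hpos : 0 < ‖av (fun y => g y + τ • v y) u w‖ ^ 2) :
    0 ≤ pd α g v τ (u, w) := by
  rw [pd_eq hg hv h1]
  refine mul_nonneg (mul_nonneg (by positivity) (sub_nonneg.mpr ?_)) (by positivity)
  exact Real.rpow_le_rpow_of_nonpos hpos (norm_av_sq_le (by fun_prop) u w) (by linarith)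

/-- Uniform control of the perturbed energy densities. -/
lemma IsTangent.exists_pd_bound {g v : ℝ → Rn n} {m : ℝ} (hT : IsTangent g m) {α : ℝ} (hα : 0 ≤ α)
    (hv : Continuous v) {V L : ℝ} (hV : ∀ u, ‖v u‖ ≤ V) (hL : ∀ x y, ‖v x - v y‖ ≤ L * |x - y|) :
    ∃ ε C : ℝ, 0 < ε ∧ ∀ u w τ : ℝ, |w| ≤ 1 / 2 → |τ| < ε →
      0 < ‖av (fun y => g y + τ • v y) u w‖ ^ 2 ∧
      HasDerivAt (fun τ => pd α g v τ (u, w)) (pd' α g v τ (u, w)) τ ∧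
      ‖pd' α g v τ (u, w)‖ ≤
        C * (|w| ^ (-α) * (1 - ‖av g u w‖ ^ 2) + L ^ 2 * (|w| ^ (-α) * w ^ 2)) := by
  have hV0 : 0 ≤ V := (norm_nonneg _).trans (hV 0)
  obtain ⟨ε, C, hε, -, key⟩ := exists_vf_bound (p := α / 2) (m := m) (B := 2 * V + V ^ 2)
    (by positivity) hT.pos hT.le_one (by positivity)
  refine ⟨ε, C, hε, fun u w τ hw hτ => ?_⟩
  have hg := hT.cont
  have hone := av_norm_sq_eq_one hT.norm_eq u w
  have hb : ∀ a b : Rn n, ‖a‖ ≤ 1 → ‖b‖ ≤ V → |⟪a, b⟫| ≤ V := fun a b ha hb => by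
    refine (abs_real_inner_le_norm a b).trans ?_
    calc ‖a‖ * ‖b‖ ≤ 1 * V := by gcongr
      _ = V := one_mul V
  have hV2 : 0 ≤ V ^ 2 := sq_nonneg V
  have hEg : ‖av g u w‖ ≤ 1 := norm_av_le (fun u => (hT.norm_eq u).le) u w
  have hEv : ‖av v u w‖ ≤ V := norm_av_le hV u w
  have hvar := av_norm_sq_sub_le hv hL u w
  have hcov := abs_av_inner_sub_le hg hv u w
  have hx := hb _ _ (hT.norm_eq u).le (hV u)
  have hy := hb _ _ (hT.norm_eq (u + w)).le (hV (u + w))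
  have hsq : ∀ y, ‖v y‖ ^ 2 ≤ V ^ 2 := fun y => by gcongr; exact hV y
  have hEv2 : ‖av v u w‖ ^ 2 ≤ V ^ 2 := by gcongr
  have hc' : av (fun y => ‖v y‖ ^ 2) u w ≤ V ^ 2 :=
    (le_abs_self _).trans (norm_av_le (g := fun y => ‖v y‖ ^ 2)
      (fun y => by rw [Real.norm_of_nonneg (sq_nonneg _)]; exact hsq y) u w)
  have hb' : |av (fun y => ⟪g y, v y⟫) u w| ≤ V :=
    norm_av_le (g := fun y => ⟪g y, v y⟫) (fun y => hb _ _ (hT.norm_eq y).le (hV y)) u w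
  rw [hone] at hcov
  have hf1 := hT.norm_av_sq_le_one u w
  obtain ⟨k1, k2, k3⟩ := key (‖av g u w‖ ^ 2) ⟪av g u w, av v u w⟫ (‖av v u w‖ ^ 2)
    (av (fun y => ⟪g y, v y⟫) u w) (av (fun y => ‖v y‖ ^ 2) u w)
    (⟪g u, v u⟫ + ⟪g (u + w), v (u + w)⟫) ((‖v u‖ ^ 2 + ‖v (u + w)‖ ^ 2) / 2)
    ((1 - ‖av g u w‖ ^ 2) + L ^ 2 * w ^ 2) τ (hT.le u w hw) hf1
    ((hb _ _ hEg hEv).trans (by linarith)) (hb'.trans (by linarith)) (by positivity)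
    (by linarith) (by linarith) ((abs_add_le _ _).trans (by linarith))
    (by rw [abs_of_nonneg (by positivity)]; linarith [hsq u, hsq (u + w)])
    (by have : 0 ≤ L ^ 2 * w ^ 2 := by positivity
        linarith) (by linarith) (sub_nonneg.mpr (norm_av_sq_le hv u w)) (by linarith) hτ
  refine ⟨?_, ?_, ?_⟩
  · rw [av_add_smul hg hv, norm_add_smul_sq]; exact k1
  · exact (hasDerivAt_vf k1 k2).const_mul _
  · rw [pd', norm_mul, Real.norm_of_nonneg (by positivity), Real.norm_eq_abs]
    calc _ ≤ |w| ^ (-α) * (C * ((1 - ‖av g u w‖ ^ 2) + L ^ 2 * w ^ 2)) :=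
          mul_le_mul_of_nonneg_left k3 (by positivity)
      _ = _ := by ring

/-- A directional derivative of the energy is given by the integral of the derivative density. -/
lemma ArcLengthParam.eq_integral_of_hasDirDeriv {γ : ℝ → Rn n} (h : ArcLengthParam γ)
    (hinj : PerInjective γ) {m : ℝ} (hT : IsTangent (deriv γ) m) {α : ℝ} (hα : α ∈ Ioo (2:ℝ) 3)
    (hfin : oharaE α γ < ⊤) {H v : ℝ → Rn n} (hH : ∀ u, HasDerivAt H (v u) u) (hv : Continuous v)
    {V L : ℝ} (hV : ∀ u, ‖v u‖ ≤ V) (hL : ∀ x y, ‖v x - v y‖ ≤ L * |x - y|) {d : ℝ}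
    (hd : HasDirDeriv (oharaER α) γ H d) :
    Integrable (pd' α (deriv γ) v 0) muP ∧ d = ∫ x, pd' α (deriv γ) v 0 x ∂muP := by
  have hg := hT.cont
  have hα0 : 0 < α := by linarith [hα.1]
  have hV0 : 0 ≤ V := (norm_nonneg _).trans (hV 0)
  obtain ⟨ε₀, C, hε₀, key₀⟩ := hT.exists_pd_bound hα0.le hv hV hL
  set ε : ℝ := min ε₀ (1 / (10 * (V + 1))) with hε_def
  have hε : 0 < ε := lt_min hε₀ (by positivity)
  have key := fun (u w τ : ℝ) (hw : |w| < 1 / 2) (hτ : |τ| < ε) =>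
    key₀ u w τ hw.le (hτ.trans_le (min_le_left _ _))
  set bound : ℝ × ℝ → ℝ := fun x => C * (|x.2| ^ (-α) * (1 - ‖av (deriv γ) x.1 x.2‖ ^ 2) +
    L ^ 2 * (|x.2| ^ (-α) * x.2 ^ 2)) with hbound
  have hbi : Integrable bound muP := by
    refine ((h.integrable_excess hinj hT hα.1.le hfin).add (Integrable.const_mul ?_ _)).const_mul _
    refine (integrable_abs_rpow_muP (r := 2 - α) (by linarith [hα.2])).congr
      (Eventually.of_forall fun x => ?_)
    rcases eq_or_ne x.2 0 with h0 | h0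
    · simp [h0, Real.zero_rpow (show 2 - α ≠ 0 by linarith [hα.1])]
    · have hp : 0 < |x.2| := abs_pos.mpr h0
      simp only
      rw [← sq_abs x.2, ← Real.rpow_natCast |x.2| 2, ← Real.rpow_add hp]
      congr 1
      push_cast
      ring
  have hnn : ∀ τ, |τ| < ε → ∀ᵐ x ∂muP, 0 ≤ pd α (deriv γ) v τ x := fun τ hτ =>
    ae_muP.mono fun x hx => pd_nonneg hg hv hT.norm_eq hα0.le (key x.1 x.2 τ hx hτ).1
  have h00 : |(0:ℝ)| < ε := by simpa using hε
  have hE0 : oharaE α γ = ∫⁻ x, ENNReal.ofReal (pd α (deriv γ) v 0 x) ∂muP := by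
    have e : ∀ u w : ℝ, |w| < 1 / 2 → ohIntegrand α γ u w = pd α (deriv γ) v 0 (u, w) :=
      fun u w hw => by
        rw [h.ohIntegrand_eq hg hα0 hw.le]
        simp [pd, vf]
    exact le_antisymm (oharaE_le_lintegral (measurable_pd hg hv _ _) fun u w hw => (e u w hw).le)
      (lintegral_le_oharaE (measurable_pd hg hv _ _) fun u w hw => (e u w hw).ge)
  have hi0 : Integrable (pd α (deriv γ) v 0) muP := by
    refine ⟨(measurable_pd hg hv _ _).aestronglyMeasurable, ?_⟩
    rw [hasFiniteIntegral_iff_ofReal (hnn 0 h00), ← hE0]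
    exact hfin
  obtain ⟨hi', hder⟩ := hasDerivAt_integral_of_dominated_loc_of_deriv_le (μ := muP)
    (F := pd α (deriv γ) v) (F' := pd' α (deriv γ) v) (x₀ := 0) (bound := bound)
    (Metric.ball_mem_nhds (0:ℝ) hε)
    (Eventually.of_forall fun τ => (measurable_pd hg hv _ _).aestronglyMeasurable) hi0
    (measurable_pd' hg hv _ _).aestronglyMeasurable
    (ae_muP.mono fun x hx τ hτ => (key x.1 x.2 τ hx (by simpa using hτ)).2.2) hbi
    (ae_muP.mono fun x hx τ hτ => (key x.1 x.2 τ hx (by simpa using hτ)).2.1)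
  refine ⟨hi', ?_⟩
  have hInt : ∀ τ, |τ| < ε → Integrable (pd α (deriv γ) v τ) muP := fun τ hτ => by
    have h1 : Integrable (fun x => pd α (deriv γ) v τ x - pd α (deriv γ) v 0 x) muP := by
      refine (hbi.mul_const |τ|).mono' ((measurable_pd hg hv _ _).sub
        (measurable_pd hg hv _ _)).aestronglyMeasurable (ae_muP.mono fun x hx => ?_)
      have := Convex.norm_image_sub_le_of_norm_hasDerivWithin_le (s := Metric.ball (0:ℝ) ε)
        (f := fun τ => pd α (deriv γ) v τ x) (f' := fun τ => pd' α (deriv γ) v τ x)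
        (C := bound x) (x := 0) (y := τ)
        (fun σ hσ => (key x.1 x.2 σ hx (by simpa using hσ)).2.1.hasDerivWithinAt)
        (fun σ hσ => (key x.1 x.2 σ hx (by simpa using hσ)).2.2) (convex_ball 0 ε)
        (Metric.mem_ball_self hε) (by simpa using hτ)
      simpa using this
    exact (h1.add hi0).congr (Eventually.of_forall fun x => by simp)
  set F : ℝ → ℝ := fun τ => oharaER α (γ + τ • H) with hF
  have hFd : HasDerivAt F d 0 := by
    rw [hasDerivAt_iff_tendsto_slope]
    refine hd.congr fun τ => ?_
    simp only [hF, slope_def_field, zero_smul, add_zero, sub_zero]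
  have hle : ∀ τ, |τ| < ε → F τ ≤ ∫ x, pd α (deriv γ) v τ x ∂muP := fun τ hτ => by
    rw [integral_eq_lintegral_of_nonneg_ae (hnn τ hτ)
      (measurable_pd hg hv _ _).aestronglyMeasurable]
    refine ENNReal.toReal_mono ?_ (oharaE_le_lintegral (measurable_pd hg hv _ _) fun u w hw => ?_)
    · exact (hasFiniteIntegral_iff_ofReal (hnn τ hτ)).mp (hInt τ hτ).2 |>.ne
    · rw [pd_eq hg hv hT.norm_eq]
      refine ohIntegrand_le (γ := γ + τ • H) (G := fun y => deriv γ y + τ • v y)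
        (fun u => (h.differentiable u).hasDerivAt.add ((hH u).const_smul τ)) (by fun_prop)
        (fun u => ?_) hα0 hw (key u w τ hw hτ).1
      have h3 := abs_norm_sub_norm_le (deriv γ u + τ • v u) (deriv γ u)
      rw [hT.norm_eq u] at h3
      refine h3.trans ?_
      rw [add_sub_cancel_left, norm_smul, Real.norm_eq_abs]
      have h1 : |τ| < 1 / (10 * (V + 1)) := hτ.trans_le (min_le_right _ _)
      rw [lt_div_iff₀ (by positivity)] at h1
      have h2 := mul_le_mul_of_nonneg_left (hV u) (abs_nonneg τ)
      linarith [abs_nonneg τ]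
  have heq : F 0 = ∫ x, pd α (deriv γ) v 0 x ∂muP := by
    rw [integral_eq_lintegral_of_nonneg_ae (hnn 0 h00)
      (measurable_pd hg hv _ _).aestronglyMeasurable, ← hE0]
    simp [hF, oharaER]
  have hmin : IsLocalMin (fun τ => (∫ x, pd α (deriv γ) v τ x ∂muP) - F τ) 0 := by
    filter_upwards [Metric.ball_mem_nhds (0:ℝ) hε] with τ hτ
    rw [heq, sub_self]
    exact sub_nonneg.mpr (hle τ (by simpa using hτ))
  have := hmin.hasDerivAt_eq_zero (hder.sub hFd)
  linarith

/-! ### Averages and Fourier coefficients -/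

lemma av_clm {E F : Type*} [NormedAddCommGroup E] [NormedSpace ℝ E] [CompleteSpace E]
    [NormedAddCommGroup F] [NormedSpace ℝ F] [CompleteSpace F] (L : E →L[ℝ] F) {g : ℝ → E}
    (hg : Continuous g) (u w : ℝ) : av (fun x => L (g x)) u w = L (av g u w) :=
  L.intervalIntegral_comp_comm (f := fun s => g (u + s * w))
    (by apply Continuous.intervalIntegrable; fun_prop)

lemma av_cp {g : ℝ → Rn n} (hg : Continuous g) (j : Fin n) (u w : ℝ) :
    av (cp g j) u w = cp (fun u => av g u w) j u :=
  av_clm (Complex.ofRealCLM.comp (EuclideanSpace.proj (𝕜 := ℝ) j)) hg u w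

lemma av_ee (k : ℤ) (u w : ℝ) : av (ee k) u w = ee k u * phi k w := by
  simp only [av, phi, ee_add_right, intervalIntegral.integral_const_mul]

lemma integral_integral_swap_of_continuous {G : ℝ → ℝ → ℂ}
    (hG : Continuous (Function.uncurry G)) :
    ∫ x in (0:ℝ)..1, ∫ y in (0:ℝ)..1, G x y = ∫ y in (0:ℝ)..1, ∫ x in (0:ℝ)..1, G x y := by
  refine intervalIntegral_intervalIntegral_swap ?_
  rw [uIoc_of_le zero_le_one]
  exact (hG.continuousOn.integrableOn_compact (isCompact_Icc.prod isCompact_Icc)).mono_set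
    (prod_mono Ioc_subset_Icc_self Ioc_subset_Icc_self)

lemma fc_av {F : ℝ → ℂ} (hF : Continuous F) (hp : Function.Periodic F 1) (k : ℤ) (w : ℝ) :
    fc (fun u => av F u w) k = phi k w * fc F k := by
  have h1 : ∀ u, av F u w * ee (-k) u = ∫ s in (0:ℝ)..1, F (u + s * w) * ee (-k) u := fun u => by
    rw [intervalIntegral.integral_mul_const, av]
  simp only [fc, h1]
  rw [integral_integral_swap_of_continuous (by simp only [Function.uncurry_def]; fun_prop)]
  have h2 : ∀ s : ℝ, ∫ u in (0:ℝ)..1, F (u + s * w) * ee (-k) u = ee k (s * w) * fc F k :=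
    fun s => fc_shift hp (s * w) k
  simp only [h2, intervalIntegral.integral_mul_const]
  rfl

@[simp] lemma phi_zero_left (w : ℝ) : phi 0 w = 1 := by simp [phi]

lemma phi_neg_mul_phi (k : ℤ) (w : ℝ) : phi (-k) w * phi k w = ((‖phi k w‖ ^ 2 : ℝ) : ℂ) := by
  have h : phi (-k) w = (starRingEnd ℂ) (phi k w) := by
    have h1 := Complex.conjCLE.toContinuousLinearMap.intervalIntegral_comp_comm (μ := volume)
      (a := 0) (b := 1) (f := fun s => ee k (s * w))
      (by apply Continuous.intervalIntegrable; fun_prop)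
    simp only [phi]
    refine Eq.trans ?_ h1
    congr 1
    funext s
    simp [ee, ← Complex.exp_conj, Complex.conj_ofNat]
  rw [h, mul_comm, Complex.mul_conj, Complex.normSq_eq_norm_sq]

/-! ### The Euler–Lagrange equation -/

lemma memH1_of_lipschitz {H v : ℝ → Rn n} (hper : Function.Periodic H 1)
    (hH : ∀ u, HasDerivAt H (v u) u) (hv : Continuous v) {L : ℝ}
    (hL : ∀ x y, ‖v x - v y‖ ≤ L * |x - y|) {α : ℝ} (hα : α < 3) : MemH1 ((α - 1) / 2) H := by
  have hd : deriv H = v := funext fun u => (hH u).deriv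
  refine ⟨hper, ?_, ?_⟩
  · rw [contDiff_one_iff_deriv, hd]
    exact ⟨fun u => (hH u).differentiableAt, hv⟩
  · have hi : IntegrableOn (fun w : ℝ => L ^ 2 * |w| ^ (2 - α)) (Ioo (-(1:ℝ)/2) (1/2)) :=
      (integrableOn_abs_rpow (r := 2 - α) (by linarith)).const_mul _
    have h1 : ∫⁻ w in Ioo (-(1:ℝ)/2) (1/2), ENNReal.ofReal (L ^ 2 * |w| ^ (2 - α)) < ⊤ := by
      have := hi.2
      rwa [hasFiniteIntegral_iff_ofReal (Eventually.of_forall fun w => by positivity)] at this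
    have h2 : gagliardoSq ((α - 1) / 2) (deriv H) ≤ ∫⁻ _ in Ioc (0:ℝ) 1,
        ∫⁻ w in Ioo (-(1:ℝ)/2) (1/2), ENNReal.ofReal (L ^ 2 * |w| ^ (2 - α)) := by
      refine lintegral_mono fun u => lintegral_mono fun w => ENNReal.ofReal_le_ofReal ?_
      rw [hd, show 1 + 2 * ((α - 1) / 2) = α by ring]
      rcases eq_or_ne w 0 with rfl | hw
      · simp; positivity
      · have hp : 0 < |w| := abs_pos.mpr hw
        have h3 := hL (u + w) u
        rw [add_sub_cancel_left] at h3
        rw [div_le_iff₀ (by positivity), mul_assoc, ← Real.rpow_add hp, sub_add_cancel]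
        calc ‖v (u + w) - v u‖ ^ 2 ≤ (L * |w|) ^ 2 := by gcongr
          _ = L ^ 2 * |w| ^ (2:ℝ) := by rw [mul_pow]; norm_cast
    refine h2.trans_lt ?_
    simpa using h1

/-- The nonlinear factor `‖av g u w‖ ^ (-2 * q) - 1`. -/
def yy (g : ℝ → Rn n) (q w u : ℝ) : ℝ := (1 - (1 - ‖av g u w‖ ^ 2)) ^ (-q) - 1

/-- The first variation density, tested with a scalar function in the `j`-th component. -/
def dd (α : ℝ) (g : ℝ → Rn n) (j : Fin n) (ψ : ℝ → ℂ) (x : ℝ × ℝ) : ℂ :=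
  ((|x.2| ^ (-α) : ℝ) : ℂ) *
    ((yy g (α / 2) x.2 x.1 : ℂ) * (cp g j x.1 * ψ x.1 + cp g j (x.1 + x.2) * ψ (x.1 + x.2)) -
      α * ((yy g (α / 2 + 1) x.2 x.1 : ℂ) * (av (cp g j) x.1 x.2 * av ψ x.1 x.2)) +
      α * (av (fun y => cp g j y * ψ y) x.1 x.2 - av (cp g j) x.1 x.2 * av ψ x.1 x.2))

lemma clm_ofReal_mul (L : ℂ →L[ℝ] ℝ) (r : ℝ) (z : ℂ) : L (r * z) = r * L z := by
  rw [← Complex.real_smul, map_smul, smul_eq_mul]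

lemma inner_single_smul (x : Rn n) (j : Fin n) (a : ℝ) :
    ⟪x, a • EuclideanSpace.single j (1:ℝ)⟫ = x j * a := by
  rw [inner_smul_right, EuclideanSpace.inner_single_right]
  simp [mul_comm]

lemma pd'_zero_eq_clm_dd {g : ℝ → Rn n} (hg : Continuous g) {ψ : ℝ → ℂ} (hψ : Continuous ψ)
    (L : ℂ →L[ℝ] ℝ) (j : Fin n) (α : ℝ) (x : ℝ × ℝ) :
    pd' α g (fun u => L (ψ u) • EuclideanSpace.single j (1:ℝ)) 0 x = L (dd α g j ψ x) := by
  have h1 : ∀ u w, av (fun u => L (ψ u) • EuclideanSpace.single j (1:ℝ)) u w =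
      L (av ψ u w) • EuclideanSpace.single j (1:ℝ) := fun u w =>
    av_clm (L.smulRight (EuclideanSpace.single j (1:ℝ))) hψ u w
  have hcp : Continuous (cp g j) := by unfold cp; fun_prop
  have h2 : ∀ y, g y j * L (ψ y) = L (cp g j y * ψ y) := fun y => (clm_ofReal_mul _ _ _).symm
  have h3 : ∀ u w, av (fun y => L (cp g j y * ψ y)) u w = L (av (fun y => cp g j y * ψ y) u w) :=
    fun u w => av_clm L (by fun_prop) u w
  have h4 : ∀ u w, av g u w j * L (av ψ u w) = L (av (cp g j) u w * av ψ u w) := fun u w => by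
    rw [av_cp hg]; exact (clm_ofReal_mul _ _ _).symm
  have hq : -(α / 2) - 1 = -(α / 2 + 1) := by ring
  simp only [pd', vf', h1, inner_single_smul, h2, h3, h4, dd, clm_ofReal_mul, map_add, map_sub, yy,
    sub_sub_cancel, hq]
  simp [-mul_eq_mul_left_iff]
  ring

lemma norm_ee_sub_le (k : ℤ) (x y : ℝ) :
    ‖ee k x - ee k y‖ ≤ ‖(2 * Real.pi * Complex.I * k : ℂ)‖ * |x - y| := by
  have := Convex.norm_image_sub_le_of_norm_hasDerivWithin_le (f := ee k)
    (f' := fun u => 2 * Real.pi * Complex.I * k * ee k u) (s := univ)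
    (C := ‖(2 * Real.pi * Complex.I * k : ℂ)‖) (x := y) (y := x)
    (fun u _ => (hasDerivAt_ee k u).hasDerivWithinAt)
    (fun u _ => by rw [norm_mul, norm_ee, mul_one]) convex_univ (mem_univ _) (mem_univ _)
  simpa [Real.norm_eq_abs] using this

/-- The weak Euler–Lagrange equation. -/
def IsCriticalCurve (α lam : ℝ) (γ : ℝ → Rn n) : Prop :=
  ∀ h : ℝ → Rn n, MemH1 ((α - 1) / 2) h →
    ∃ d : ℝ, HasDirDeriv (oharaER α) γ h d ∧
      d + lam * ∫ u in Ioc (0:ℝ) 1, ⟪deriv γ u, deriv h u⟫ = 0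

namespace ArcLengthParam

variable {γ : ℝ → Rn n} {m α lam : ℝ}

lemma integral_clm_dd (h : ArcLengthParam γ) (hinj : PerInjective γ) (hT : IsTangent (deriv γ) m)
    (hα : α ∈ Ioo (2:ℝ) 3) (hfin : oharaE α γ < ⊤) (hstat : IsCriticalCurve α lam γ) (L : ℂ →L[ℝ] ℝ)
    {k : ℤ} (hk : k ≠ 0) (j : Fin n) :
    Integrable (fun x => L (dd α (deriv γ) j (ee (-k)) x)) muP ∧
      ∫ x, L (dd α (deriv γ) j (ee (-k)) x) ∂muP = L (-lam * fc (cp (deriv γ) j) k) := by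
  set κ : ℂ := 2 * Real.pi * Complex.I * (-k : ℤ) with hκ
  have hκ0 : κ ≠ 0 := by simp [hκ, hk, Real.pi_ne_zero]
  have hg := hT.cont
  set v : ℝ → Rn n := fun u => L (ee (-k) u) • EuclideanSpace.single j (1:ℝ) with hv
  set H : ℝ → Rn n := fun u => L (ee (-k) u * κ⁻¹) • EuclideanSpace.single j (1:ℝ) with hH
  have hHd : ∀ u, HasDerivAt H (v u) u := fun u => by
    have h1 : HasDerivAt (fun u => ee (-k) u * κ⁻¹) (ee (-k) u) u := by
      refine ((hasDerivAt_ee (-k) u).mul_const κ⁻¹).congr_deriv ?_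
      rw [← hκ]; field_simp
    exact (L.hasFDerivAt.comp_hasDerivAt u h1).smul_const _
  have hHp : Function.Periodic H 1 := fun u => by simp only [hH, ee_periodic (-k) u]
  have hvc : Continuous v := by fun_prop
  have hvn : ∀ z : ℂ, ‖L z • EuclideanSpace.single j (1:ℝ)‖ ≤ ‖L‖ * ‖z‖ := fun z => by
    rw [norm_smul, PiLp.norm_single, norm_one, mul_one]
    exact L.le_opNorm z
  have hV : ∀ u, ‖v u‖ ≤ ‖L‖ := fun u => by simpa using hvn (ee (-k) u)
  have hL : ∀ x y, ‖v x - v y‖ ≤ (‖L‖ * ‖κ‖) * |x - y| := fun x y => by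
    simp only [hv]
    rw [← sub_smul, ← map_sub]
    refine (hvn _).trans ?_
    rw [mul_assoc]
    exact mul_le_mul_of_nonneg_left (norm_ee_sub_le _ _ _) (norm_nonneg _)
  obtain ⟨d, hd, hd0⟩ := hstat H (memH1_of_lipschitz hHp hHd hvc hL hα.2)
  obtain ⟨h1, h2⟩ := h.eq_integral_of_hasDirDeriv hinj hT hα hfin hHd hvc hV hL hd
  have h3 : ∀ x, pd' α (deriv γ) v 0 x = L (dd α (deriv γ) j (ee (-k)) x) := fun x =>
    pd'_zero_eq_clm_dd hg (continuous_ee _) L j α x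
  simp only [h3] at h2
  refine ⟨h1.congr (Eventually.of_forall h3), ?_⟩
  rw [← h2]
  have hcp : Continuous (cp (deriv γ) j) := by unfold cp; fun_prop
  have h4 : ∫ u in Ioc (0:ℝ) 1, ⟪deriv γ u, deriv H u⟫ = L (fc (cp (deriv γ) j) k) := by
    have e : ∀ u, ⟪deriv γ u, deriv H u⟫ = L (cp (deriv γ) j u * ee (-k) u) := fun u => by
      rw [(hHd u).deriv, hv, inner_single_smul]
      exact (clm_ofReal_mul _ _ _).symm
    simp only [e]
    rw [← intervalIntegral.integral_of_le zero_le_one, fc,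
      L.intervalIntegral_comp_comm (by apply Continuous.intervalIntegrable; fun_prop)]
  rw [h4] at hd0
  rw [← Complex.ofReal_neg, clm_ofReal_mul]
  linarith

lemma integral_dd (h : ArcLengthParam γ) (hinj : PerInjective γ) (hT : IsTangent (deriv γ) m)
    (hα : α ∈ Ioo (2:ℝ) 3) (hfin : oharaE α γ < ⊤) (hstat : IsCriticalCurve α lam γ)
    {k : ℤ} (hk : k ≠ 0) (j : Fin n) :
    Integrable (dd α (deriv γ) j (ee (-k))) muP ∧
      ∫ x, dd α (deriv γ) j (ee (-k)) x ∂muP = -lam * fc (cp (deriv γ) j) k := by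
  obtain ⟨h1, h2⟩ := h.integral_clm_dd hinj hT hα hfin hstat Complex.reCLM hk j
  obtain ⟨h3, h4⟩ := h.integral_clm_dd hinj hT hα hfin hstat Complex.imCLM hk j
  have hi : Integrable (dd α (deriv γ) j (ee (-k))) muP :=
    Integrable.re_im_iff.mp ⟨h1, h3⟩
  rw [Complex.reCLM.integral_comp_comm hi] at h2
  rw [Complex.imCLM.integral_comp_comm hi] at h4
  exact ⟨hi, Complex.ext h2 h4⟩

end ArcLengthParam

lemma lintegral_le_of_coercive {μ : Measure ℝ} {M : ℝ → ℂ} {s N : ℝ → ℝ} {c : ℂ} {α lam : ℝ}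
    (hM : Integrable M μ) (hMi : ∫ w, M w ∂μ = -lam * c) (hs0 : ∀ w, 0 ≤ s w) (hs : Measurable s)
    (hα : 0 < α) (hlam : 0 ≤ lam) (h : ∀ᵐ w ∂μ, ‖M w - α * c * s w‖ ≤ N w) :
    ENNReal.ofReal (α * ‖c‖) * ∫⁻ w, ENNReal.ofReal (s w) ∂μ ≤ ∫⁻ w, ENNReal.ofReal (N w) ∂μ := by
  by_cases htop : ∫⁻ w, ENNReal.ofReal (N w) ∂μ = ⊤
  · rw [htop]; exact le_top
  rcases eq_or_ne c 0 with rfl | hc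
  · simp
  have hsm : AEStronglyMeasurable (fun w => (α * c * s w : ℂ)) μ :=
    (by fun_prop : Measurable fun w => (α * c * s w : ℂ)).aestronglyMeasurable
  have hle : ∫⁻ w, ‖M w - α * c * s w‖ₑ ∂μ ≤ ∫⁻ w, ENNReal.ofReal (N w) ∂μ := by
    refine lintegral_mono_ae (h.mono fun w hw => ?_)
    rw [← ofReal_norm]
    exact ENNReal.ofReal_le_ofReal hw
  have hN : Integrable (fun w => M w - α * c * s w) μ :=
    ⟨hM.1.sub hsm, hle.trans_lt (lt_top_iff_ne_top.mpr htop)⟩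
  have hαc : (α * c : ℂ) ≠ 0 := by simp [hα.ne', hc]
  have hS : Integrable (fun w => (α * c * s w : ℂ)) μ :=
    (hM.sub hN).congr (Eventually.of_forall fun w => by simp)
  have hsi : Integrable s μ := by
    have h1 := (hS.const_mul (α * c : ℂ)⁻¹).re
    refine h1.congr (Eventually.of_forall fun w => ?_)
    simp only [← mul_assoc, inv_mul_cancel₀ hαc, one_mul]
    simp
  have e1 : (∫ w, (α * c * s w : ℂ) ∂μ) = α * c * ((∫ w, s w ∂μ : ℝ) : ℂ) := by
    rw [integral_const_mul, integral_complex_ofReal]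
  have e2 : ((α * (∫ w, s w ∂μ) + lam : ℝ) : ℂ) * c = -∫ w, (M w - α * c * s w) ∂μ := by
    rw [integral_sub hM hS, e1, hMi]
    push_cast
    ring
  have hS0 : 0 ≤ ∫ w, s w ∂μ := integral_nonneg hs0
  have e3 := congrArg norm e2
  rw [norm_mul, norm_neg, Complex.norm_real, Real.norm_of_nonneg (by positivity)] at e3
  rw [← ofReal_integral_eq_lintegral_ofReal hsi (Eventually.of_forall hs0),
    ← ENNReal.ofReal_mul (by positivity)]
  calc ENNReal.ofReal (α * ‖c‖ * ∫ w, s w ∂μ)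
      ≤ ENNReal.ofReal ‖∫ w, (M w - α * c * s w) ∂μ‖ := by
        refine ENNReal.ofReal_le_ofReal ?_
        rw [← e3]
        linarith [mul_nonneg hlam (norm_nonneg c)]
    _ = ‖∫ w, (M w - α * c * s w) ∂μ‖ₑ := ofReal_norm _
    _ ≤ _ := (enorm_integral_le_lintegral_enorm _).trans hle

lemma continuous_cp {g : ℝ → Rn n} (hg : Continuous g) (j : Fin n) : Continuous (cp g j) := by
  unfold cp; fun_prop

lemma IsTangent.continuous_yy {g : ℝ → Rn n} {m : ℝ} (hT : IsTangent g m) (q : ℝ) {w : ℝ}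
    (hw : |w| ≤ 1 / 2) : Continuous (yy g q w) := by
  have hg := hT.cont
  unfold yy
  refine Continuous.sub (Continuous.rpow_const (by fun_prop) fun u => Or.inl ?_) continuous_const
  have := hT.le u w hw
  have := hT.pos
  rw [sub_sub_cancel]
  linarith

/-- The Fourier coefficients of the nonlinear terms in the Euler–Lagrange equation. -/
def NN (α : ℝ) (g : ℝ → Rn n) (j : Fin n) (k : ℤ) (w : ℝ) : ℝ :=
  ‖fc (fun u => (yy g (α / 2) w u : ℂ) * cp g j u) k‖ +
    ‖fc (fun u => (yy g (α / 2) w u : ℂ) * cp g j (u + w)) k‖ +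
      α * ‖fc (fun u => (yy g (α / 2 + 1) w u : ℂ) * av (cp g j) u w) k‖

lemma IsTangent.norm_integral_dd_sub_le {g : ℝ → Rn n} {m : ℝ} (hT : IsTangent g m) {α : ℝ}
    (hα : 0 ≤ α) (j : Fin n) (k : ℤ) {w : ℝ} (hw : |w| ≤ 1 / 2) :
    ‖(∫ u in (0:ℝ)..1, dd α g j (ee (-k)) (u, w)) -
        α * fc (cp g j) k * ((|w| ^ (-α) * (1 - ‖phi k w‖ ^ 2) : ℝ) : ℂ)‖ ≤
      |w| ^ (-α) * NN α g j k w := by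
  have hg := hT.cont
  have hc := continuous_cp hg j
  have hcper : Function.Periodic (cp g j) 1 := fun u => by simp only [cp, hT.per u]
  have hY : ∀ q, Continuous fun u => (yy g q w u : ℂ) := fun q =>
    Complex.continuous_ofReal.comp (hT.continuous_yy q hw)
  have hY1 := hY (α / 2)
  have hY2 := hY (α / 2 + 1)
  set F₁ : ℝ → ℂ := fun u => (yy g (α / 2) w u : ℂ) * cp g j u with hF₁
  set F₂ : ℝ → ℂ := fun u => (yy g (α / 2) w u : ℂ) * cp g j (u + w) with hF₂
  set F₃ : ℝ → ℂ := fun u => (yy g (α / 2 + 1) w u : ℂ) * av (cp g j) u w with hF₃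
  have c1 : Continuous F₁ := by fun_prop
  have c2 : Continuous F₂ := by fun_prop
  have c3 : Continuous F₃ := by fun_prop
  have c4 : Continuous fun u => av (cp g j) u w := by fun_prop
  set Φ : ℝ → ℂ := fun u => F₁ u + ee (-k) w * F₂ u - α * phi (-k) w * F₃ u -
    α * phi (-k) w * av (cp g j) u w with hΦ
  have e1 : ∀ u, dd α g j (ee (-k)) (u, w) = ((|w| ^ (-α) : ℝ) : ℂ) * (Φ u * ee (-k) u +
      α * (av (fun y => cp g j y * ee (-k) y) u w * ee (-0) u)) := fun u => by
    simp only [dd, hΦ, hF₁, hF₂, hF₃, av_ee, ee_add_right, neg_zero, ee_zero]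
    ring
  have e2 : ∫ u in (0:ℝ)..1, (Φ u * ee (-k) u +
      α * (av (fun y => cp g j y * ee (-k) y) u w * ee (-0) u)) =
      fc Φ k + α * fc (fun u => av (fun y => cp g j y * ee (-k) y) u w) 0 := by
    rw [intervalIntegral.integral_add, intervalIntegral.integral_const_mul]
    · rfl
    · apply Continuous.intervalIntegrable; fun_prop
    · apply Continuous.intervalIntegrable; fun_prop
  have e3 : fc Φ k = fc F₁ k + ee (-k) w * fc F₂ k - α * phi (-k) w * fc F₃ k -
      α * phi (-k) w * (phi k w * fc (cp g j) k) := by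
    rw [hΦ, fc_sub (by fun_prop) (by fun_prop), fc_sub (by fun_prop) (by fun_prop),
      fc_add (by fun_prop) (by fun_prop), fc_const_mul, fc_const_mul, fc_const_mul,
      fc_av hc hcper]
  have e4 : fc (fun u => av (fun y => cp g j y * ee (-k) y) u w) 0 = fc (cp g j) k := by
    rw [fc_av (by fun_prop) (fun u => by rw [hcper u, ee_periodic (-k) u]), phi_zero_left, one_mul]
    simp [fc]
  have e5 : (∫ u in (0:ℝ)..1, dd α g j (ee (-k)) (u, w)) -
      α * fc (cp g j) k * ((|w| ^ (-α) * (1 - ‖phi k w‖ ^ 2) : ℝ) : ℂ) =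
      ((|w| ^ (-α) : ℝ) : ℂ) * (fc F₁ k + ee (-k) w * fc F₂ k - α * phi (-k) w * fc F₃ k) := by
    simp only [e1]
    rw [intervalIntegral.integral_const_mul, e2, e3, e4, Complex.ofReal_mul, Complex.ofReal_sub,
      ← phi_neg_mul_phi]
    push_cast
    ring
  rw [e5, norm_mul, Complex.norm_real, Real.norm_of_nonneg (by positivity)]
  refine mul_le_mul_of_nonneg_left ((norm_sub_le _ _).trans ?_) (by positivity)
  rw [NN]
  refine add_le_add ((norm_add_le _ _).trans ?_) ?_
  · rw [norm_mul, norm_ee, one_mul]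
  · rw [norm_mul, norm_mul, Complex.norm_real, Real.norm_of_nonneg hα]
    refine mul_le_mul_of_nonneg_right ?_ (norm_nonneg _)
    exact mul_le_of_le_one_right hα (norm_phi_le_one _ _)

lemma ArcLengthParam.coercive {γ : ℝ → Rn n} {m α lam : ℝ} (h : ArcLengthParam γ)
    (hinj : PerInjective γ) (hT : IsTangent (deriv γ) m) (hα : α ∈ Ioo (2:ℝ) 3)
    (hfin : oharaE α γ < ⊤) (hlam : 0 ≤ lam) (hstat : IsCriticalCurve α lam γ)
    {k : ℤ} (hk : k ≠ 0) (j : Fin n) :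
    ENNReal.ofReal (α * ‖fc (cp (deriv γ) j) k‖ * (9 / 250 * |(k:ℝ)| ^ (α - 1))) ≤
      ∫⁻ w in Ioo (-(1:ℝ)/2) (1/2), ENNReal.ofReal (|w| ^ (-α) * NN α (deriv γ) j k w) := by
  obtain ⟨hi, he⟩ := h.integral_dd hinj hT hα hfin hstat hk j
  have hα0 : 0 < α := by linarith [hα.1]
  have h1 := hi.integral_prod_right
  rw [muP, integral_prod_symm _ hi] at he
  have h2 : ∀ w, 0 ≤ |w| ^ (-α) * (1 - ‖phi k w‖ ^ 2) := fun w =>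
    mul_nonneg (by positivity) (sub_nonneg.mpr (pow_le_one₀ (norm_nonneg _) (norm_phi_le_one k w)))
  have h3 : Measurable fun w : ℝ => |w| ^ (-α) * (1 - ‖phi k w‖ ^ 2) := by
    have : Measurable fun w : ℝ => 1 - ‖phi k w‖ ^ 2 :=
      (by fun_prop : Continuous fun w : ℝ => 1 - ‖phi k w‖ ^ 2).measurable
    fun_prop
  have h4 := lintegral_le_of_coercive (N := fun w => |w| ^ (-α) * NN α (deriv γ) j k w) h1 he h2 h3
    hα0 hlam ?_
  · refine le_trans ?_ h4
    rw [ENNReal.ofReal_mul (by positivity)]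
    gcongr
    exact le_lintegral_symbol hα0.le hk
  · refine (ae_restrict_mem measurableSet_Ioo).mono fun w hw => ?_
    have hw' : |w| ≤ 1 / 2 := abs_le.mpr ⟨by linarith [hw.1], hw.2.le⟩
    have := hT.norm_integral_dd_sub_le hα0.le j k hw'
    rwa [intervalIntegral.integral_of_le zero_le_one] at this

/-! ### Decay of the Fourier coefficients -/

/-- The Fourier coefficients of all coordinates of `g` decay like `|k|^(-β)`. -/
def HasFourierDecay (β : ℝ) (g : ℝ → Rn n) : Prop :=
  ∃ C, 0 ≤ C ∧ ∀ (j : Fin n) (k : ℤ), ‖fc (cp g j) k‖ ≤ C * W β k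

lemma hasFourierDecay_of_le {g : ℝ → Rn n} (hg : ∀ u, ‖g u‖ = 1) {α r K : ℝ} (hα : 1 < α)
    (hK : 0 ≤ K)
    (h : ∀ (j : Fin n) (k : ℤ), k ≠ 0 →
      α * ‖fc (cp g j) k‖ * (9 / 250 * |(k : ℝ)| ^ (α - 1)) ≤ K * W r k) :
    HasFourierDecay (r + (α - 1)) g := by
  have hα0 : 0 < α := by linarith
  set M : ℝ := 2 ^ (α - 1) * K / (α * (9 / 250)) with hM
  have hM0 : 0 ≤ M := by positivity
  refine ⟨1 + M, by linarith, fun j k => ?_⟩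
  rcases eq_or_ne k 0 with rfl | hk
  · have := norm_fc_le (F := cp g j) (C := 1) (fun u => (norm_cp_le g j u).trans (hg u).le) 0
    rw [W_zero_right]
    linarith
  have h1 : (1 : ℝ) ≤ |(k : ℝ)| := by exact_mod_cast Int.one_le_abs hk
  have h2 : (1 + |(k : ℝ)|) ^ (α - 1) ≤ 2 ^ (α - 1) * |(k : ℝ)| ^ (α - 1) := by
    rw [← Real.mul_rpow (by norm_num) (abs_nonneg _)]
    exact Real.rpow_le_rpow (by positivity) (by linarith) (by linarith)
  have h3 : W (-(α - 1)) k = (1 + |(k : ℝ)|) ^ (α - 1) := by rw [W, neg_neg]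
  have h4 : W (-(α - 1)) k * W (r + (α - 1)) k = W r k := by
    rw [W_mul]; congr 1; ring
  have hp := W_pos (-(α - 1)) k
  have hx := norm_nonneg (fc (cp g j) k)
  have h5 : α * (9 / 250) * ‖fc (cp g j) k‖ * W (-(α - 1)) k
      ≤ 2 ^ (α - 1) * K * W r k := by
    calc _ ≤ α * (9 / 250) * ‖fc (cp g j) k‖ * (2 ^ (α - 1) * |(k : ℝ)| ^ (α - 1)) := by
          rw [h3]; gcongr
      _ = 2 ^ (α - 1) * (α * ‖fc (cp g j) k‖ * (9 / 250 * |(k : ℝ)| ^ (α - 1))) := by ring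
      _ ≤ 2 ^ (α - 1) * (K * W r k) :=
          mul_le_mul_of_nonneg_left (h j k hk) (by positivity)
      _ = _ := by ring
  rw [← h4] at h5
  have h6 : α * (9 / 250) * ‖fc (cp g j) k‖ ≤ 2 ^ (α - 1) * K * W (r + (α - 1)) k := by
    refine le_of_mul_le_mul_right ?_ hp
    linarith
  have h7 : ‖fc (cp g j) k‖ ≤ M * W (r + (α - 1)) k := by
    rw [hM, div_mul_eq_mul_div, le_div_iff₀ (by positivity)]
    linarith
  have := W_nonneg (r + (α - 1)) k
  linarith

lemma IsTangent.abs_yy_le {g : ℝ → Rn n} {m : ℝ} (hT : IsTangent g m) {q : ℝ} (hq : 0 ≤ q) {w : ℝ}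
    (hw : |w| ≤ 1 / 2) (u : ℝ) :
    |yy g q w u| ≤ q * m ^ (-q - 1) * (1 - ‖av g u w‖ ^ 2) := by
  have h1 := hT.norm_av_sq_le_one u w
  have h := abs_rpow_neg_sub_le hq hT.pos (hT.le u w hw) hT.le_one
  rw [Real.one_rpow, abs_sub_comm (‖av g u w‖ ^ 2) 1,
    abs_of_nonneg (a := 1 - ‖av g u w‖ ^ 2) (by linarith)] at h
  rw [yy, sub_sub_cancel]
  exact h

lemma IsTangent.norm_fc_yy_mul_le {g : ℝ → Rn n} {m : ℝ} (hT : IsTangent g m) {q : ℝ} (hq : 0 ≤ q)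
    {w : ℝ} (hw : |w| ≤ 1 / 2) {G : ℝ → ℂ} (hGc : Continuous G) (hG : ∀ u, ‖G u‖ ≤ 1) (k : ℤ) :
    ‖fc (fun u => (yy g q w u : ℂ) * G u) k‖
      ≤ q * m ^ (-q - 1) * ∫ u in (0:ℝ)..1, (1 - ‖av g u w‖ ^ 2) := by
  have hc : Continuous fun u => av g u w := hT.cont.av continuous_id continuous_const
  have hy := hT.continuous_yy q hw
  rw [← intervalIntegral.integral_const_mul]
  refine (norm_fc_le_integral _ k).trans (intervalIntegral.integral_mono_on zero_le_one
    (Continuous.intervalIntegrable (by fun_prop) _ _)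
    (Continuous.intervalIntegrable (by fun_prop) _ _) fun u _ => ?_)
  rw [norm_mul, Complex.norm_real, Real.norm_eq_abs]
  have := hT.abs_yy_le hq hw u
  calc _ ≤ |yy g q w u| * 1 := by gcongr; exact hG u
    _ ≤ _ := by rwa [mul_one]

lemma IsTangent.exists_NN_le {g : ℝ → Rn n} {m : ℝ} (hT : IsTangent g m) {α : ℝ} (hα : 0 ≤ α) :
    ∃ C, 0 ≤ C ∧ ∀ (j : Fin n) (k : ℤ) (w : ℝ), |w| ≤ 1 / 2 →
      NN α g j k w ≤ C * ∫ u in (0:ℝ)..1, (1 - ‖av g u w‖ ^ 2) := by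
  have hm := hT.pos
  refine ⟨2 * (α / 2 * m ^ (-(α / 2) - 1)) + α * ((α / 2 + 1) * m ^ (-(α / 2 + 1) - 1)),
    by positivity, fun j k w hw => ?_⟩
  have hc := continuous_cp hT.cont j
  have h0 : ∀ u, ‖cp g j u‖ ≤ 1 := fun u => (norm_cp_le g j u).trans (hT.norm_eq u).le
  have h1 := hT.norm_fc_yy_mul_le (q := α / 2) (by positivity) hw hc h0 k
  have h2 := hT.norm_fc_yy_mul_le (q := α / 2) (by positivity) hw
    (G := fun u => cp g j (u + w)) (by fun_prop) (fun u => h0 _) k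
  have h3 := hT.norm_fc_yy_mul_le (q := α / 2 + 1) (by positivity) hw
    (G := fun u => av (cp g j) u w) (hc.av continuous_id continuous_const)
    (fun u => norm_av_le h0 u w) k
  have h4 := mul_le_mul_of_nonneg_left h3 hα
  rw [NN]
  linarith

lemma ArcLengthParam.hasFourierDecay {γ : ℝ → Rn n} {m α lam : ℝ} (h : ArcLengthParam γ)
    (hinj : PerInjective γ) (hT : IsTangent (deriv γ) m) (hα : α ∈ Ioo (2 : ℝ) 3)
    (hfin : oharaE α γ < ⊤) (hlam : 0 ≤ lam) (hstat : IsCriticalCurve α lam γ) :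
    HasFourierDecay (α - 1) (deriv γ) := by
  have hα2 := hα.1
  obtain ⟨C, hC, hN⟩ := hT.exists_NN_le (α := α) (by linarith)
  have hI := (h.integrable_excess hinj hT hα.1.le hfin).integral_prod_right
  have he : ∀ w : ℝ, (∫ u in Ioc (0:ℝ) 1, |w| ^ (-α) * (1 - ‖av (deriv γ) u w‖ ^ 2))
      = |w| ^ (-α) * ∫ u in (0:ℝ)..1, (1 - ‖av (deriv γ) u w‖ ^ 2) := fun w => by
    rw [integral_const_mul, intervalIntegral.integral_of_le zero_le_one]
  simp only [he] at hI
  have hJ : ∀ w : ℝ, 0 ≤ |w| ^ (-α) * ∫ u in (0:ℝ)..1, (1 - ‖av (deriv γ) u w‖ ^ 2) := fun w =>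
    mul_nonneg (by positivity) (intervalIntegral.integral_nonneg zero_le_one fun u _ => by
      have := hT.norm_av_sq_le_one u w
      linarith)
  set K := ∫ w in Ioo (-(1:ℝ)/2) (1/2),
    C * (|w| ^ (-α) * ∫ u in (0:ℝ)..1, (1 - ‖av (deriv γ) u w‖ ^ 2)) with hK
  have hK0 : 0 ≤ K := integral_nonneg fun w => mul_nonneg hC (hJ w)
  have := hasFourierDecay_of_le (g := deriv γ) h (α := α) (r := 0) (K := K) (by linarith) hK0 ?_
  · simpa using this
  intro j k hk
  have h1 : W 0 k = 1 := by simp [W]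
  rw [h1, mul_one]
  refine (ENNReal.ofReal_le_ofReal_iff hK0).1 ?_
  refine (h.coercive hinj hT hα hfin hlam hstat hk j).trans ?_
  rw [hK, ofReal_integral_eq_lintegral_ofReal (hI.const_mul C)
    (ae_of_all _ fun w => mul_nonneg hC (hJ w))]
  refine setLIntegral_mono_ae' measurableSet_Ioo (ae_of_all _ fun w hw => ?_)
  refine ENNReal.ofReal_le_ofReal ?_
  have hw' : |w| ≤ 1 / 2 := abs_le.2 ⟨by linarith [hw.1], by linarith [hw.2]⟩
  calc _ ≤ |w| ^ (-α) * (C * ∫ u in (0:ℝ)..1, (1 - ‖av (deriv γ) u w‖ ^ 2)) := by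
        gcongr; exact hN j k w hw'
    _ = _ := by ring

/-- The deviation of the `j`-th coordinate of `g (u + s w)` from its mean over `s ∈ [0, 1]`. -/
def dev (g : ℝ → Rn n) (j : Fin n) (w s u : ℝ) : ℂ := cp g j (u + s * w) - av (cp g j) u w

lemma continuous_dev {g : ℝ → Rn n} (hg : Continuous g) (j : Fin n) (w : ℝ) :
    Continuous (Function.uncurry fun s u => dev g j w s u) := by
  have hc := continuous_cp hg j
  unfold dev
  exact (hc.comp (by fun_prop)).sub (hc.av continuous_snd continuous_const)

lemma dev_periodic {g : ℝ → Rn n} (hg : Function.Periodic g 1) (j : Fin n) (w s : ℝ) :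
    Function.Periodic (dev g j w s) 1 := fun u => by
  have hc : Function.Periodic (cp g j) 1 := fun x => by simp only [cp, hg x]
  have h1 := av_periodic hc w u
  simp only at h1
  rw [dev, dev, h1, add_right_comm, hc]

lemma one_sub_norm_av_sq_eq {g : ℝ → Rn n} (hg : Continuous g) (h1 : ∀ u, ‖g u‖ = 1) (u w : ℝ) :
    ((1 - ‖av g u w‖ ^ 2 : ℝ) : ℂ) = ∫ s in (0:ℝ)..1, ∑ j, dev g j w s u * dev g j w s u := by
  have h := av_norm_sub_sq hg (av g u w) u w
  rw [av_norm_sq_eq_one h1, real_inner_self_eq_norm_sq] at h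
  have h2 : 1 - ‖av g u w‖ ^ 2 = av (fun x => ‖g x - av g u w‖ ^ 2) u w := by rw [h]; ring
  rw [h2, av, ← intervalIntegral.integral_ofReal]
  refine intervalIntegral.integral_congr fun s _ => ?_
  simp only [dev, EuclideanSpace.real_norm_sq_eq, av_cp hg, cp]
  push_cast
  refine Finset.sum_congr rfl fun j _ => ?_
  simp only [PiLp.sub_apply, Complex.ofReal_sub]
  ring

lemma norm_fc_intervalIntegral_le {G : ℝ → ℝ → ℂ} (hG : Continuous (Function.uncurry G)) {B : ℝ}
    (k : ℤ) (hB : ∀ s ∈ Icc (0:ℝ) 1, ‖fc (G s) k‖ ≤ B) :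
    ‖fc (fun u => ∫ s in (0:ℝ)..1, G s u) k‖ ≤ B := by
  have h : fc (fun u => ∫ s in (0:ℝ)..1, G s u) k = ∫ s in (0:ℝ)..1, fc (G s) k := by
    unfold fc
    simp only [← intervalIntegral.integral_mul_const]
    have hG' : Continuous fun p : ℝ × ℝ => G p.2 p.1 := hG.comp continuous_swap
    exact integral_integral_swap_of_continuous (G := fun u s => G s u * ee (-k) u)
      (hG'.mul (by fun_prop))
  rw [h]
  have := intervalIntegral.norm_integral_le_of_norm_le_const (a := (0:ℝ)) (b := 1)
    (f := fun s => fc (G s) k) (C := B) (fun s hs => by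
      rw [uIoc_of_le zero_le_one] at hs
      exact hB s ⟨hs.1.le, hs.2⟩)
  simpa using this

lemma norm_fc_excess_le {g : ℝ → Rn n} (hg : Continuous g) (h1 : ∀ u, ‖g u‖ = 1) (w : ℝ) {B : ℝ}
    (k : ℤ)
    (hB : ∀ (j : Fin n), ∀ s ∈ Icc (0:ℝ) 1, ‖fc (fun u => dev g j w s u * dev g j w s u) k‖ ≤ B) :
    ‖fc (fun u => ((1 - ‖av g u w‖ ^ 2 : ℝ) : ℂ)) k‖ ≤ n * B := by
  rw [fc_congr (fun u => one_sub_norm_av_sq_eq hg h1 u w)]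
  have hc : ∀ j, Continuous (Function.uncurry fun s u => dev g j w s u * dev g j w s u) :=
    fun j => (continuous_dev hg j w).mul (continuous_dev hg j w)
  refine norm_fc_intervalIntegral_le (G := fun s u => ∑ j, dev g j w s u * dev g j w s u)
    ?_ k fun s hs => ?_
  · exact continuous_finsetSum _ fun j _ => hc j
  · have := fc_sum Finset.univ (fun j u => dev g j w s u * dev g j w s u)
      (fun j _ => (hc j).comp (Continuous.prodMk_right s)) k
    rw [this]
    refine (norm_sum_le_of_le _ fun j _ => hB j s hs).trans ?_
    simp

lemma norm_ee_sub_phi_le (l : ℤ) {w s θ : ℝ} (hs : s ∈ Icc (0:ℝ) 1) (hθ : 0 ≤ θ) (hθ1 : θ ≤ 1) :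
    ‖ee l (s * w) - phi l w‖ ≤ 2 * Real.pi * |w| ^ θ * W (-θ) l := by
  have hπ := Real.pi_gt_three
  have hl := abs_nonneg (l : ℝ)
  have hd : ee l (s * w) - phi l w = ∫ t in (0:ℝ)..1, (ee l (s * w) - ee l (t * w)) := by
    rw [intervalIntegral.integral_sub (by simp)
      (Continuous.intervalIntegrable (by fun_prop) _ _)]
    simp [phi]
  have hA : ‖ee l (s * w) - phi l w‖ ≤ 2 * Real.pi * (|(l : ℝ)| * |w|) := by
    rw [hd]
    have := intervalIntegral.norm_integral_le_of_norm_le_const (a := (0:ℝ)) (b := 1)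
      (f := fun t => ee l (s * w) - ee l (t * w)) (C := 2 * Real.pi * (|(l : ℝ)| * |w|))
      (fun t ht => by
        rw [uIoc_of_le zero_le_one] at ht
        refine (norm_ee_sub_le l _ _).trans ?_
        have h1 : |s * w - t * w| ≤ 1 * |w| := by
          rw [← sub_mul, abs_mul]
          gcongr
          exact abs_le.2 ⟨by linarith [hs.1, ht.2], by linarith [hs.2, ht.1]⟩
        have h2 : ‖(2 * Real.pi * Complex.I * l : ℂ)‖ = 2 * Real.pi * |(l : ℝ)| := by
          simp [abs_of_pos Real.pi_pos]
        rw [h2]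
        calc _ ≤ 2 * Real.pi * |(l : ℝ)| * (1 * |w|) := by gcongr
          _ = _ := by ring)
    simpa using this
  have hB : ‖ee l (s * w) - phi l w‖ ≤ 2 := by
    refine (norm_sub_le _ _).trans ?_
    rw [norm_ee]
    linarith [norm_phi_le_one l w]
  have hx : 0 ≤ |(l : ℝ)| * |w| := by positivity
  have hC : ‖ee l (s * w) - phi l w‖ ≤ 2 * Real.pi * (|(l : ℝ)| * |w|) ^ θ := by
    rcases le_total (|(l : ℝ)| * |w|) 1 with h | h
    · refine hA.trans ?_
      gcongr
      rcases hx.eq_or_lt with h0 | h0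
      · rw [← h0]; positivity
      · calc _ = (|(l : ℝ)| * |w|) ^ (1 : ℝ) := (Real.rpow_one _).symm
          _ ≤ _ := Real.rpow_le_rpow_of_exponent_ge h0 h hθ1
    · have := Real.one_le_rpow h hθ
      refine hB.trans ?_
      calc (2 : ℝ) ≤ 2 * Real.pi * 1 := by linarith
        _ ≤ _ := by gcongr
  refine hC.trans ?_
  rw [Real.mul_rpow hl (abs_nonneg _), W, neg_neg, mul_comm (|(l : ℝ)| ^ θ), ← mul_assoc]
  gcongr
  linarith

lemma fc_dev {g : ℝ → Rn n} (hg : Continuous g) (hp : Function.Periodic g 1) (j : Fin n)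
    (w s : ℝ) (k : ℤ) : fc (dev g j w s) k = (ee k (s * w) - phi k w) * fc (cp g j) k := by
  have hc := continuous_cp hg j
  have hpc : Function.Periodic (cp g j) 1 := fun x => by simp only [cp, hp x]
  have := fc_sub (F := fun u => cp g j (u + s * w)) (G := fun u => av (cp g j) u w)
    (by fun_prop) (hc.av continuous_id continuous_const) k
  rw [fc_shift hpc, fc_av hc hpc, ← sub_mul] at this
  exact this

lemma norm_fc_dev_le {g : ℝ → Rn n} (hg : Continuous g) (hp : Function.Periodic g 1) {β C : ℝ}
    (hC : ∀ (j : Fin n) (k : ℤ), ‖fc (cp g j) k‖ ≤ C * W β k) (j : Fin n)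
    {w s θ : ℝ} (hs : s ∈ Icc (0:ℝ) 1) (hθ : 0 ≤ θ) (hθ1 : θ ≤ 1) (k : ℤ) :
    ‖fc (dev g j w s) k‖ ≤ 2 * Real.pi * C * |w| ^ θ * W (β - θ) k := by
  have hπ := Real.pi_pos
  rw [fc_dev hg hp, norm_mul]
  have h1 := norm_ee_sub_phi_le k (w := w) hs hθ hθ1
  have h2 := W_nonneg (-θ) k
  calc _ ≤ (2 * Real.pi * |w| ^ θ * W (-θ) k) * (C * W β k) :=
        mul_le_mul h1 (hC j k) (norm_nonneg _) (by positivity)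
    _ = 2 * Real.pi * C * |w| ^ θ * (W (-θ) k * W β k) := by ring
    _ = _ := by rw [W_mul, neg_add_eq_sub]

/-- The excess has Fourier coefficients of size `|w|^(1+a)`, at the price of regularity. -/
lemma norm_fc_excess_le_rpow {g : ℝ → Rn n} (hg : Continuous g) (hp : Function.Periodic g 1)
    (h1 : ∀ u, ‖g u‖ = 1) {β C a ρ : ℝ} (hC0 : 0 ≤ C)
    (hC : ∀ (j : Fin n) (k : ℤ), ‖fc (cp g j) k‖ ≤ C * W β k) (hβ : 1 < β) (ha : 0 ≤ a)
    (ha1 : a ≤ 1) (hρ : 0 ≤ ρ) (hρ1 : ρ ≤ β - a) (hτ : 1 < 2 * β - 1 - a - ρ) (w : ℝ) (k : ℤ) :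
    ‖fc (fun u => ((1 - ‖av g u w‖ ^ 2 : ℝ) : ℂ)) k‖
      ≤ n * ((2 * Real.pi * C) ^ 2 * 2 ^ ρ * (2 * SW (2 * β - 1 - a - ρ))) *
        |w| ^ (1 + a) * W ρ k := by
  have hπ := Real.pi_pos
  have hw := abs_nonneg w
  have hwa : |w| ^ (1 + a) = |w| ^ (1 : ℝ) * |w| ^ a := Real.rpow_add_of_nonneg hw zero_le_one ha
  have key : ∀ (j : Fin n), ∀ s ∈ Icc (0:ℝ) 1, ‖fc (fun u => dev g j w s u * dev g j w s u) k‖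
      ≤ ((2 * Real.pi * C) ^ 2 * 2 ^ ρ * |w| ^ (1 + a) * W ρ k) *
        (2 * SW (2 * β - 1 - a - ρ)) := by
    intro j s hs
    have hd : Continuous (dev g j w s) :=
      (continuous_dev hg j w).comp (Continuous.prodMk_right s)
    have h0 := fun l => norm_fc_dev_le hg hp hC j (w := w) hs le_rfl zero_le_one l
    simp only [sub_zero] at h0
    refine norm_fc_mul_le hd (dev_periodic hp j w s) (summable_fc_of_le hβ h0) hd hτ k fun l => ?_
    have hA := fun l => norm_fc_dev_le hg hp hC j (w := w) hs zero_le_one le_rfl l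
    have hB := fun l => norm_fc_dev_le hg hp hC j (w := w) hs ha ha1 l
    have aux : ∀ p q : ℤ, p + q = k → |(p : ℝ)| ≤ |(q : ℝ)| →
        ‖fc (dev g j w s) p‖ * ‖fc (dev g j w s) q‖ ≤
          (2 * Real.pi * C) ^ 2 * 2 ^ ρ * |w| ^ (1 + a) * W ρ k * W (2 * β - 1 - a - ρ) p := by
      intro p q hpq hle
      have e1 : W (β - a) q ≤ 2 ^ ρ * W ρ k * W (β - a - ρ) p := by
        have : W (β - a) q = W ρ q * W (β - a - ρ) q := by rw [W_mul]; congr 1; ring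
        rw [this, ← hpq]
        have i1 := W_le_two_rpow_mul hρ hle
        have i2 := W_le_of_abs_le (s := β - a - ρ) (by linarith) hle
        exact mul_le_mul i1 i2 (W_nonneg _ _) ((W_nonneg _ _).trans i1)
      have e2 : W (β - 1) p * W (β - a - ρ) p = W (2 * β - 1 - a - ρ) p := by
        rw [W_mul]; congr 1; ring
      have n1 := W_nonneg (β - 1) p
      calc _ ≤ (2 * Real.pi * C * |w| ^ (1 : ℝ) * W (β - 1) p) *
            (2 * Real.pi * C * |w| ^ a * W (β - a) q) :=
            mul_le_mul (hA p) (hB q) (norm_nonneg _) (by positivity)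
        _ ≤ (2 * Real.pi * C * |w| ^ (1 : ℝ) * W (β - 1) p) *
            (2 * Real.pi * C * |w| ^ a * (2 ^ ρ * W ρ k * W (β - a - ρ) p)) := by gcongr
        _ = (2 * Real.pi * C) ^ 2 * 2 ^ ρ * (|w| ^ (1 : ℝ) * |w| ^ a) * W ρ k *
            (W (β - 1) p * W (β - a - ρ) p) := by ring
        _ = _ := by rw [e2, ← hwa]
    have n2 := W_nonneg ρ k
    have n3 := W_nonneg (2 * β - 1 - a - ρ) l
    have n4 := W_nonneg (2 * β - 1 - a - ρ) (k - l)
    rcases le_total |(l : ℝ)| |((k - l : ℤ) : ℝ)| with h | h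
    · refine (aux l (k - l) (by ring) h).trans ?_
      gcongr
      linarith
    · rw [mul_comm ‖_‖]
      refine (aux (k - l) l (by ring) h).trans ?_
      gcongr
      linarith
  refine (norm_fc_excess_le hg h1 w k key).trans (le_of_eq ?_)
  ring

lemma norm_fc_excess_le_W {g : ℝ → Rn n} (hg : Continuous g) (hp : Function.Periodic g 1)
    (h1 : ∀ u, ‖g u‖ = 1) {β C : ℝ}
    (hC : ∀ (j : Fin n) (k : ℤ), ‖fc (cp g j) k‖ ≤ C * W β k) (hβ : 1 < β) (w : ℝ) (k : ℤ) :
    ‖fc (fun u => ((1 - ‖av g u w‖ ^ 2 : ℝ) : ℂ)) k‖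
      ≤ n * (2 ^ β * (2 * SW β) * (2 * Real.pi * C) * (2 * Real.pi * C)) * W β k := by
  rw [mul_assoc]
  refine norm_fc_excess_le hg h1 w k fun j s hs => ?_
  have hd : Continuous (dev g j w s) :=
    (continuous_dev hg j w).comp (Continuous.prodMk_right s)
  have h0 := fun l => norm_fc_dev_le hg hp hC j (w := w) hs le_rfl zero_le_one l
  simp only [sub_zero, Real.rpow_zero, mul_one] at h0
  exact norm_fc_mul_le_W hd hd (dev_periodic hp j w s) hβ (by linarith) le_rfl h0 h0 k

lemma IsTangent.exists_norm_fc_yy_mul_le {g : ℝ → Rn n} {m : ℝ} (hT : IsTangent g m) (q : ℝ)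
    {β a ρ s C : ℝ} (hC0 : 0 ≤ C) (hC : ∀ (j : Fin n) (k : ℤ), ‖fc (cp g j) k‖ ≤ C * W β k)
    (hs : 1 < s) (hsβ : s < β) (ha : 0 ≤ a) (ha1 : a ≤ 1) (hρ : 0 ≤ ρ) (hρs : ρ ≤ s)
    (hρ1 : ρ ≤ β - a) (hτ : 1 < 2 * β - 1 - a - ρ) :
    ∃ C', 0 ≤ C' ∧ ∀ (w : ℝ) (G : ℝ → ℂ), |w| ≤ 1 / 2 → Continuous G → Function.Periodic G 1 →
      (∀ k, ‖fc G k‖ ≤ C * W β k) → ∀ k,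
        ‖fc (fun u => (yy g q w u : ℂ) * G u) k‖ ≤ C' * |w| ^ (1 + a) * W ρ k := by
  have hπ := Real.pi_pos
  have hβ : 1 < β := hs.trans hsβ
  have hS := SW_nonneg β
  have hS' := SW_nonneg (2 * β - 1 - a - ρ)
  set C₁ := n * (2 ^ β * (2 * SW β) * (2 * Real.pi * C) * (2 * Real.pi * C)) with hC₁
  have hC₁0 : 0 ≤ C₁ := by positivity
  set D := n * ((2 * Real.pi * C) ^ 2 * 2 ^ ρ * (2 * SW (2 * β - 1 - a - ρ))) with hD
  have hD0 : 0 ≤ D := by positivity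
  have hm := hT.pos
  have hm1 := hT.le_one
  obtain ⟨K, hK, H⟩ := exists_norm_fc_comp_mul_le q hs hsβ hρ hρs (ρ := 1 - m) (by linarith)
    (by linarith) (C₀ := C₁ + C) (by linarith)
  refine ⟨K * D, by positivity, fun w G hw hGc hGp hG k => ?_⟩
  have hav : Continuous fun u => av g u w := hT.cont.av continuous_id continuous_const
  have := H (fun u => 1 - ‖av g u w‖ ^ 2) G (D * |w| ^ (1 + a)) (by fun_prop)
    (fun u => by
      have := av_periodic hT.per w u
      simp only at this
      simp only [this])
    hGc hGp
    (fun u => by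
      have h1 := hT.norm_av_sq_le_one u w
      have h2 := hT.le u w hw
      rw [abs_of_nonneg (by linarith)]
      linarith)
    (fun l => by
      have h1 := norm_fc_excess_le_W hT.cont hT.per hT.norm_eq hC hβ w l
      have h2 := W_nonneg β l
      refine h1.trans ?_
      rw [← hC₁]
      gcongr
      linarith)
    (fun l => by
      have h2 := W_nonneg β l
      refine (hG l).trans ?_
      gcongr
      linarith)
    (norm_fc_excess_le_rpow hT.cont hT.per hT.norm_eq hC0 hC hβ ha ha1 hρ hρ1 hτ w) k
  refine this.trans (le_of_eq ?_)
  ring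

lemma IsTangent.exists_NN_le_rpow {g : ℝ → Rn n} {m : ℝ} (hT : IsTangent g m) {α : ℝ}
    (hα : 0 ≤ α) {β a ρ s : ℝ} (hg : HasFourierDecay β g)
    (hs : 1 < s) (hsβ : s < β) (ha : 0 ≤ a) (ha1 : a ≤ 1) (hρ : 0 ≤ ρ) (hρs : ρ ≤ s)
    (hρ1 : ρ ≤ β - a) (hτ : 1 < 2 * β - 1 - a - ρ) :
    ∃ C, 0 ≤ C ∧ ∀ (j : Fin n) (k : ℤ) (w : ℝ), |w| ≤ 1 / 2 →
      NN α g j k w ≤ C * |w| ^ (1 + a) * W ρ k := by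
  obtain ⟨C, hC0, hC⟩ := hg
  obtain ⟨K₁, hK₁, H₁⟩ := hT.exists_norm_fc_yy_mul_le (α / 2) hC0 hC hs hsβ ha ha1 hρ hρs hρ1 hτ
  obtain ⟨K₂, hK₂, H₂⟩ :=
    hT.exists_norm_fc_yy_mul_le (α / 2 + 1) hC0 hC hs hsβ ha ha1 hρ hρs hρ1 hτ
  refine ⟨2 * K₁ + α * K₂, by positivity, fun j k w hw => ?_⟩
  have hc := continuous_cp hT.cont j
  have hp : Function.Periodic (cp g j) 1 := fun x => by simp only [cp, hT.per x]
  have h1 := H₁ w (cp g j) hw hc hp (hC j) k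
  have h2 := H₁ w (fun u => cp g j (u + w)) hw (by fun_prop)
    (fun u => by simp only [add_right_comm u 1 w, hp (u + w)])
    (fun l => by rw [fc_shift hp, norm_mul, norm_ee, one_mul]; exact hC j l) k
  have h3 := H₂ w (fun u => av (cp g j) u w) hw (hc.av continuous_id continuous_const)
    (av_periodic hp w)
    (fun l => by
      rw [fc_av hc hp, norm_mul]
      exact (mul_le_of_le_one_left (norm_nonneg _) (norm_phi_le_one l w)).trans (hC j l)) k
  have h4 := mul_le_mul_of_nonneg_left h3 hα
  rw [NN]
  linarith

/-- One step of the bootstrap. -/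
lemma ArcLengthParam.hasFourierDecay_add {γ : ℝ → Rn n} {m α lam : ℝ} (h : ArcLengthParam γ)
    (hinj : PerInjective γ) (hT : IsTangent (deriv γ) m) (hα : α ∈ Ioo (2 : ℝ) 3)
    (hfin : oharaE α γ < ⊤) (hlam : 0 ≤ lam) (hstat : IsCriticalCurve α lam γ) {β : ℝ}
    (hβ : α - 1 ≤ β) (hd : HasFourierDecay β (deriv γ)) :
    HasFourierDecay (β + (α - 2) * (3 - α) / 4) (deriv γ) := by
  have hα2 := hα.1
  have hα3 := hα.2
  set δ := (α - 2) * (3 - α) / 4 with hδ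
  have hδ0 : 0 < δ := by
    rw [hδ]
    have : 0 < (α - 2) * (3 - α) := mul_pos (by linarith) (by linarith)
    linarith
  have hδ1 : δ ≤ (α - 2) / 4 := by
    have : (α - 2) * (3 - α) ≤ (α - 2) * 1 :=
      mul_le_mul_of_nonneg_left (by linarith) (by linarith)
    linarith
  have hδ2 : δ ≤ 3 - α := by
    have : (α - 2) * (3 - α) ≤ 1 * (3 - α) :=
      mul_le_mul_of_nonneg_right (by linarith) (by linarith)
    linarith
  obtain ⟨C, hC, hN⟩ := hT.exists_NN_le_rpow (α := α) (by linarith) (a := α - 2 + δ)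
    (ρ := β + δ - (α - 1)) (s := β - (α - 2) / 2) hd (by linarith) (by linarith) (by linarith)
    (by linarith) (by linarith) (by linarith) (by linarith) (by linarith)
  have hI := integrableOn_abs_rpow (r := δ - 1) (by linarith)
  set K := ∫ w in Ioo (-(1:ℝ)/2) (1/2), |w| ^ (δ - 1) with hK
  have hK0 : 0 ≤ K := integral_nonneg fun w => by positivity
  have := hasFourierDecay_of_le (g := deriv γ) h (α := α) (r := β + δ - (α - 1)) (K := C * K)
    (by linarith) (by positivity) ?_
  · simpa using this
  intro j k hk
  set r := β + δ - (α - 1) with hr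
  have hW := W_nonneg r k
  refine (ENNReal.ofReal_le_ofReal_iff (by positivity)).1 ?_
  refine (h.coercive hinj hT hα hfin hlam hstat hk j).trans ?_
  have e : C * K * W r k = ∫ w in Ioo (-(1:ℝ)/2) (1/2), C * W r k * |w| ^ (δ - 1) := by
    rw [integral_const_mul]; ring
  rw [e, ofReal_integral_eq_lintegral_ofReal (hI.const_mul (C * W r k))
    (ae_of_all _ fun w => by positivity)]
  refine lintegral_mono_ae ?_
  have h0 : ∀ᵐ w ∂(volume.restrict (Ioo (-(1:ℝ)/2) (1/2))), w ≠ 0 :=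
    ae_restrict_of_ae (by simp [ae_iff, measure_singleton])
  filter_upwards [h0, ae_restrict_mem measurableSet_Ioo] with w hw0 hw
  refine ENNReal.ofReal_le_ofReal ?_
  have hw' : |w| ≤ 1 / 2 := abs_le.2 ⟨by linarith [hw.1], by linarith [hw.2]⟩
  calc _ ≤ |w| ^ (-α) * (C * |w| ^ (1 + (α - 2 + δ)) * W r k) := by
        gcongr; exact hN j k w hw'
    _ = C * W r k * (|w| ^ (-α) * |w| ^ (1 + (α - 2 + δ))) := by ring
    _ = _ := by rw [← Real.rpow_add (abs_pos.2 hw0)]; congr 2; ring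

lemma HasFourierDecay.mono {g : ℝ → Rn n} {β β' : ℝ} (h : HasFourierDecay β g) (hβ : β' ≤ β) :
    HasFourierDecay β' g := by
  obtain ⟨C, hC, H⟩ := h
  exact ⟨C, hC, fun j k => (H j k).trans (mul_le_mul_of_nonneg_left (W_anti hβ k) hC)⟩

lemma ArcLengthParam.hasFourierDecay_all {γ : ℝ → Rn n} {m α lam : ℝ} (h : ArcLengthParam γ)
    (hinj : PerInjective γ) (hT : IsTangent (deriv γ) m) (hα : α ∈ Ioo (2 : ℝ) 3)
    (hfin : oharaE α γ < ⊤) (hlam : 0 ≤ lam) (hstat : IsCriticalCurve α lam γ) (β : ℝ) :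
    HasFourierDecay β (deriv γ) := by
  set δ := (α - 2) * (3 - α) / 4 with hδ
  have hδ0 : 0 < δ := div_pos (mul_pos (by linarith [hα.1]) (by linarith [hα.2])) (by norm_num)
  have key : ∀ N : ℕ, HasFourierDecay (α - 1 + N * δ) (deriv γ) := by
    intro N
    induction N with
    | zero => simpa using h.hasFourierDecay hinj hT hα hfin hlam hstat
    | succ N ih =>
      have := h.hasFourierDecay_add hinj hT hα hfin hlam hstat
        (by have : 0 ≤ N * δ := by positivity
            linarith) ih
      refine this.mono (le_of_eq ?_)
      push_cast
      ring
  obtain ⟨N, hN⟩ := exists_nat_gt ((β - (α - 1)) / δ)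
  rw [div_lt_iff₀ hδ0] at hN
  exact (key N).mono (by linarith)

lemma contDiff_of_hasFourierDecay {g : ℝ → Rn n} (hg : Continuous g) (hp : Function.Periodic g 1)
    (h : ∀ β, HasFourierDecay β g) : ContDiff ℝ (⊤ : ℕ∞) g := by
  refine contDiff_of_cp fun j => contDiff_infty.2 fun N => ?_
  obtain ⟨C, hC, H⟩ := h (N + 2)
  refine contDiff_of_summable_fc (continuous_cp hg j) (fun x => by simp only [cp, hp x]) N ?_
  refine Summable.of_nonneg_of_le (fun k => by positivity) (fun k => ?_)
    ((summable_W (s := 2) (by norm_num)).mul_left C)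
  have hk : (0 : ℝ) < 1 + |(k : ℝ)| := by positivity
  have e : (1 + |(k : ℝ)|) ^ N * W (N + 2) k = W 2 k := by
    rw [W, W, ← Real.rpow_natCast, ← Real.rpow_add hk]
    congr 1
    ring
  calc _ ≤ (1 + |(k : ℝ)|) ^ N * (C * W (N + 2) k) := by gcongr; exact H j k
    _ = C * ((1 + |(k : ℝ)|) ^ N * W (N + 2) k) := by ring
    _ = _ := by rw [e]

/-- For `α ∈ (2,3)` and `λ > 0`, every injective Lipschitz curve parametrized by
arc-length with finite energy `E^α` which is a stationary point of `E^α + λL` is smooth. -/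
theorem statement2 {n : ℕ} (hn : 2 ≤ n) {α lam : ℝ} (hα : α ∈ Ioo (2:ℝ) 3) (hlam : 0 < lam)
    {γ : ℝ → Rn n} (hper : Function.Periodic γ 1) (hlip : ∃ K : NNReal, LipschitzWith K γ)
    (hinj : PerInjective γ) (harc : ArcLengthParam γ) (hfin : oharaE α γ < ⊤)
    (hstat : ∀ h : ℝ → Rn n, MemH1 ((α - 1) / 2) h →
      ∃ d : ℝ, HasDirDeriv (oharaER α) γ h d ∧
        d + lam * ∫ u in Ioc (0:ℝ) 1, ⟪deriv γ u, deriv h u⟫ = 0) :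
    ContDiff ℝ (⊤ : ℕ∞) γ := by
  have h1 := harc.contDiff_one hper hinj hα.1 hfin
  obtain ⟨m, hT⟩ := harc.exists_isTangent hper hinj h1
  have h2 := contDiff_of_hasFourierDecay hT.cont hT.per
    (harc.hasFourierDecay_all hinj hT hα hfin hlam.le hstat)
  exact contDiff_infty_iff_deriv.2 ⟨h1.differentiable one_ne_zero, h2⟩

end
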